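/- Every strongly invertible link L is equivalent, through a smooth family of strongly invertible links, to a strongly invertible link L̃ whose projection D = π ∘ L̃ to the xz-plane (π(x,y,z) = (x,z)) is a transvergent diagram with the following properties: (i) D is an immersion, every point of the plane has at most two D-preimages, and at every double point the two tangent lines are perpendicular (in particular the double point is transverse); (ii) at every point of D lying on the x-axis {z = 0} the tangent line of D is not parallel to the x-axis (D meets the x-axis transversally), and at every such point which is not a double point the tangent line is vertical (the x-component of the tangent vector vanishes); (iii) the set of parameters at which the derivative of the x-coordinate of L̃ vanishes is finite; (iv) the reflection (x,z) ↦ (x,−z) maps the image of D onto itself (D is transvergent). -/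

import Mathlib

open scoped Manifold

noncomputable section

/-- ℝ³ with coordinates (x, y, z). -/
abbrev R3 : Type := ℝ × ℝ × ℝ

/-- 𝕊¹, the unit circle in ℝ². -/
abbrev S1 : Type := Metric.sphere (0 : EuclideanSpace ℝ (Fin 2)) 1

/-- The involution τ(x,y,z) = (x, −y, −z). -/
def tau (p : R3) : R3 := (p.1, -p.2.1, -p.2.2)

/-- The contact form of the standard contact structure: α_p(v) = v_z − p_y · v_x;
its kernel at p is the contact plane ξ_st(p). -/
def alphaForm (p v : R3) : ℝ := v.2.2 - p.2.1 * v.1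

/-- The x-axis {(x,0,0) : x ∈ ℝ} ⊆ ℝ³, the fixed-point set of τ. -/
def xAxisSet : Set R3 := {p | p.2.1 = 0 ∧ p.2.2 = 0}

/-- An n-component link: a smooth injective immersion `Fin n × 𝕊¹ → ℝ³`
(recorded as a family of maps `𝕊¹ → ℝ³`, jointly injective). -/
def IsLink {n : ℕ} (L : Fin n → S1 → R3) : Prop :=
  (∀ i, ContMDiff (𝓡 1) 𝓘(ℝ, R3) (⊤ : ℕ∞) (L i)) ∧
  Function.Injective (fun q : Fin n × S1 => L q.1 q.2) ∧
  ∀ i s, Function.Injective (mfderiv (𝓡 1) 𝓘(ℝ, R3) (L i) s)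

/-- A link is Legendrian if every tangent vector of every component lies in the kernel of
the contact form at the corresponding point. -/
def IsLegendrianLink {n : ℕ} (L : Fin n → S1 → R3) : Prop :=
  IsLink L ∧
    ∀ i s (v : EuclideanSpace ℝ (Fin 1)),
      alphaForm (L i s) (mfderiv (𝓡 1) 𝓘(ℝ, R3) (L i) s v) = 0

/-- A link is strongly invertible if τ maps the image of each component onto itself and
that image meets the x-axis in exactly two points. -/
def IsStronglyInvertibleLink {n : ℕ} (L : Fin n → S1 → R3) : Prop :=
  IsLink L ∧
    ∀ i, tau '' Set.range (L i) = Set.range (L i) ∧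
      (Set.range (L i) ∩ xAxisSet).encard = 2

/-- A strongly invertible Legendrian link. -/
def IsStronglyInvertibleLegendrianLink {n : ℕ} (L : Fin n → S1 → R3) : Prop :=
  IsStronglyInvertibleLink L ∧ IsLegendrianLink L

/-- The projection π : ℝ³ → ℝ² to the xz-plane, π(x,y,z) = (x,z). -/
def piProj (p : R3) : ℝ × ℝ := (p.1, p.2.2)

/-- The reflection (x,z) ↦ (x,−z) of the xz-plane. -/
def reflXZ (q : ℝ × ℝ) : ℝ × ℝ := (q.1, -q.2)


section part1
open scoped Manifold ContDiff Topology
open Set Filter Module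

noncomputable section

theorem exists_equiv_of_isUnit {Y : Type*} [NormedAddCommGroup Y] [NormedSpace ℝ Y]
    {M : Y →L[ℝ] Y} (h : IsUnit M) : ∃ e : Y ≃L[ℝ] Y, (e : Y →L[ℝ] Y) = M := by
  obtain ⟨u, rfl⟩ := h
  exact ⟨ContinuousLinearEquiv.unitsEquiv ℝ Y u, rfl⟩

/-- Parametric transversality for affine families, in terms of Hausdorff dimension. -/
theorem transv {X E Y : Type*} [NormedAddCommGroup X] [NormedSpace ℝ X] [FiniteDimensional ℝ X]
    [NormedAddCommGroup E] [NormedSpace ℝ E] [FiniteDimensional ℝ E]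
    [NormedAddCommGroup Y] [NormedSpace ℝ Y] [FiniteDimensional ℝ Y]
    (hXY : finrank ℝ X + 1 ≤ finrank ℝ Y)
    (U : Set X) (A : X → E →ₗ[ℝ] Y) (b : X → Y)
    (hA : ∀ a, ContDiff ℝ 1 (fun x => A x a)) (hb : ContDiff ℝ 1 b)
    (hsurj : ∀ x ∈ U, Function.Surjective (A x)) :
    dimH {a : E | ∃ x ∈ U, A x a + b x = 0} ≤ (finrank ℝ E - 1 : ℕ) := by
  classical
  -- local version
  have key : ∀ x0 ∈ U, ∃ r > 0, dimH {a : E | ∃ x ∈ Metric.ball x0 r, A x a + b x = 0}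
      ≤ (finrank ℝ E - 1 : ℕ) := by
    intro x0 hx0
    let B : X → E →L[ℝ] Y := fun x => LinearMap.toContinuousLinearMap (A x)
    have hB : ContDiff ℝ 1 B := contDiff_clm_apply_iff.2 (fun a => hA a)
    obtain ⟨R0, hR0⟩ := (A x0).exists_rightInverse_of_surjective
      (LinearMap.range_eq_top.2 (hsurj x0 hx0))
    let R : Y →L[ℝ] E := LinearMap.toContinuousLinearMap R0
    have hBR0 : (B x0).comp R = ContinuousLinearMap.id ℝ Y := by
      ext y
      exact congrArg (fun f : Y →ₗ[ℝ] Y => f y) hR0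
    let M : X → Y →L[ℝ] Y := fun x => (B x).comp R
    have hM : ContDiff ℝ 1 M := hB.clm_comp contDiff_const
    have hMopen : ∀ᶠ x in 𝓝 x0, IsUnit (M x) := by
      have : M x0 = 1 := hBR0
      have h1 : IsUnit (M x0) := by rw [this]; exact isUnit_one
      exact hM.continuous.continuousAt.eventually (Units.isOpen.mem_nhds h1)
    obtain ⟨r, hr, hball⟩ := Metric.eventually_nhds_iff_ball.1 hMopen
    refine ⟨r, hr, ?_⟩
    -- complement of the range of R
    obtain ⟨C, hC⟩ := (LinearMap.range R0).exists_isCompl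
    have hR0inj : Function.Injective R0 := by
      intro y y' h
      have := congrArg (A x0) h
      have e : ∀ y, A x0 (R0 y) = y := fun y => congrArg (fun f : Y →ₗ[ℝ] Y => f y) hR0
      rwa [e, e] at this
    have hdim : finrank ℝ C + finrank ℝ Y = finrank ℝ E := by
      have := Submodule.finrank_add_eq_of_isCompl hC
      rw [LinearMap.finrank_range_of_inj hR0inj] at this
      omega
    let G : X × C → E := fun w =>
      (w.2 : E) - R ((M w.1).inverse (B w.1 (w.2 : E) + b w.1))
    have hG : ContDiffOn ℝ 1 G (Metric.ball x0 r ×ˢ univ) := by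
      have h2 : ContDiff ℝ 1 (fun w : X × C => (w.2 : E)) :=
        (C.subtypeL.contDiff).comp contDiff_snd
      refine h2.contDiffOn.sub (R.contDiff.comp_contDiffOn ?_)
      have h3 : ContDiffOn ℝ 1 (fun w : X × C => (M w.1).inverse)
          (Metric.ball x0 r ×ˢ univ) := by
        intro w hw
        have hu : IsUnit (M w.1) := hball _ hw.1
        obtain ⟨e, he⟩ := exists_equiv_of_isUnit hu
        have h4 : ContDiffAt ℝ 1 (ContinuousLinearMap.inverse : (Y →L[ℝ] Y) → (Y →L[ℝ] Y)) (M w.1) := by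
          rw [← he]; exact contDiffAt_map_inverse e
        exact (h4.comp w (hM.comp contDiff_fst).contDiffAt).contDiffWithinAt
      refine h3.clm_apply ?_
      exact (((hB.comp contDiff_fst).clm_apply h2).add (hb.comp contDiff_fst)).contDiffOn
    have hsub : {a : E | ∃ x ∈ Metric.ball x0 r, A x a + b x = 0} ⊆
        G '' (Metric.ball x0 r ×ˢ univ) := by
      rintro a ⟨x, hx, hxa⟩
      have htop := hC.sup_eq_top
      have ha : a ∈ LinearMap.range R0 ⊔ C := by rw [htop]; trivial
      obtain ⟨_, ⟨y, rfl⟩, c, hc, rfl⟩ := Submodule.mem_sup.1 ha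
      refine ⟨(x, ⟨c, hc⟩), ⟨hx, trivial⟩, ?_⟩
      have hu : IsUnit (M x) := hball _ hx
      obtain ⟨e, he⟩ := exists_equiv_of_isUnit hu
      have h5 : B x c + b x = - M x y := by
        have : A x (R0 y) + A x c + b x = 0 := by rw [← map_add]; exact hxa
        have h6 : M x y = A x (R0 y) := rfl
        have h7 : B x c = A x c := rfl
        rw [h6, h7]
        rw [eq_neg_iff_add_eq_zero, ← this]; abel
      have h8 : (M x).inverse (M x y) = y := by
        rw [← he]; simp
      show c - R ((M x).inverse (B x c + b x)) = R0 y + c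
      rw [h5, map_neg, map_neg, h8]
      show c - - R0 y = _
      abel
    calc dimH {a : E | ∃ x ∈ Metric.ball x0 r, A x a + b x = 0}
        ≤ dimH (G '' (Metric.ball x0 r ×ˢ univ)) := dimH_mono hsub
      _ ≤ dimH (Metric.ball x0 r ×ˢ (univ : Set C)) :=
          hG.dimH_image_le ((convex_ball _ _).prod convex_univ) Subset.rfl
      _ ≤ dimH (univ : Set (X × C)) := dimH_mono (subset_univ _)
      _ = (finrank ℝ (X × C) : ENNReal) := by rw [Real.dimH_univ_eq_finrank]
      _ ≤ (finrank ℝ E - 1 : ℕ) := by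
          rw [Module.finrank_prod]
          norm_cast
          omega
  choose! r hr hdim using key
  obtain ⟨T, hTU, hTc, hTcov⟩ := TopologicalSpace.countable_cover_nhdsWithin
    (s := U) (f := fun x => Metric.ball x (r x))
    (fun x hx => mem_nhdsWithin_of_mem_nhds (Metric.ball_mem_nhds x (hr x hx)))
  have hsub : {a : E | ∃ x ∈ U, A x a + b x = 0} ⊆
      ⋃ x0 ∈ T, {a : E | ∃ x ∈ Metric.ball x0 (r x0), A x a + b x = 0} := by
    rintro a ⟨x, hx, hxa⟩
    obtain ⟨x0, hx0, hxx⟩ := mem_iUnion₂.1 (hTcov hx)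
    exact mem_iUnion₂.2 ⟨x0, hx0, x, hxx, hxa⟩
  refine (dimH_mono hsub).trans ?_
  rw [dimH_bUnion hTc]
  exact iSup₂_le fun x hx => hdim x (hTU hx)
end

end part1

section part2
open scoped Manifold ContDiff Topology
open Set Filter Module

noncomputable section

/-- Invariant functions of low degree. -/
def WW : Submodule ℝ (R3 → ℝ) :=
  Submodule.span ℝ {fun _ => 1, fun P => P.1, fun P => P.2.1 * P.2.1, fun P => P.2.1 * P.2.2,
    fun P => P.2.2 * P.2.2}

/-- The constants. -/
def RX : Submodule ℝ (R3 → ℝ) := Submodule.span ℝ {fun _ => 1}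

/-- The odd linear functions. -/
def RZ : Submodule ℝ (R3 → ℝ) := Submodule.span ℝ {fun P => P.2.1, fun P => P.2.2}

/-- The family of perturbations with multiplier `R`. -/
def EE (R : Submodule ℝ (R3 → ℝ)) : Submodule ℝ (R3 → ℝ) := R * (WW * WW) * WW

/-- Smooth functions with `f ∘ tau = e • f`. -/
def SS (e : ℝ) : Submodule ℝ (R3 → ℝ) where
  carrier := {f | ContDiff ℝ ∞ f ∧ ∀ P, f (tau P) = e * f P}
  add_mem' := by
    rintro f g ⟨hf, hf'⟩ ⟨hg, hg'⟩
    exact ⟨hf.add hg, fun P => by simp [hf', hg', mul_add]⟩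
  zero_mem' := ⟨contDiff_const, fun P => by simp⟩
  smul_mem' := by
    rintro c f ⟨hf, hf'⟩
    exact ⟨contDiff_const.smul hf, fun P => by simp [hf']; ring⟩

theorem SS_mul {e : ℝ} {f g : R3 → ℝ} (hf : f ∈ SS e) (hg : g ∈ SS 1) : f * g ∈ SS e :=
  ⟨hf.1.mul hg.1, fun P => by simp [hf.2, hg.2]; ring⟩

theorem WW_le : WW ≤ SS 1 := by
  refine Submodule.span_le.2 ?_
  rintro f (rfl | rfl | rfl | rfl | rfl) <;>
    exact ⟨by fun_prop, fun P => by simp [tau]⟩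

theorem RX_le : RX ≤ SS 1 := by
  refine Submodule.span_le.2 ?_
  rintro f (rfl)
  exact ⟨by fun_prop, fun P => by simp⟩

theorem RZ_le : RZ ≤ SS (-1) := by
  refine Submodule.span_le.2 ?_
  rintro f (rfl | rfl) <;>
    exact ⟨by fun_prop, fun P => by simp [tau]⟩

theorem EE_le {R : Submodule ℝ (R3 → ℝ)} {e : ℝ} (hR : R ≤ SS e) : EE R ≤ SS e := by
  refine Submodule.mul_le.2 fun f hf g hg => SS_mul ?_ (WW_le hg)
  revert f
  refine fun f hf => (Submodule.mul_le (P := SS e)).2 (fun f hf g hg => SS_mul (hR hf) ?_) hf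
  exact (Submodule.mul_le (P := SS 1)).2 (fun f hf g hg => SS_mul (WW_le hf) (WW_le hg)) hg

theorem EE_fin {R : Submodule ℝ (R3 → ℝ)} (hR : R.FG) : FiniteDimensional ℝ (EE R) := by
  have hW : WW.FG := Submodule.fg_span (by simp)
  exact Module.Finite.iff_fg.2 ((hR.mul (hW.mul hW)).mul hW)

theorem RX_fg : RX.FG := Submodule.fg_span (by simp)
theorem RZ_fg : RZ.FG := Submodule.fg_span (by simp)

theorem WW_const (a : ℝ) : (fun _ => a) ∈ WW := by
  have : (fun _ : R3 => a) = a • (fun _ => (1 : ℝ)) := by ext; simp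
  rw [this]
  exact WW.smul_mem _ (Submodule.subset_span (by simp))

theorem WW_x : (fun P : R3 => P.1) ∈ WW := Submodule.subset_span (by simp)
theorem WW_yy : (fun P : R3 => P.2.1 * P.2.1) ∈ WW := Submodule.subset_span (by simp)
theorem WW_yz : (fun P : R3 => P.2.1 * P.2.2) ∈ WW := Submodule.subset_span (by simp)
theorem WW_zz : (fun P : R3 => P.2.2 * P.2.2) ∈ WW := Submodule.subset_span (by simp)

theorem WW_sub_const {m : R3 → ℝ} (hm : m ∈ WW) (a : ℝ) : (fun P => m P - a) ∈ WW :=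
  WW.sub_mem hm (WW_const a)

theorem WW_sep {P Q : R3} (h1 : Q ≠ P) (h2 : Q ≠ tau P) : ∃ m ∈ WW, m P ≠ m Q := by
  by_contra! h
  have hx := h _ WW_x
  have hyy := h _ WW_yy
  have hyz := h _ WW_yz
  have hzz := h _ WW_zz
  obtain ⟨x, y, z⟩ := P
  obtain ⟨x', y', z'⟩ := Q
  simp only [tau, Prod.mk.injEq, ne_eq, not_and] at *
  subst hx
  rcases mul_self_eq_mul_self_iff.1 hyy with e | e
  · subst e
    have hz := h1 rfl rfl
    rcases mul_self_eq_mul_self_iff.1 hzz with e | e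
    · exact hz e.symm
    · subst e
      have hy : y ≠ 0 := by
        rintro rfl
        exact h2 rfl (by simp) (by simp)
      have : z' = 0 := by
        have h3 : y * (2 * z') = 0 := by linarith
        rcases mul_eq_zero.1 h3 with h | h
        · exact absurd h hy
        · linarith
      subst this
      simp at hz
  · subst e
    have hz := h2 rfl (by simp)
    rcases mul_self_eq_mul_self_iff.1 hzz with e | e
    · subst e
      have hz' : z ≠ 0 := by rintro rfl; simp at hz
      have h3 : z * (2 * y') = 0 := by linarith
      rcases mul_eq_zero.1 h3 with h | h
      · exact hz' h
      · have : y' = 0 := by linarith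
        subst this
        simp at h1
    · exact hz (by rw [e]; simp)

theorem hasDerivAt_fst {c : ℝ → R3} {c' : R3} {s : ℝ} (h : HasDerivAt c c' s) :
    HasDerivAt (fun θ => (c θ).1) c'.1 s :=
  ((ContinuousLinearMap.fst ℝ ℝ (ℝ × ℝ)).hasFDerivAt.comp_hasDerivAt s h)

theorem hasDerivAt_y {c : ℝ → R3} {c' : R3} {s : ℝ} (h : HasDerivAt c c' s) :
    HasDerivAt (fun θ => (c θ).2.1) c'.2.1 s :=
  (((ContinuousLinearMap.fst ℝ ℝ ℝ).comp
    (ContinuousLinearMap.snd ℝ ℝ (ℝ × ℝ))).hasFDerivAt.comp_hasDerivAt s h)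

theorem hasDerivAt_z {c : ℝ → R3} {c' : R3} {s : ℝ} (h : HasDerivAt c c' s) :
    HasDerivAt (fun θ => (c θ).2.2) c'.2.2 s :=
  (((ContinuousLinearMap.snd ℝ ℝ ℝ).comp
    (ContinuousLinearMap.snd ℝ ℝ (ℝ × ℝ))).hasFDerivAt.comp_hasDerivAt s h)

theorem WW_imm {c : ℝ → R3} {c' : R3} {s : ℝ} (h : HasDerivAt c c' s) (h0 : c' ≠ 0)
    (hax : c s ∉ xAxisSet) : ∃ l ∈ WW, ∃ l', HasDerivAt (fun θ => l (c θ)) l' s ∧ l' ≠ 0 := by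
  by_contra! H
  have h1 := H _ WW_x _ (hasDerivAt_fst h)
  have h2 := H _ WW_yy _ ((hasDerivAt_y h).mul (hasDerivAt_y h))
  have h3 := H _ WW_yz _ ((hasDerivAt_y h).mul (hasDerivAt_z h))
  have h4 := H _ WW_zz _ ((hasDerivAt_z h).mul (hasDerivAt_z h))
  generalize c s = P at *
  obtain ⟨x, y, z⟩ := P
  obtain ⟨x', y', z'⟩ := c'
  simp only [xAxisSet, mem_ofPred_eq, not_and] at *
  subst h1
  have h2' : y' * y = 0 := by linarith
  have h4' : z' * z = 0 := by linarith
  by_cases hy : y = 0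
  · have hz := hax hy
    have : z' = 0 := (mul_eq_zero.1 h4').resolve_right hz
    subst hy this
    have : y' = 0 := (mul_eq_zero.1 (by linarith : y' * z = 0)).resolve_right hz
    subst this
    exact h0 rfl
  · have : y' = 0 := (mul_eq_zero.1 h2').resolve_right hy
    subst this
    have : z' = 0 := (mul_eq_zero.1 (by linarith : z' * y = 0)).resolve_right hy
    subst this
    exact h0 rfl

/-- Basic 1-jet interpolation. -/
theorem jet_basic {c : ℝ → R3} {c' : R3} {s : ℝ} (h : HasDerivAt c c' s) (h0 : c' ≠ 0)
    (hax : c s ∉ xAxisSet) {f0 : R3 → ℝ} (hf0 : ContDiff ℝ ∞ f0) (hne : f0 (c s) ≠ 0)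
    (α β : ℝ) : ∃ g ∈ WW, (f0 * g) (c s) = α ∧ HasDerivAt (fun θ => (f0 * g) (c θ)) β s := by
  obtain ⟨l, hl, l', hl', hl0⟩ := WW_imm h h0 hax
  have hfd : HasDerivAt (fun θ => f0 (c θ)) (fderiv ℝ f0 (c s) c') s :=
    ((hf0.differentiable (by simp)) (c s)).hasFDerivAt.comp_hasDerivAt s h
  set d := fderiv ℝ f0 (c s) c'
  set v := f0 (c s) with hv
  refine ⟨fun P => α / v + ((β - d * (α / v)) / (v * l')) * (l P - l (c s)), ?_, ?_, ?_⟩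
  · exact WW.add_mem (WW_const _) (WW.smul_mem _ (WW_sub_const hl _))
  · simp only [Pi.mul_apply, sub_self, mul_zero, add_zero, ← hv]
    field_simp
  · have := hfd.mul (((hl'.sub_const (l (c s))).const_mul
      ((β - d * (α / v)) / (v * l'))).const_add (α / v))
    refine this.congr_deriv ?_
    simp only [sub_self, mul_zero, add_zero, ← hv]
    field_simp
    ring

section interp
variable {R : Submodule ℝ (R3 → ℝ)} {e : ℝ}

theorem jet1 (hR : R ≤ SS e) (hR0 : ∀ P ∉ xAxisSet, ∃ g ∈ R, g P ≠ 0)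
    {c : ℝ → R3} {c' : R3} {s : ℝ} (h : HasDerivAt c c' s) (h0 : c' ≠ 0)
    (hax : c s ∉ xAxisSet) (α β : ℝ) :
    ∃ p ∈ EE R, p (c s) = α ∧ HasDerivAt (fun θ => p (c θ)) β s := by
  obtain ⟨g, hg, hg0⟩ := hR0 _ hax
  have h1 : (fun _ : R3 => (1 : ℝ)) ∈ WW := WW_const 1
  have hmem : g * ((fun _ => 1) * (fun _ => 1)) ∈ R * (WW * WW) :=
    Submodule.mul_mem_mul hg (Submodule.mul_mem_mul h1 h1)
  obtain ⟨w, hw, hw1, hw2⟩ := jet_basic (f0 := g * ((fun _ => 1) * (fun _ => 1))) h h0 hax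
    ((hR hg).1.mul ((WW_le h1).1.mul (WW_le h1).1)) (by simpa using hg0) α β
  exact ⟨_, Submodule.mul_mem_mul hmem hw, hw1, hw2⟩

theorem jet2 (hR : R ≤ SS e) (hR0 : ∀ P ∉ xAxisSet, ∃ g ∈ R, g P ≠ 0)
    {c : ℝ → R3} {c' : R3} {s : ℝ} (h : HasDerivAt c c' s) (h0 : c' ≠ 0)
    (hax : c s ∉ xAxisSet) {b : ℝ → R3} {b' : R3} {u : ℝ} (hb : HasDerivAt b b' u)
    (hne : c s ≠ b u) (hne' : c s ≠ tau (b u)) (α β : ℝ) :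
    ∃ p ∈ EE R, p (c s) = α ∧ HasDerivAt (fun θ => p (c θ)) β s ∧
      p (b u) = 0 ∧ HasDerivAt (fun θ => p (b θ)) 0 u := by
  obtain ⟨g, hg, hg0⟩ := hR0 _ hax
  obtain ⟨m, hm, hm0⟩ := WW_sep hne hne'
  have h1 := WW_sub_const hm (m (b u))
  set k : R3 → ℝ := fun P => m P - m (b u) with hk
  have hmem : g * (k * k) ∈ R * (WW * WW) :=
    Submodule.mul_mem_mul hg (Submodule.mul_mem_mul h1 h1)
  obtain ⟨w, hw, hw1, hw2⟩ := jet_basic (f0 := g * (k * k)) h h0 hax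
    ((hR hg).1.mul ((WW_le h1).1.mul (WW_le h1).1))
    (by simp [hg0, hk, sub_eq_zero, hm0.symm]) α β
  refine ⟨_, Submodule.mul_mem_mul hmem hw, hw1, hw2, by simp [hk], ?_⟩
  have hd : ∀ f : R3 → ℝ, ContDiff ℝ ∞ f → HasDerivAt (fun θ => f (b θ)) (fderiv ℝ f (b u) b') u :=
    fun f hf => ((hf.differentiable (by simp)) (b u)).hasFDerivAt.comp_hasDerivAt u hb
  have := ((hd g (hR hg).1).mul ((hd k (WW_le h1).1).mul (hd k (WW_le h1).1))).mul
    (hd w (WW_le hw).1)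
  refine this.congr_deriv ?_
  simp [hk]

theorem jet3 (hR0 : ∀ P ∉ xAxisSet, ∃ g ∈ R, g P ≠ 0)
    {P Q S : R3} (hax : P ∉ xAxisSet) (h1 : P ≠ Q) (h1' : P ≠ tau Q)
    (h2 : P ≠ S) (h2' : P ≠ tau S) (α : ℝ) :
    ∃ p ∈ EE R, p P = α ∧ p Q = 0 ∧ p S = 0 := by
  obtain ⟨g, hg, hg0⟩ := hR0 _ hax
  obtain ⟨m, hm, hm0⟩ := WW_sep h1 h1'
  obtain ⟨l, hl, hl0⟩ := WW_sep h2 h2'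
  have k1 := WW_sub_const hm (m Q)
  have k2 := WW_sub_const hl (l S)
  refine ⟨_, Submodule.mul_mem_mul (Submodule.mul_mem_mul hg (Submodule.mul_mem_mul k1 k2))
    (WW_const (α / (g P * ((m P - m Q) * (l P - l S))))), ?_, ?_, ?_⟩
  · have : m P - m Q ≠ 0 := sub_ne_zero.2 hm0.symm
    have : l P - l S ≠ 0 := sub_ne_zero.2 hl0.symm
    simp only [Pi.mul_apply]
    field_simp
  · simp
  · simp

end interp

theorem RX_ne : ∀ P ∉ xAxisSet, ∃ g ∈ RX, g P ≠ 0 := fun P _ =>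
  ⟨fun _ => 1, Submodule.subset_span (by simp), one_ne_zero⟩

theorem RZ_ne : ∀ P ∉ xAxisSet, ∃ g ∈ RZ, g P ≠ 0 := by
  intro P hP
  by_cases h : P.2.1 = 0
  · refine ⟨fun P => P.2.2, Submodule.subset_span (by simp), fun h' => hP ⟨h, h'⟩⟩
  · exact ⟨fun P => P.2.1, Submodule.subset_span (by simp), h⟩

theorem EX_of_WW {f g : R3 → ℝ} (hf : f ∈ WW) (hg : g ∈ WW) : f * g ∈ EE RX := by
  have h1 : (fun _ : R3 => (1 : ℝ)) ∈ RX := Submodule.subset_span (by simp)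
  have := Submodule.mul_mem_mul (Submodule.mul_mem_mul h1 (Submodule.mul_mem_mul (WW_const 1) hf)) hg
  have e : f * g = (fun _ => 1) * ((fun _ => 1) * f) * g := by ext P; simp
  rw [e]; exact this

theorem EZ_of_RZ {f : R3 → ℝ} (hf : f ∈ RZ) : f ∈ EE RZ := by
  have := Submodule.mul_mem_mul (Submodule.mul_mem_mul hf
    (Submodule.mul_mem_mul (WW_const 1) (WW_const 1))) (WW_const 1)
  have e : f = f * ((fun _ => 1) * (fun _ => 1)) * (fun _ => 1) := by ext P; simp
  rw [e]; exact this

end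

end part2

section part3
open scoped Manifold ContDiff Topology
open Set Filter Module

set_option linter.unusedSectionVars false
noncomputable section

/-- First derivative of a function along a curve. -/
def J1 (f : R3 → ℝ) (c : ℝ → R3) (θ : ℝ) : ℝ := deriv (fun t => f (c t)) θ

/-- Second derivative of a function along a curve. -/
def J2 (f : R3 → ℝ) (c : ℝ → R3) (θ : ℝ) : ℝ := deriv (J1 f c) θ

/-- The coordinate functions. -/
def xx : R3 → ℝ := fun P => P.1
def zz : R3 → ℝ := fun P => P.2.2

theorem xx_smooth : ContDiff ℝ ∞ xx := by unfold xx; fun_prop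
theorem zz_smooth : ContDiff ℝ ∞ zz := by unfold zz; fun_prop

theorem contDiff_deriv_infty {f : ℝ → ℝ} (hf : ContDiff ℝ ∞ f) : ContDiff ℝ ∞ (deriv f) :=
  (contDiff_infty_iff_deriv.1 hf).2

theorem J1_smooth {f : R3 → ℝ} {c : ℝ → R3} (hf : ContDiff ℝ ∞ f) (hc : ContDiff ℝ ∞ c) :
    ContDiff ℝ ∞ (J1 f c) := contDiff_deriv_infty (hf.comp hc)

theorem J2_smooth {f : R3 → ℝ} {c : ℝ → R3} (hf : ContDiff ℝ ∞ f) (hc : ContDiff ℝ ∞ c) :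
    ContDiff ℝ ∞ (J2 f c) := contDiff_deriv_infty (J1_smooth hf hc)

theorem diff_along {f : R3 → ℝ} {c : ℝ → R3} (hf : ContDiff ℝ ∞ f) (hc : ContDiff ℝ ∞ c) :
    Differentiable ℝ (fun t => f (c t)) := (hf.comp hc).differentiable (by simp)

theorem J1_add {f g : R3 → ℝ} {c : ℝ → R3} (hf : ContDiff ℝ ∞ f) (hg : ContDiff ℝ ∞ g)
    (hc : ContDiff ℝ ∞ c) (θ : ℝ) : J1 (f + g) c θ = J1 f c θ + J1 g c θ :=
  deriv_add (diff_along hf hc θ) (diff_along hg hc θ)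

theorem J1_smul {f : R3 → ℝ} {c : ℝ → R3} (k : ℝ) (θ : ℝ) :
    J1 (k • f) c θ = k * J1 f c θ := by
  simp only [J1, Pi.smul_apply, smul_eq_mul, deriv_const_mul_field]

theorem J2_add {f g : R3 → ℝ} {c : ℝ → R3} (hf : ContDiff ℝ ∞ f) (hg : ContDiff ℝ ∞ g)
    (hc : ContDiff ℝ ∞ c) (θ : ℝ) : J2 (f + g) c θ = J2 f c θ + J2 g c θ := by
  have : J1 (f + g) c = J1 f c + J1 g c := funext fun θ => J1_add hf hg hc θ
  rw [J2, this]
  exact deriv_add ((J1_smooth hf hc).differentiable (by simp) θ)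
    ((J1_smooth hg hc).differentiable (by simp) θ)

theorem J2_smul {f : R3 → ℝ} {c : ℝ → R3} (k : ℝ) (θ : ℝ) :
    J2 (k • f) c θ = k * J2 f c θ := by
  have : J1 (k • f) c = fun θ => k * J1 f c θ := funext fun θ => J1_smul k θ
  rw [J2, this, deriv_const_mul_field]; rfl

variable {E : Type*} [NormedAddCommGroup E] [NormedSpace ℝ E] [FiniteDimensional ℝ E]

/-- Evaluation functional. -/
def lJ0 (l : E →ₗ[ℝ] (R3 → ℝ)) (P : R3) : E →ₗ[ℝ] ℝ := (LinearMap.proj P).comp l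

theorem lJ0_apply (l : E →ₗ[ℝ] (R3 → ℝ)) (P : R3) (a : E) : lJ0 l P a = l a P := rfl

/-- First derivative functional. -/
def lJ1 (l : E →ₗ[ℝ] (R3 → ℝ)) (hl : ∀ a, ContDiff ℝ ∞ (l a)) (c : ℝ → R3)
    (hc : ContDiff ℝ ∞ c) (θ : ℝ) : E →ₗ[ℝ] ℝ where
  toFun a := J1 (l a) c θ
  map_add' a b := by rw [map_add, J1_add (hl a) (hl b) hc]
  map_smul' k a := by rw [map_smul, J1_smul]; rfl

/-- Second derivative functional. -/
def lJ2 (l : E →ₗ[ℝ] (R3 → ℝ)) (hl : ∀ a, ContDiff ℝ ∞ (l a)) (c : ℝ → R3)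
    (hc : ContDiff ℝ ∞ c) (θ : ℝ) : E →ₗ[ℝ] ℝ where
  toFun a := J2 (l a) c θ
  map_add' a b := by rw [map_add, J2_add (hl a) (hl b) hc]
  map_smul' k a := by rw [map_smul, J2_smul]; rfl

theorem lJ1_apply (l : E →ₗ[ℝ] (R3 → ℝ)) (hl : ∀ a, ContDiff ℝ ∞ (l a)) (c : ℝ → R3)
    (hc : ContDiff ℝ ∞ c) (θ : ℝ) (a : E) : lJ1 l hl c hc θ a = J1 (l a) c θ := rfl

theorem lJ2_apply (l : E →ₗ[ℝ] (R3 → ℝ)) (hl : ∀ a, ContDiff ℝ ∞ (l a)) (c : ℝ → R3)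
    (hc : ContDiff ℝ ∞ c) (θ : ℝ) (a : E) : lJ2 l hl c hc θ a = J2 (l a) c θ := rfl

theorem tau_tau (P : R3) : tau (tau P) = P := by simp [tau]

theorem ne_tau_symm {P Q : R3} (h : P ≠ tau Q) : Q ≠ tau P := by
  rintro rfl; exact h (tau_tau P).symm

theorem tau_axis {P : R3} (h : P ∈ xAxisSet) : tau P = P := by
  obtain ⟨x, y, z⟩ := P
  obtain ⟨h1, h2⟩ := h
  simp only at h1 h2
  subst h1 h2
  simp [tau]

theorem axis_iff {P : R3} : P ∈ xAxisSet ↔ tau P = P := by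
  refine ⟨tau_axis, fun h => ?_⟩
  obtain ⟨x, y, z⟩ := P
  simp only [tau, Prod.mk.injEq] at h
  exact ⟨by simp only; linarith, by simp only; linarith⟩

section bad

theorem bad1 (pp qq : E →ₗ[ℝ] (R3 → ℝ)) (hp : ∀ a, ContDiff ℝ ∞ (pp a)) (hq : ∀ a, ContDiff ℝ ∞ (qq a))
    (hpq : ∀ f ∈ EE RX, ∀ g ∈ EE RZ, ∃ a, pp a = f ∧ qq a = g)
    (c : ℝ → R3) (hc : ContDiff ℝ ∞ c) (hc0 : ∀ θ, deriv c θ ≠ 0)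
    : dimH {a : E | ∃ θ, c θ ∉ xAxisSet ∧ J1 (xx + pp a) c θ = 0 ∧
    J1 (zz + qq a) c θ = 0} ≤ (finrank ℝ E - 1 : ℕ) := by
  refine (dimH_mono ?_).trans (transv (X := ℝ) (Y := ℝ × ℝ) (by simp [finrank_prod])
    {θ | c θ ∉ xAxisSet} (fun θ => (lJ1 pp hp c hc θ).prod (lJ1 qq hq c hc θ))
    (fun θ => (J1 xx c θ, J1 zz c θ)) ?_ ?_ ?_)
  · rintro a ⟨θ, h1, h2, h3⟩
    rw [J1_add xx_smooth (hp a) hc] at h2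
    rw [J1_add zz_smooth (hq a) hc] at h3
    refine ⟨θ, h1, ?_⟩
    ext <;> simp [lJ1_apply] <;> linarith
  · intro a
    exact ((J1_smooth (hp a) hc).prodMk (J1_smooth (hq a) hc)).of_le (by simp)
  · exact ((J1_smooth xx_smooth hc).prodMk (J1_smooth zz_smooth hc)).of_le (by simp)
  · rintro θ hθ ⟨α, β⟩
    have hcd := (hc.differentiable (by simp) θ).hasDerivAt
    obtain ⟨f, hf, -, hf1⟩ := jet1 RX_le RX_ne hcd (hc0 θ) hθ 0 α
    obtain ⟨g, hg, -, hg1⟩ := jet1 RZ_le RZ_ne hcd (hc0 θ) hθ 0 β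
    obtain ⟨a, rfl, rfl⟩ := hpq f hf g hg
    exact ⟨a, by ext; exacts [hf1.deriv, hg1.deriv]⟩

theorem bad4 (pp qq : E →ₗ[ℝ] (R3 → ℝ)) (hp : ∀ a, ContDiff ℝ ∞ (pp a)) (hq : ∀ a, ContDiff ℝ ∞ (qq a))
    (hpq : ∀ f ∈ EE RX, ∀ g ∈ EE RZ, ∃ a, pp a = f ∧ qq a = g)
    (c : ℝ → R3) (hc : ContDiff ℝ ∞ c) (hc0 : ∀ θ, deriv c θ ≠ 0)
    : dimH {a : E | ∃ θ, c θ ∉ xAxisSet ∧ (zz + qq a) (c θ) = 0 ∧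
    J1 (xx + pp a) c θ = 0} ≤ (finrank ℝ E - 1 : ℕ) := by
  refine (dimH_mono ?_).trans (transv (X := ℝ) (Y := ℝ × ℝ) (by simp [finrank_prod])
    {θ | c θ ∉ xAxisSet} (fun θ => (lJ0 qq (c θ)).prod (lJ1 pp hp c hc θ))
    (fun θ => (zz (c θ), J1 xx c θ)) ?_ ?_ ?_)
  · rintro a ⟨θ, h1, h2, h3⟩
    rw [J1_add xx_smooth (hp a) hc] at h3
    rw [Pi.add_apply] at h2
    refine ⟨θ, h1, ?_⟩
    ext <;> simp [lJ1_apply, lJ0_apply] <;> linarith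
  · intro a
    exact (((hq a).comp hc).prodMk (J1_smooth (hp a) hc)).of_le (by simp)
  · exact ((zz_smooth.comp hc).prodMk (J1_smooth xx_smooth hc)).of_le (by simp)
  · rintro θ hθ ⟨α, β⟩
    have hcd := (hc.differentiable (by simp) θ).hasDerivAt
    obtain ⟨f, hf, -, hf1⟩ := jet1 RX_le RX_ne hcd (hc0 θ) hθ 0 β
    obtain ⟨g, hg, hg1, -⟩ := jet1 RZ_le RZ_ne hcd (hc0 θ) hθ α 0
    obtain ⟨a, rfl, rfl⟩ := hpq f hf g hg
    exact ⟨a, by ext; exacts [hg1, hf1.deriv]⟩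

theorem bad5 (pp qq : E →ₗ[ℝ] (R3 → ℝ)) (hq : ∀ a, ContDiff ℝ ∞ (qq a))
    (hpq : ∀ f ∈ EE RX, ∀ g ∈ EE RZ, ∃ a, pp a = f ∧ qq a = g)
    (c : ℝ → R3) (hc : ContDiff ℝ ∞ c) (hc0 : ∀ θ, deriv c θ ≠ 0)
    : dimH {a : E | ∃ θ, c θ ∉ xAxisSet ∧ (zz + qq a) (c θ) = 0 ∧
    J1 (zz + qq a) c θ = 0} ≤ (finrank ℝ E - 1 : ℕ) := by
  refine (dimH_mono ?_).trans (transv (X := ℝ) (Y := ℝ × ℝ) (by simp [finrank_prod])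
    {θ | c θ ∉ xAxisSet} (fun θ => (lJ0 qq (c θ)).prod (lJ1 qq hq c hc θ))
    (fun θ => (zz (c θ), J1 zz c θ)) ?_ ?_ ?_)
  · rintro a ⟨θ, h1, h2, h3⟩
    rw [J1_add zz_smooth (hq a) hc] at h3
    rw [Pi.add_apply] at h2
    refine ⟨θ, h1, ?_⟩
    ext <;> simp [lJ1_apply, lJ0_apply] <;> linarith
  · intro a
    exact (((hq a).comp hc).prodMk (J1_smooth (hq a) hc)).of_le (by simp)
  · exact ((zz_smooth.comp hc).prodMk (J1_smooth zz_smooth hc)).of_le (by simp)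
  · rintro θ hθ ⟨α, β⟩
    have hcd := (hc.differentiable (by simp) θ).hasDerivAt
    obtain ⟨g, hg, hg1, hg2⟩ := jet1 RZ_le RZ_ne hcd (hc0 θ) hθ α β
    obtain ⟨a, -, rfl⟩ := hpq 0 (Submodule.zero_mem _) g hg
    exact ⟨a, by ext; exacts [hg1, hg2.deriv]⟩

theorem bad2 (pp qq : E →ₗ[ℝ] (R3 → ℝ)) (hp : ∀ a, ContDiff ℝ ∞ (pp a))
    (hpq : ∀ f ∈ EE RX, ∀ g ∈ EE RZ, ∃ a, pp a = f ∧ qq a = g)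
    (c : ℝ → R3) (hc : ContDiff ℝ ∞ c) (hc0 : ∀ θ, deriv c θ ≠ 0)
    : dimH {a : E | ∃ θ, c θ ∉ xAxisSet ∧ J1 (xx + pp a) c θ = 0 ∧
    J2 (xx + pp a) c θ = 0} ≤ (finrank ℝ E - 1 : ℕ) := by
  refine (dimH_mono ?_).trans (transv (X := ℝ) (Y := ℝ × ℝ) (by simp [finrank_prod])
    {θ | c θ ∉ xAxisSet} (fun θ => (lJ1 pp hp c hc θ).prod (lJ2 pp hp c hc θ))
    (fun θ => (J1 xx c θ, J2 xx c θ)) ?_ ?_ ?_)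
  · rintro a ⟨θ, h1, h2, h3⟩
    rw [J1_add xx_smooth (hp a) hc] at h2
    rw [J2_add xx_smooth (hp a) hc] at h3
    refine ⟨θ, h1, ?_⟩
    ext <;> simp [lJ1_apply, lJ2_apply] <;> linarith
  · intro a
    exact ((J1_smooth (hp a) hc).prodMk (J2_smooth (hp a) hc)).of_le (by simp)
  · exact ((J1_smooth xx_smooth hc).prodMk (J2_smooth xx_smooth hc)).of_le (by simp)
  · rintro θ hθ ⟨α, β⟩
    have hcd := (hc.differentiable (by simp) θ).hasDerivAt
    obtain ⟨f, hf, -, hf1⟩ := jet1 RX_le RX_ne hcd (hc0 θ) hθ 0 α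
    obtain ⟨l, hl, l', hl', hl0⟩ := WW_imm hcd (hc0 θ) hθ
    have hk := WW_sub_const hl (l (c θ))
    set k : R3 → ℝ := fun P => l P - l (c θ) with hkdef
    have hks := (WW_le hk).1
    have hkk := EX_of_WW hk hk
    have hkd : ∀ t, HasDerivAt (fun t => k (c t)) (J1 k c t) t := fun t =>
      (diff_along hks hc t).hasDerivAt
    have e1 : J1 (k * k) c = fun t => J1 k c t * k (c t) + k (c t) * J1 k c t :=
      funext fun t => ((hkd t).mul (hkd t)).deriv
    have ek : k (c θ) = 0 := by simp [hkdef]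
    have ek1 : J1 k c θ = l' := (hl'.sub_const _).deriv
    have e2 : J2 (k * k) c θ = 2 * l' ^ 2 := by
      rw [J2, e1]
      have h2 := ((J1_smooth hks hc).differentiable (by simp) θ).hasDerivAt
      have := (h2.mul (hkd θ)).add ((hkd θ).mul h2)
      refine this.deriv.trans ?_
      rw [ek, ek1]; ring
    have e1' : J1 (k * k) c θ = 0 := by rw [e1]; simp [ek]
    have hfs := (EE_le RX_le hf).1
    have hkks := (EE_le RX_le hkk).1
    obtain ⟨a, ha, -⟩ := hpq (f + ((β - J2 f c θ) / (2 * l' ^ 2)) • (k * k))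
      (Submodule.add_mem _ hf (Submodule.smul_mem _ _ hkk)) 0 (Submodule.zero_mem _)
    refine ⟨a, ?_⟩
    have hsm : ContDiff ℝ ∞ (((β - J2 f c θ) / (2 * l' ^ 2)) • (k * k)) := contDiff_const.smul hkks
    ext
    · show J1 (pp a) c θ = α
      rw [ha, J1_add hfs hsm hc, J1_smul, e1']
      have : J1 f c θ = α := hf1.deriv
      linarith
    · show J2 (pp a) c θ = β
      rw [ha, J2_add hfs hsm hc, J2_smul, e2]
      field_simp
      ring

theorem bad6 (pp qq : E →ₗ[ℝ] (R3 → ℝ))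
    (hpq : ∀ f ∈ EE RX, ∀ g ∈ EE RZ, ∃ a, pp a = f ∧ qq a = g)
    (c : ℝ → R3) (hc : ContDiff ℝ ∞ c)
    (P0 : R3) (hP0 : P0 ∈ xAxisSet) (hp : ∀ a, ContDiff ℝ ∞ (pp a))
    (hq : ∀ a, ContDiff ℝ ∞ (qq a)) :
    dimH {a : E | ∃ θ, c θ ∉ xAxisSet ∧ (zz + qq a) (c θ) = 0 ∧
    (xx + pp a) (c θ) = (xx + pp a) P0} ≤ (finrank ℝ E - 1 : ℕ) := by
  refine (dimH_mono ?_).trans (transv (X := ℝ) (Y := ℝ × ℝ) (by simp [finrank_prod])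
    {θ | c θ ∉ xAxisSet} (fun θ => (lJ0 qq (c θ)).prod (lJ0 pp (c θ) - lJ0 pp P0))
    (fun θ => (zz (c θ), xx (c θ) - xx P0)) ?_ ?_ ?_)
  · rintro a ⟨θ, h1, h2, h3⟩
    rw [Pi.add_apply] at h2
    rw [Pi.add_apply, Pi.add_apply] at h3
    refine ⟨θ, h1, ?_⟩
    ext <;> simp [lJ0_apply] <;> linarith
  · intro a
    exact (((hq a).comp hc).prodMk (((hp a).comp hc).sub contDiff_const)).of_le (by simp)
  · exact ((zz_smooth.comp hc).prodMk ((xx_smooth.comp hc).sub contDiff_const)).of_le (by simp)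
  · rintro θ hθ ⟨α, β⟩
    have hne : c θ ≠ P0 := fun h => hθ (h ▸ hP0)
    have hne' : c θ ≠ tau P0 := by rwa [tau_axis hP0]
    obtain ⟨f, hf, hf1, hf2, -⟩ := jet3 RX_ne hθ hne hne' hne hne' β
    obtain ⟨g, hg, hg1, -, -⟩ := jet3 RZ_ne hθ hne hne' hne hne' α
    obtain ⟨a, rfl, rfl⟩ := hpq f hf g hg
    exact ⟨a, by ext <;> simp [lJ0_apply, hg1, hf1, hf2]⟩

theorem bad7 (pp qq : E →ₗ[ℝ] (R3 → ℝ))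
    (hpq : ∀ f ∈ EE RX, ∀ g ∈ EE RZ, ∃ a, pp a = f ∧ qq a = g)
    (c b : ℝ → R3) (hc : ContDiff ℝ ∞ c)
    (hb : ContDiff ℝ ∞ b) (hp : ∀ a, ContDiff ℝ ∞ (pp a))
    (hq : ∀ a, ContDiff ℝ ∞ (qq a)) :
    dimH {a : E | ∃ θ φ, c θ ∉ xAxisSet ∧ b φ ∉ xAxisSet ∧ c θ ≠ b φ ∧ c θ ≠ tau (b φ) ∧
      (zz + qq a) (c θ) = 0 ∧ (zz + qq a) (b φ) = 0 ∧
      (xx + pp a) (c θ) = (xx + pp a) (b φ)} ≤ (finrank ℝ E - 1 : ℕ) := by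
  refine (dimH_mono ?_).trans (transv (X := ℝ × ℝ) (Y := ℝ × ℝ × ℝ) (by simp [finrank_prod])
    {w | c w.1 ∉ xAxisSet ∧ b w.2 ∉ xAxisSet ∧ c w.1 ≠ b w.2 ∧ c w.1 ≠ tau (b w.2)}
    (fun w => (lJ0 qq (c w.1)).prod ((lJ0 qq (b w.2)).prod (lJ0 pp (c w.1) - lJ0 pp (b w.2))))
    (fun w => (zz (c w.1), zz (b w.2), xx (c w.1) - xx (b w.2))) ?_ ?_ ?_)
  · rintro a ⟨θ, φ, h1, h2, h3, h4, h5, h6, h7⟩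
    simp only [Pi.add_apply] at h5 h6 h7
    refine ⟨(θ, φ), ⟨h1, h2, h3, h4⟩, ?_⟩
    ext <;> simp [lJ0_apply] <;> linarith
  · intro a
    exact (((hq a).comp (hc.comp contDiff_fst)).prodMk (((hq a).comp (hb.comp contDiff_snd)).prodMk
      (((hp a).comp (hc.comp contDiff_fst)).sub ((hp a).comp (hb.comp contDiff_snd))))).of_le
      (by simp)
  · exact ((zz_smooth.comp (hc.comp contDiff_fst)).prodMk
      ((zz_smooth.comp (hb.comp contDiff_snd)).prodMk
      ((xx_smooth.comp (hc.comp contDiff_fst)).sub (xx_smooth.comp (hb.comp contDiff_snd))))).of_le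
      (by simp)
  · rintro ⟨θ, φ⟩ ⟨h1, h2, h3, h4⟩ ⟨α, β, κ⟩
    simp only at h1 h2 h3 h4
    obtain ⟨f, hf, hf1, hf2, -⟩ := jet3 RX_ne h1 h3 h4 h3 h4 κ
    obtain ⟨g, hg, hg1, hg2, -⟩ := jet3 RZ_ne h1 h3 h4 h3 h4 α
    obtain ⟨g', hg', hg1', hg2', -⟩ := jet3 RZ_ne h2 h3.symm (ne_tau_symm h4) h3.symm
      (ne_tau_symm h4) β
    obtain ⟨a, rfl, ha⟩ := hpq f hf (g + g') (Submodule.add_mem _ hg hg')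
    exact ⟨a, by ext <;> simp [lJ0_apply, ha, hg1, hf1, hf2, hg2, hg1', hg2']⟩

theorem bad8 (pp qq : E →ₗ[ℝ] (R3 → ℝ)) (hp : ∀ a, ContDiff ℝ ∞ (pp a)) (hq : ∀ a, ContDiff ℝ ∞ (qq a))
    (hpq : ∀ f ∈ EE RX, ∀ g ∈ EE RZ, ∃ a, pp a = f ∧ qq a = g)
    (c b : ℝ → R3) (hc : ContDiff ℝ ∞ c) (hc0 : ∀ θ, deriv c θ ≠ 0)
    (hb : ContDiff ℝ ∞ b) :
    dimH {a : E | ∃ θ φ, c θ ∉ xAxisSet ∧ c θ ≠ b φ ∧ c θ ≠ tau (b φ) ∧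
      (xx + pp a) (c θ) = (xx + pp a) (b φ) ∧ (zz + qq a) (c θ) = (zz + qq a) (b φ) ∧
      J1 (xx + pp a) c θ = 0} ≤ (finrank ℝ E - 1 : ℕ) := by
  refine (dimH_mono ?_).trans (transv (X := ℝ × ℝ) (Y := ℝ × ℝ × ℝ) (by simp [finrank_prod])
    {w | c w.1 ∉ xAxisSet ∧ c w.1 ≠ b w.2 ∧ c w.1 ≠ tau (b w.2)}
    (fun w => (lJ0 pp (c w.1) - lJ0 pp (b w.2)).prod
      ((lJ0 qq (c w.1) - lJ0 qq (b w.2)).prod (lJ1 pp hp c hc w.1)))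
    (fun w => (xx (c w.1) - xx (b w.2), zz (c w.1) - zz (b w.2), J1 xx c w.1)) ?_ ?_ ?_)
  · rintro a ⟨θ, φ, h1, h3, h4, h5, h6, h7⟩
    rw [J1_add xx_smooth (hp a) hc] at h7
    simp only [Pi.add_apply] at h5 h6
    refine ⟨(θ, φ), ⟨h1, h3, h4⟩, ?_⟩
    ext <;> simp [lJ0_apply, lJ1_apply] <;> linarith
  · intro a
    exact ((((hp a).comp (hc.comp contDiff_fst)).sub ((hp a).comp (hb.comp contDiff_snd))).prodMk
      ((((hq a).comp (hc.comp contDiff_fst)).sub ((hq a).comp (hb.comp contDiff_snd))).prodMk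
      ((J1_smooth (hp a) hc).comp contDiff_fst))).of_le (by simp)
  · exact (((xx_smooth.comp (hc.comp contDiff_fst)).sub
      (xx_smooth.comp (hb.comp contDiff_snd))).prodMk
      (((zz_smooth.comp (hc.comp contDiff_fst)).sub (zz_smooth.comp (hb.comp contDiff_snd))).prodMk
      ((J1_smooth xx_smooth hc).comp contDiff_fst))).of_le (by simp)
  · rintro ⟨θ, φ⟩ ⟨h1, h3, h4⟩ ⟨α, β, κ⟩
    simp only at h1 h3 h4
    have hcd := (hc.differentiable (by simp) θ).hasDerivAt
    have hbd := (hb.differentiable (by simp) φ).hasDerivAt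
    obtain ⟨f, hf, hf1, hf2, hf3, -⟩ := jet2 RX_le RX_ne hcd (hc0 θ) h1 hbd h3 h4 α κ
    obtain ⟨g, hg, hg1, hg2, -⟩ := jet3 RZ_ne h1 h3 h4 h3 h4 β
    obtain ⟨a, rfl, rfl⟩ := hpq f hf g hg
    have hf2' : J1 (pp a) c θ = κ := hf2.deriv
    exact ⟨a, by ext <;> simp [lJ0_apply, lJ1_apply, hg1, hf1, hf2', hg2, hf3]⟩

theorem bad9 (pp qq : E →ₗ[ℝ] (R3 → ℝ)) (hp : ∀ a, ContDiff ℝ ∞ (pp a)) (hq : ∀ a, ContDiff ℝ ∞ (qq a))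
    (hpq : ∀ f ∈ EE RX, ∀ g ∈ EE RZ, ∃ a, pp a = f ∧ qq a = g)
    (c b : ℝ → R3) (hc : ContDiff ℝ ∞ c) (hc0 : ∀ θ, deriv c θ ≠ 0)
    (hb : ContDiff ℝ ∞ b) :
    dimH {a : E | ∃ θ φ k, c θ ∉ xAxisSet ∧ c θ ≠ b φ ∧ c θ ≠ tau (b φ) ∧
      (xx + pp a) (c θ) = (xx + pp a) (b φ) ∧ (zz + qq a) (c θ) = (zz + qq a) (b φ) ∧
      J1 (xx + pp a) c θ = k * J1 (xx + pp a) b φ ∧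
      J1 (zz + qq a) c θ = k * J1 (zz + qq a) b φ} ≤ (finrank ℝ E - 1 : ℕ) := by
  refine (dimH_mono ?_).trans (transv (X := ℝ × ℝ × ℝ) (Y := ℝ × ℝ × ℝ × ℝ)
    (by simp [finrank_prod])
    {w | c w.1 ∉ xAxisSet ∧ c w.1 ≠ b w.2.1 ∧ c w.1 ≠ tau (b w.2.1)}
    (fun w => (lJ0 pp (c w.1) - lJ0 pp (b w.2.1)).prod
      ((lJ0 qq (c w.1) - lJ0 qq (b w.2.1)).prod
      ((lJ1 pp hp c hc w.1 - w.2.2 • lJ1 pp hp b hb w.2.1).prod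
      (lJ1 qq hq c hc w.1 - w.2.2 • lJ1 qq hq b hb w.2.1))))
    (fun w => (xx (c w.1) - xx (b w.2.1), zz (c w.1) - zz (b w.2.1),
      J1 xx c w.1 - w.2.2 * J1 xx b w.2.1, J1 zz c w.1 - w.2.2 * J1 zz b w.2.1)) ?_ ?_ ?_)
  · rintro a ⟨θ, φ, k, h1, h3, h4, h5, h6, h7, h8⟩
    rw [J1_add xx_smooth (hp a) hc, J1_add xx_smooth (hp a) hb] at h7
    rw [J1_add zz_smooth (hq a) hc, J1_add zz_smooth (hq a) hb] at h8
    simp only [Pi.add_apply] at h5 h6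
    refine ⟨(θ, φ, k), ⟨h1, h3, h4⟩, ?_⟩
    ext <;> simp [lJ0_apply, lJ1_apply] <;> linarith
  · intro a
    have s1 : ContDiff ℝ ∞ (fun w : ℝ × ℝ × ℝ => w.1) := contDiff_fst
    have s2 : ContDiff ℝ ∞ (fun w : ℝ × ℝ × ℝ => w.2.1) := by fun_prop
    have s3 : ContDiff ℝ ∞ (fun w : ℝ × ℝ × ℝ => w.2.2) := by fun_prop
    exact ((((hp a).comp (hc.comp s1)).sub ((hp a).comp (hb.comp s2))).prodMk
      ((((hq a).comp (hc.comp s1)).sub ((hq a).comp (hb.comp s2))).prodMk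
      ((((J1_smooth (hp a) hc).comp s1).sub (s3.mul ((J1_smooth (hp a) hb).comp s2))).prodMk
      (((J1_smooth (hq a) hc).comp s1).sub (s3.mul ((J1_smooth (hq a) hb).comp s2)))))).of_le
      (by simp)
  · have s1 : ContDiff ℝ ∞ (fun w : ℝ × ℝ × ℝ => w.1) := contDiff_fst
    have s2 : ContDiff ℝ ∞ (fun w : ℝ × ℝ × ℝ => w.2.1) := by fun_prop
    have s3 : ContDiff ℝ ∞ (fun w : ℝ × ℝ × ℝ => w.2.2) := by fun_prop
    exact (((xx_smooth.comp (hc.comp s1)).sub (xx_smooth.comp (hb.comp s2))).prodMk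
      (((zz_smooth.comp (hc.comp s1)).sub (zz_smooth.comp (hb.comp s2))).prodMk
      ((((J1_smooth xx_smooth hc).comp s1).sub (s3.mul ((J1_smooth xx_smooth hb).comp s2))).prodMk
      (((J1_smooth zz_smooth hc).comp s1).sub (s3.mul ((J1_smooth zz_smooth hb).comp s2)))))).of_le
      (by simp)
  · rintro ⟨θ, φ, k⟩ ⟨h1, h3, h4⟩ ⟨α, β, κ, μ⟩
    simp only at h1 h3 h4
    have hcd := (hc.differentiable (by simp) θ).hasDerivAt
    have hbd := (hb.differentiable (by simp) φ).hasDerivAt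
    obtain ⟨f, hf, hf1, hf2, hf3, hf4⟩ := jet2 RX_le RX_ne hcd (hc0 θ) h1 hbd h3 h4 α κ
    obtain ⟨g, hg, hg1, hg2, hg3, hg4⟩ := jet2 RZ_le RZ_ne hcd (hc0 θ) h1 hbd h3 h4 β μ
    obtain ⟨a, rfl, rfl⟩ := hpq f hf g hg
    have hf2' : J1 (pp a) c θ = κ := hf2.deriv
    have hf4' : J1 (pp a) b φ = 0 := hf4.deriv
    have hg2' : J1 (qq a) c θ = μ := hg2.deriv
    have hg4' : J1 (qq a) b φ = 0 := hg4.deriv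
    exact ⟨a, by ext <;> simp [lJ0_apply, lJ1_apply, hg1, hf1, hf2', hg2', hf3, hg3, hf4', hg4']⟩

theorem bad10 (pp qq : E →ₗ[ℝ] (R3 → ℝ))
    (hpq : ∀ f ∈ EE RX, ∀ g ∈ EE RZ, ∃ a, pp a = f ∧ qq a = g)
    (c b d : ℝ → R3) (hc : ContDiff ℝ ∞ c)
    (hb : ContDiff ℝ ∞ b) (hd : ContDiff ℝ ∞ d) (hp : ∀ a, ContDiff ℝ ∞ (pp a))
    (hq : ∀ a, ContDiff ℝ ∞ (qq a)) :
    dimH {a : E | ∃ θ φ κ, b φ ∉ xAxisSet ∧ d κ ∉ xAxisSet ∧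
      c θ ≠ b φ ∧ c θ ≠ tau (b φ) ∧ c θ ≠ d κ ∧ c θ ≠ tau (d κ) ∧ b φ ≠ d κ ∧ b φ ≠ tau (d κ) ∧
      (xx + pp a) (c θ) = (xx + pp a) (b φ) ∧ (xx + pp a) (c θ) = (xx + pp a) (d κ) ∧
      (zz + qq a) (c θ) = (zz + qq a) (b φ) ∧ (zz + qq a) (c θ) = (zz + qq a) (d κ)}
      ≤ (finrank ℝ E - 1 : ℕ) := by
  refine (dimH_mono ?_).trans (transv (X := ℝ × ℝ × ℝ) (Y := ℝ × ℝ × ℝ × ℝ)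
    (by simp [finrank_prod])
    {w | b w.2.1 ∉ xAxisSet ∧ d w.2.2 ∉ xAxisSet ∧
      c w.1 ≠ b w.2.1 ∧ c w.1 ≠ tau (b w.2.1) ∧ c w.1 ≠ d w.2.2 ∧ c w.1 ≠ tau (d w.2.2) ∧
      b w.2.1 ≠ d w.2.2 ∧ b w.2.1 ≠ tau (d w.2.2)}
    (fun w => (lJ0 pp (c w.1) - lJ0 pp (b w.2.1)).prod
      ((lJ0 pp (c w.1) - lJ0 pp (d w.2.2)).prod
      ((lJ0 qq (c w.1) - lJ0 qq (b w.2.1)).prod (lJ0 qq (c w.1) - lJ0 qq (d w.2.2)))))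
    (fun w => (xx (c w.1) - xx (b w.2.1), xx (c w.1) - xx (d w.2.2),
      zz (c w.1) - zz (b w.2.1), zz (c w.1) - zz (d w.2.2))) ?_ ?_ ?_)
  · rintro a ⟨θ, φ, k, h2, h3, h4, h5, h6, h7, h8, h9, e1, e2, e3, e4⟩
    simp only [Pi.add_apply] at e1 e2 e3 e4
    refine ⟨(θ, φ, k), ⟨h2, h3, h4, h5, h6, h7, h8, h9⟩, ?_⟩
    ext <;> simp [lJ0_apply] <;> linarith
  · intro a
    have s1 : ContDiff ℝ ∞ (fun w : ℝ × ℝ × ℝ => w.1) := contDiff_fst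
    have s2 : ContDiff ℝ ∞ (fun w : ℝ × ℝ × ℝ => w.2.1) := by fun_prop
    have s3 : ContDiff ℝ ∞ (fun w : ℝ × ℝ × ℝ => w.2.2) := by fun_prop
    exact ((((hp a).comp (hc.comp s1)).sub ((hp a).comp (hb.comp s2))).prodMk
      ((((hp a).comp (hc.comp s1)).sub ((hp a).comp (hd.comp s3))).prodMk
      ((((hq a).comp (hc.comp s1)).sub ((hq a).comp (hb.comp s2))).prodMk
      (((hq a).comp (hc.comp s1)).sub ((hq a).comp (hd.comp s3)))))).of_le (by simp)
  · have s1 : ContDiff ℝ ∞ (fun w : ℝ × ℝ × ℝ => w.1) := contDiff_fst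
    have s2 : ContDiff ℝ ∞ (fun w : ℝ × ℝ × ℝ => w.2.1) := by fun_prop
    have s3 : ContDiff ℝ ∞ (fun w : ℝ × ℝ × ℝ => w.2.2) := by fun_prop
    exact (((xx_smooth.comp (hc.comp s1)).sub (xx_smooth.comp (hb.comp s2))).prodMk
      (((xx_smooth.comp (hc.comp s1)).sub (xx_smooth.comp (hd.comp s3))).prodMk
      (((zz_smooth.comp (hc.comp s1)).sub (zz_smooth.comp (hb.comp s2))).prodMk
      ((zz_smooth.comp (hc.comp s1)).sub (zz_smooth.comp (hd.comp s3)))))).of_le (by simp)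
  · rintro ⟨θ, φ, κ⟩ ⟨h2, h3, h4, h5, h6, h7, h8, h9⟩ ⟨α, β, κ, μ⟩
    simp only at h2 h3 h4 h5 h6 h7 h8 h9
    obtain ⟨f, hf, hf1, hf2, hf3⟩ := jet3 RX_ne h2 h4.symm (ne_tau_symm h5) h8 h9 (-α)
    obtain ⟨f', hf', hf1', hf2', hf3'⟩ := jet3 RX_ne h3 h6.symm (ne_tau_symm h7) h8.symm
      (ne_tau_symm h9) (-β)
    obtain ⟨g, hg, hg1, hg2, hg3⟩ := jet3 RZ_ne h2 h4.symm (ne_tau_symm h5) h8 h9 (-κ)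
    obtain ⟨g', hg', hg1', hg2', hg3'⟩ := jet3 RZ_ne h3 h6.symm (ne_tau_symm h7) h8.symm
      (ne_tau_symm h9) (-μ)
    obtain ⟨a, ha, ha'⟩ := hpq (f + f') (Submodule.add_mem _ hf hf') (g + g')
      (Submodule.add_mem _ hg hg')
    exact ⟨a, by ext <;> simp [lJ0_apply, ha, ha', hf1, hf2, hf3, hf1', hf2', hf3', hg1, hg2, hg3,
      hg1', hg2', hg3']⟩

theorem bad3 (pp qq : E →ₗ[ℝ] (R3 → ℝ))
    (hpq : ∀ f ∈ EE RX, ∀ g ∈ EE RZ, ∃ a, pp a = f ∧ qq a = g)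
    (c : ℝ → R3) (hc : ContDiff ℝ ∞ c) (hc0 : ∀ θ, deriv c θ ≠ 0)
    (hq : ∀ a, ContDiff ℝ ∞ (qq a)) (θ : ℝ) (hx : (deriv c θ).1 = 0) :
    dimH {a : E | J1 (zz + qq a) c θ = 0} ≤ (finrank ℝ E - 1 : ℕ) := by
  refine (dimH_mono ?_).trans (transv (X := Fin 0 → ℝ) (Y := ℝ) (by simp)
    univ (fun _ => lJ1 qq hq c hc θ) (fun _ => J1 zz c θ) ?_ ?_ ?_)
  · rintro a h
    change J1 (zz + qq a) c θ = 0 at h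
    rw [J1_add zz_smooth (hq a) hc] at h
    refine ⟨0, trivial, ?_⟩
    simp only [lJ1_apply]; linarith
  · intro a; exact contDiff_const
  · exact contDiff_const
  · intro _ _
    have hcd := (hc.differentiable (by simp) θ).hasDerivAt
    have : ∃ g ∈ EE RZ, J1 g c θ ≠ 0 := by
      by_cases hy : (deriv c θ).2.1 = 0
      · refine ⟨fun P => P.2.2, EZ_of_RZ (Submodule.subset_span (by simp)), ?_⟩
        have : J1 (fun P => P.2.2) c θ = (deriv c θ).2.2 := (hasDerivAt_z hcd).deriv
        rw [this]
        intro hz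
        exact hc0 θ (Prod.ext hx (Prod.ext hy hz))
      · refine ⟨fun P => P.2.1, EZ_of_RZ (Submodule.subset_span (by simp)), ?_⟩
        have : J1 (fun P => P.2.1) c θ = (deriv c θ).2.1 := (hasDerivAt_y hcd).deriv
        rwa [this]
    obtain ⟨g, hg, hg0⟩ := this
    obtain ⟨a, -, rfl⟩ := hpq 0 (Submodule.zero_mem _) g hg
    intro β
    refine ⟨(β / J1 (qq a) c θ) • a, ?_⟩
    rw [map_smul, lJ1_apply, smul_eq_mul]
    field_simp

theorem bad2' (pp qq : E →ₗ[ℝ] (R3 → ℝ))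
    (hpq : ∀ f ∈ EE RX, ∀ g ∈ EE RZ, ∃ a, pp a = f ∧ qq a = g)
    (c : ℝ → R3) (hc : ContDiff ℝ ∞ c) (hc0 : ∀ θ, deriv c θ ≠ 0)
    (hp : ∀ a, ContDiff ℝ ∞ (pp a)) (θ : ℝ) (hx : (deriv c θ).1 = 0)
    (hax : c θ ∈ xAxisSet) :
    dimH {a : E | J2 (xx + pp a) c θ = 0} ≤ (finrank ℝ E - 1 : ℕ) := by
  refine (dimH_mono ?_).trans (transv (X := Fin 0 → ℝ) (Y := ℝ) (by simp)
    univ (fun _ => lJ2 pp hp c hc θ) (fun _ => J2 xx c θ) ?_ ?_ ?_)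
  · rintro a h
    change J2 (xx + pp a) c θ = 0 at h
    rw [J2_add xx_smooth (hp a) hc] at h
    refine ⟨0, trivial, ?_⟩
    simp only [lJ2_apply]; linarith
  · intro a; exact contDiff_const
  · exact contDiff_const
  · intro _ _
    have hcd := (hc.differentiable (by simp) θ).hasDerivAt
    have sq : ∀ k : R3 → ℝ, ContDiff ℝ ∞ k → k (c θ) = 0 →
        J2 (fun P => k P * k P) c θ = 2 * (J1 k c θ) ^ 2 := by
      intro k hks ek
      have hkd : ∀ t, HasDerivAt (fun t => k (c t)) (J1 k c t) t := fun t =>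
        (diff_along hks hc t).hasDerivAt
      have e1 : J1 (fun P => k P * k P) c = fun t => J1 k c t * k (c t) + k (c t) * J1 k c t :=
        funext fun t => ((hkd t).mul (hkd t)).deriv
      rw [J2, e1]
      have h2 := ((J1_smooth hks hc).differentiable (by simp) θ).hasDerivAt
      have := (h2.mul (hkd θ)).add ((hkd θ).mul h2)
      refine this.deriv.trans ?_
      rw [ek]; ring
    have inE : ∀ f ∈ WW, f ∈ EE RX := by
      intro f hf
      have := EX_of_WW hf (WW_const 1)
      have e : f = f * (fun _ => 1) := by ext P; simp
      rw [e]; exact this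
    have : ∃ g ∈ EE RX, J2 g c θ ≠ 0 := by
      by_cases hy : (deriv c θ).2.1 = 0
      · refine ⟨_, inE _ WW_zz, ?_⟩
        have h1 : J1 (fun P => P.2.2) c θ = (deriv c θ).2.2 := (hasDerivAt_z hcd).deriv
        have h2 := sq (fun P => P.2.2) (by fun_prop) hax.2
        rw [h2, h1]
        have hz : (deriv c θ).2.2 ≠ 0 := fun hz => hc0 θ (Prod.ext hx (Prod.ext hy hz))
        positivity
      · refine ⟨_, inE _ WW_yy, ?_⟩
        have h1 : J1 (fun P => P.2.1) c θ = (deriv c θ).2.1 := (hasDerivAt_y hcd).deriv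
        have h2 := sq (fun P => P.2.1) (by fun_prop) hax.1
        rw [h2, h1]
        positivity
    obtain ⟨g, hg, hg0⟩ := this
    obtain ⟨a, rfl, -⟩ := hpq g hg 0 (Submodule.zero_mem _)
    intro β
    refine ⟨(β / J2 (pp a) c θ) • a, ?_⟩
    rw [map_smul, lJ2_apply, smul_eq_mul]
    field_simp

end bad
end

end part3

section part4
open scoped Manifold ContDiff Topology
open Set Filter Module

noncomputable section

/-- The genericity conditions obtained by the first perturbation. -/
structure Gen {n : ℕ} (γ : Fin n → ℝ → R3) (F G : R3 → ℝ) : Prop where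
  c1 : ∀ i θ, γ i θ ∉ xAxisSet → J1 F (γ i) θ = 0 → J1 G (γ i) θ ≠ 0
  c2 : ∀ i θ, γ i θ ∉ xAxisSet → J1 F (γ i) θ = 0 → J2 F (γ i) θ ≠ 0
  c2a : ∀ i θ, γ i θ ∈ xAxisSet → J2 F (γ i) θ ≠ 0
  c3 : ∀ i θ, γ i θ ∈ xAxisSet → J1 G (γ i) θ ≠ 0
  c4 : ∀ i θ, γ i θ ∉ xAxisSet → G (γ i θ) = 0 → J1 F (γ i) θ ≠ 0
  c5 : ∀ i θ, γ i θ ∉ xAxisSet → G (γ i θ) = 0 → J1 G (γ i) θ ≠ 0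
  c6 : ∀ i θ j φ, γ i θ ∉ xAxisSet → γ j φ ∈ xAxisSet → G (γ i θ) = 0 → F (γ i θ) ≠ F (γ j φ)
  c7 : ∀ i θ j φ, γ i θ ∉ xAxisSet → γ j φ ∉ xAxisSet → γ i θ ≠ γ j φ → γ i θ ≠ tau (γ j φ) →
    G (γ i θ) = 0 → G (γ j φ) = 0 → F (γ i θ) ≠ F (γ j φ)
  c8 : ∀ i θ j φ, γ i θ ∉ xAxisSet → γ i θ ≠ γ j φ → γ i θ ≠ tau (γ j φ) →
    F (γ i θ) = F (γ j φ) → G (γ i θ) = G (γ j φ) → J1 F (γ i) θ ≠ 0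
  c9 : ∀ i θ j φ k, γ i θ ∉ xAxisSet → γ i θ ≠ γ j φ → γ i θ ≠ tau (γ j φ) →
    F (γ i θ) = F (γ j φ) → G (γ i θ) = G (γ j φ) → J1 F (γ i) θ = k * J1 F (γ j) φ →
    J1 G (γ i) θ ≠ k * J1 G (γ j) φ
  c10 : ∀ i θ j φ k κ, γ j φ ∉ xAxisSet → γ k κ ∉ xAxisSet →
      γ i θ ≠ γ j φ → γ i θ ≠ tau (γ j φ) → γ i θ ≠ γ k κ → γ i θ ≠ tau (γ k κ) →
      γ j φ ≠ γ k κ → γ j φ ≠ tau (γ k κ) →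
      F (γ i θ) = F (γ j φ) → F (γ i θ) = F (γ k κ) → G (γ i θ) = G (γ j φ) →
      G (γ i θ) ≠ G (γ k κ)

theorem fderiv_bound {N : ℕ} (f : Fin N → R3 → ℝ) (hf : ∀ k, ContDiff ℝ ∞ (f k)) (R : ℝ) :
    ∃ M : ℝ, 0 ≤ M ∧ ∀ (a : Fin N → ℝ), ∀ P ∈ Metric.closedBall (0 : R3) R,
      ‖fderiv ℝ (∑ k, a k • f k) P‖ ≤ M * ‖a‖ := by
  have h1 : ∀ k, ∃ M : ℝ, 0 ≤ M ∧ ∀ P ∈ Metric.closedBall (0 : R3) R, ‖fderiv ℝ (f k) P‖ ≤ M := by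
    intro k
    obtain ⟨M, hM⟩ := (isCompact_closedBall (0 : R3) R).exists_bound_of_continuousOn
      ((hf k).continuous_fderiv (by simp)).continuousOn
    exact ⟨max M 0, le_max_right _ _, fun P hP => (hM P hP).trans (le_max_left _ _)⟩
  choose M hM0 hM using h1
  refine ⟨∑ k, M k, Finset.sum_nonneg fun k _ => hM0 k, fun a P hP => ?_⟩
  have h2 : fderiv ℝ (∑ k, a k • f k) P = ∑ k, a k • fderiv ℝ (f k) P := by
    rw [fderiv_sum]
    · refine Finset.sum_congr rfl fun k _ => ?_
      rw [fderiv_const_smul ((hf k).differentiable (by simp) P)]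
    · intro k _
      exact ((hf k).differentiable (by simp) P).const_smul (a k)
  rw [h2, Finset.sum_mul]
  refine (norm_sum_le _ _).trans (Finset.sum_le_sum fun k _ => ?_)
  rw [norm_smul, mul_comm]
  exact mul_le_mul (hM k P hP) (norm_le_pi_norm a k) (norm_nonneg _) (hM0 k)

theorem step1 {n : ℕ} (γ : Fin n → ℝ → R3) (hγ : ∀ i, ContDiff ℝ ∞ (γ i))
    (h0 : ∀ i θ, deriv (γ i) θ ≠ 0) (hcount : ∀ i, {θ | γ i θ ∈ xAxisSet}.Countable)
    (hx : ∀ i θ, γ i θ ∈ xAxisSet → (deriv (γ i) θ).1 = 0) (R : ℝ) :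
    ∃ p q : R3 → ℝ, ContDiff ℝ ∞ p ∧ ContDiff ℝ ∞ q ∧ (∀ P, p (tau P) = p P) ∧
      (∀ P, q (tau P) = - q P) ∧
      (∀ P ∈ Metric.closedBall (0 : R3) R, ‖fderiv ℝ p P‖ ≤ 1/2) ∧
      (∀ P ∈ Metric.closedBall (0 : R3) R, ‖fderiv ℝ q P‖ ≤ 1/2) ∧
      Gen γ (xx + p) (zz + q) := by
  have := EE_fin RX_fg
  have := EE_fin RZ_fg
  set bX := finBasis ℝ (EE RX) with hbX
  set bZ := finBasis ℝ (EE RZ) with hbZ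
  set fX : Fin (finrank ℝ (EE RX)) → R3 → ℝ := fun k => (bX k : R3 → ℝ) with hfX
  set fZ : Fin (finrank ℝ (EE RZ)) → R3 → ℝ := fun k => (bZ k : R3 → ℝ) with hfZ
  let E := (Fin (finrank ℝ (EE RX)) → ℝ) × (Fin (finrank ℝ (EE RZ)) → ℝ)
  let pp : E →ₗ[ℝ] (R3 → ℝ) :=
    (Fintype.linearCombination ℝ fX).comp (LinearMap.fst ℝ _ _)
  let qq : E →ₗ[ℝ] (R3 → ℝ) :=
    (Fintype.linearCombination ℝ fZ).comp (LinearMap.snd ℝ _ _)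
  have hppa : ∀ a : E, pp a = ∑ k, a.1 k • fX k := fun a => rfl
  have hqqa : ∀ a : E, qq a = ∑ k, a.2 k • fZ k := fun a => rfl
  have hpS : ∀ a, pp a ∈ SS 1 := fun a => by
    rw [hppa]; exact EE_le RX_le (Submodule.sum_mem _ fun k _ => Submodule.smul_mem _ _ (bX k).2)
  have hqS : ∀ a, qq a ∈ SS (-1) := fun a => by
    rw [hqqa]; exact EE_le RZ_le (Submodule.sum_mem _ fun k _ => Submodule.smul_mem _ _ (bZ k).2)
  have hp : ∀ a, ContDiff ℝ ∞ (pp a) := fun a => (hpS a).1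
  have hq : ∀ a, ContDiff ℝ ∞ (qq a) := fun a => (hqS a).1
  have hpq : ∀ f ∈ EE RX, ∀ g ∈ EE RZ, ∃ a, pp a = f ∧ qq a = g := by
    intro f hf g hg
    refine ⟨(bX.repr ⟨f, hf⟩, bZ.repr ⟨g, hg⟩), ?_, ?_⟩
    · rw [hppa]
      have := congrArg (Submodule.subtype _) (bX.sum_repr ⟨f, hf⟩)
      rw [map_sum] at this
      simpa using this
    · rw [hqqa]
      have := congrArg (Submodule.subtype _) (bZ.sum_repr ⟨g, hg⟩)
      rw [map_sum] at this
      simpa using this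
  obtain ⟨M1, hM10, hM1⟩ := fderiv_bound fX (fun k => (EE_le RX_le (bX k).2).1) R
  obtain ⟨M2, hM20, hM2⟩ := fderiv_bound fZ (fun k => (EE_le RZ_le (bZ k).2).1) R
  have hfin : 1 ≤ finrank ℝ E := by
    have h1 : (1 : R3 → ℝ) ∈ EE RX := by
      have := EX_of_WW (WW_const 1) (WW_const 1)
      convert this using 1; ext; simp
    have : Nontrivial E := by
      obtain ⟨a, ha, -⟩ := hpq 1 h1 0 (Submodule.zero_mem _)
      refine ⟨a, 0, ?_⟩
      rintro rfl
      rw [map_zero] at ha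
      have := congrFun ha 0
      simp at this
    exact Module.finrank_pos
  let N : ℕ := finrank ℝ E - 1
  let ax : Fin n → Set ℝ := fun i => {θ | γ i θ ∈ xAxisSet}
  have hU : ∀ {ι : Type} [Countable ι] (S : ι → Set E), (∀ i, dimH (S i) ≤ (N : ℕ)) →
      dimH (⋃ i, S i) ≤ (N : ℕ) := fun S hS => by
    rw [dimH_iUnion]; exact iSup_le hS
  have : ∀ i, Countable (ax i) := fun i => (hcount i).to_subtype
  have b1 := hU _ fun i => bad1 pp qq hp hq hpq (γ i) (hγ i) (h0 i)
  have b2 := hU _ fun i => bad2 pp qq hp hpq (γ i) (hγ i) (h0 i)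
  have b4 := hU _ fun i => bad4 pp qq hp hq hpq (γ i) (hγ i) (h0 i)
  have b5 := hU _ fun i => bad5 pp qq hq hpq (γ i) (hγ i) (h0 i)
  have b3 := hU (ι := Σ i, ax i) _ fun i =>
    bad3 pp qq hpq (γ i.1) (hγ i.1) (h0 i.1) hq i.2 (hx _ _ i.2.2)
  have b2a := hU (ι := Σ i, ax i) _ fun i =>
    bad2' pp qq hpq (γ i.1) (hγ i.1) (h0 i.1) hp i.2 (hx _ _ i.2.2) i.2.2
  have b6 := hU (ι := Fin n × Σ i, ax i) _ fun i =>
    bad6 pp qq hpq (γ i.1) (hγ i.1) (γ i.2.1 i.2.2) i.2.2.2 hp hq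
  have b7 := hU (ι := Fin n × Fin n) _ fun i =>
    bad7 pp qq hpq (γ i.1) (γ i.2) (hγ i.1) (hγ i.2) hp hq
  have b8 := hU (ι := Fin n × Fin n) _ fun i =>
    bad8 pp qq hp hq hpq (γ i.1) (γ i.2) (hγ i.1) (h0 i.1) (hγ i.2)
  have b9 := hU (ι := Fin n × Fin n) _ fun i =>
    bad9 pp qq hp hq hpq (γ i.1) (γ i.2) (hγ i.1) (h0 i.1) (hγ i.2)
  have b10 := hU (ι := Fin n × Fin n × Fin n) _ fun i =>
    bad10 pp qq hpq (γ i.1) (γ i.2.1) (γ i.2.2) (hγ i.1) (hγ i.2.1) (hγ i.2.2) hp hq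
  have hun : ∀ {S T : Set E}, dimH S ≤ (N : ℕ) → dimH T ≤ (N : ℕ) → dimH (S ∪ T) ≤ (N : ℕ) := by
    intro S T h1 h2; rw [dimH_union]; exact max_le h1 h2
  have ball := hun b1 (hun b2 (hun b4 (hun b5 (hun b3 (hun b2a (hun b6 (hun b7 (hun b8
    (hun b9 b10)))))))))
  have hdense := dense_compl_of_dimH_lt_finrank (ball.trans_lt (by
    have : N < finrank ℝ E := by omega
    exact_mod_cast this))
  obtain ⟨a, ha, hasmall⟩ := hdense.exists_mem_open
    (Metric.isOpen_ball (x := (0 : E)) (ε := 1 / (2 * (M1 + M2 + 1)))) ⟨0, by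
      simp; positivity⟩
  simp only [mem_compl_iff, mem_union, not_or, mem_iUnion, not_exists] at ha
  obtain ⟨a1, a2, a4, a5, a3, a2a, a6, a7, a8, a9, a10⟩ := ha
  have hM : ∀ M, 0 ≤ M → M ≤ M1 + M2 → M * ‖a‖ ≤ 1 / 2 := by
    intro M hM hle
    rw [mem_ball_zero_iff, lt_div_iff₀ (by positivity)] at hasmall
    nlinarith [norm_nonneg a, mul_le_mul_of_nonneg_right hle (norm_nonneg a)]
  refine ⟨pp a, qq a, hp a, hq a, fun P => by simpa using (hpS a).2 P,
    fun P => by simpa using (hqS a).2 P, fun P hP => ?_, fun P hP => ?_, ?_⟩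
  · rw [hppa]
    refine (hM1 a.1 P hP).trans ((mul_le_mul_of_nonneg_left (norm_fst_le a) hM10).trans
      (hM M1 hM10 (by linarith)))
  · rw [hqqa]
    refine (hM2 a.2 P hP).trans ((mul_le_mul_of_nonneg_left (norm_snd_le a) hM20).trans
      (hM M2 hM20 (by linarith)))
  · exact {
      c1 := fun i θ h1 h2 h3 => a1 i ⟨θ, h1, h2, h3⟩
      c2 := fun i θ h1 h2 h3 => a2 i ⟨θ, h1, h2, h3⟩
      c2a := fun i θ h1 h2 => a2a ⟨i, θ, h1⟩ h2
      c3 := fun i θ h1 h2 => a3 ⟨i, θ, h1⟩ h2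
      c4 := fun i θ h1 h2 h3 => a4 i ⟨θ, h1, h2, h3⟩
      c5 := fun i θ h1 h2 h3 => a5 i ⟨θ, h1, h2, h3⟩
      c6 := fun i θ j φ h1 h2 h3 h4 => a6 (i, ⟨j, φ, h2⟩) ⟨θ, h1, h3, h4⟩
      c7 := fun i θ j φ h1 h2 h3 h4 h5 h6 h7 => a7 (i, j) ⟨θ, φ, h1, h2, h3, h4, h5, h6, h7⟩
      c8 := fun i θ j φ h1 h2 h3 h4 h5 h6 => a8 (i, j) ⟨θ, φ, h1, h2, h3, h4, h5, h6⟩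
      c9 := fun i θ j φ k h1 h2 h3 h4 h5 h6 h7 =>
        a9 (i, j) ⟨θ, φ, k, h1, h2, h3, h4, h5, h6, h7⟩
      c10 := fun i θ j φ k κ h1 h2 h3 h4 h5 h6 h7 h8 h9 h10 h11 h12 =>
        a10 (i, j, k) ⟨θ, φ, κ, h1, h2, h3, h4, h5, h6, h7, h8, h9, h10, h11, h12⟩ }

end

end part4

section part5
open scoped Manifold ContDiff Topology
open Set Filter Module

noncomputable section

/-- The standard parametrisation of the circle. -/
def ee (θ : ℝ) : S1 := ⟨!₂[Real.cos θ, Real.sin θ], by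
  simp [EuclideanSpace.norm_eq, Fin.sum_univ_two]⟩

theorem ee_0 (θ : ℝ) : (ee θ).1 0 = Real.cos θ := rfl
theorem ee_1 (θ : ℝ) : (ee θ).1 1 = Real.sin θ := rfl

theorem S1_sq (s : S1) : s.1 0 ^ 2 + s.1 1 ^ 2 = 1 := by
  have := s.2
  rw [mem_sphere_zero_iff_norm, EuclideanSpace.norm_eq, Real.sqrt_eq_one] at this
  simpa [Fin.sum_univ_two] using this

theorem S1_ext {s t : S1} (h0 : s.1 0 = t.1 0) (h1 : s.1 1 = t.1 1) : s = t := by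
  apply Subtype.ext
  ext i
  fin_cases i
  · exact h0
  · exact h1

theorem ee_smooth : ContMDiff 𝓘(ℝ, ℝ) (𝓡 1) ∞ ee := by
  have h : ContMDiff 𝓘(ℝ, ℝ) 𝓘(ℝ, EuclideanSpace ℝ (Fin 2)) ∞
      (fun θ : ℝ => (!₂[Real.cos θ, Real.sin θ] : EuclideanSpace ℝ (Fin 2))) := by
    rw [contMDiff_iff_contDiff, contDiff_euclidean]
    intro i
    fin_cases i
    · exact Real.contDiff_cos
    · exact Real.contDiff_sin
  have : Fact (finrank ℝ (EuclideanSpace ℝ (Fin 2)) = 1 + 1) := ⟨by simp⟩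
  exact ContMDiff.codRestrict_sphere h _

theorem coord_smooth (i : Fin 2) : ContMDiff (𝓡 1) 𝓘(ℝ, ℝ) ∞ (fun s : S1 => s.1 i) := by
  have : Fact (finrank ℝ (EuclideanSpace ℝ (Fin 2)) = 1 + 1) := ⟨by simp⟩
  have h1 := contMDiff_coe_sphere (n := 1) (E := EuclideanSpace ℝ (Fin 2)) (m := ∞)
  have h2 : ContDiff ℝ ∞ (fun x : EuclideanSpace ℝ (Fin 2) => x i) := by
    fun_prop
  exact h2.contMDiff.comp h1

theorem ee_surj : Function.Surjective ee := by
  intro s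
  refine ⟨Complex.arg ⟨s.1 0, s.1 1⟩, ?_⟩
  have hn : ‖(⟨s.1 0, s.1 1⟩ : ℂ)‖ = 1 := by
    rw [← sq_eq_sq₀ (norm_nonneg _) zero_le_one, Complex.sq_norm, Complex.normSq_apply]
    have := S1_sq s
    simp only
    nlinarith
  have hz : (⟨s.1 0, s.1 1⟩ : ℂ) ≠ 0 := by rw [← norm_pos_iff, hn]; exact one_pos
  apply S1_ext
  · rw [ee_0, Complex.cos_arg hz, hn, div_one]
  · rw [ee_1, Complex.sin_arg, hn, div_one]

theorem ee_eq {θ φ : ℝ} (h : ee θ = ee φ) : ∃ k : ℤ, θ = φ + k * (2 * Real.pi) := by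
  have h0 : Real.cos θ = Real.cos φ := by rw [← ee_0, h, ee_0]
  have h1 : Real.sin θ = Real.sin φ := by rw [← ee_1, h, ee_1]
  have := Real.Angle.cos_sin_inj h0 h1
  obtain ⟨k, hk⟩ := Real.Angle.angle_eq_iff_two_pi_dvd_sub.1 this
  exact ⟨k, by linarith⟩

theorem ee_per (θ : ℝ) (k : ℤ) : ee (θ + k * (2 * Real.pi)) = ee θ := by
  apply S1_ext
  · simp [ee_0]
  · simp [ee_1]

/-- A local section of `ee` near `ee θ`. -/
def sig (θ : ℝ) (s : S1) : ℝ := θ + Real.arcsin (-Real.sin θ * s.1 0 + Real.cos θ * s.1 1)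

theorem sig_ee (θ : ℝ) : ∀ᶠ t in 𝓝 θ, sig θ (ee t) = t := by
  have : Ioo (θ - 1) (θ + 1) ∈ 𝓝 θ := Ioo_mem_nhds (by linarith) (by linarith)
  filter_upwards [this] with t ht
  have h := Real.pi_gt_three
  rw [sig, ee_0, ee_1]
  have : -Real.sin θ * Real.cos t + Real.cos θ * Real.sin t = Real.sin (t - θ) := by
    rw [Real.sin_sub]; ring
  rw [this, Real.arcsin_sin (by linarith [ht.1]) (by linarith [ht.2])]
  ring

theorem sig_ee_self (θ : ℝ) : sig θ (ee θ) = θ := (sig_ee θ).self_of_nhds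

theorem ee_sig (θ : ℝ) : ∀ᶠ s in 𝓝 (ee θ), ee (sig θ s) = s := by
  have hc : Continuous (fun s : S1 => Real.cos θ * s.1 0 + Real.sin θ * s.1 1) :=
    (continuous_const.mul (coord_smooth 0).continuous).add
      (continuous_const.mul (coord_smooth 1).continuous)
  have h1 : 0 < Real.cos θ * (ee θ).1 0 + Real.sin θ * (ee θ).1 1 := by
    rw [ee_0, ee_1]; nlinarith [Real.sin_sq_add_cos_sq θ]
  filter_upwards [hc.continuousAt.eventually (lt_mem_nhds h1)] with s hs
  have hq := S1_sq s
  have ht := Real.sin_sq_add_cos_sq θ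
  set w := -Real.sin θ * s.1 0 + Real.cos θ * s.1 1 with hw
  set u := Real.cos θ * s.1 0 + Real.sin θ * s.1 1 with hu
  have huw : u ^ 2 + w ^ 2 = 1 := by
    have : u ^ 2 + w ^ 2 = (Real.sin θ ^ 2 + Real.cos θ ^ 2) * (s.1 0 ^ 2 + s.1 1 ^ 2) := by
      rw [hu, hw]; ring
    rw [this, hq, ht, one_mul]
  have hcos : Real.cos (Real.arcsin w) = u := by
    rw [Real.cos_arcsin, Real.sqrt_eq_iff_mul_self_eq_of_pos hs]; linarith
  have hsin : Real.sin (Real.arcsin w) = w := Real.sin_arcsin (by nlinarith) (by nlinarith)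
  apply S1_ext
  · rw [ee_0, sig, ← hw, Real.cos_add, hcos, hsin, hu, hw]
    linear_combination s.1 0 * ht
  · rw [ee_1, sig, ← hw, Real.sin_add, hcos, hsin, hu, hw]
    linear_combination s.1 1 * ht

theorem sig_smooth (θ : ℝ) : ContMDiffAt (𝓡 1) 𝓘(ℝ, ℝ) ∞ (sig θ) (ee θ) := by
  have h1 : ContMDiff (𝓡 1) 𝓘(ℝ, ℝ × ℝ) ∞ (fun s : S1 => (s.1 0, s.1 1)) :=
    (coord_smooth 0).prodMk_space (coord_smooth 1)
  have h2 : ContDiffAt ℝ ∞ (fun x : ℝ × ℝ =>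
      θ + Real.arcsin (-Real.sin θ * x.1 + Real.cos θ * x.2)) (Real.cos θ, Real.sin θ) := by
    refine contDiffAt_const.add (ContDiffAt.comp (g := Real.arcsin) _ ?_ (by fun_prop))
    have : -Real.sin θ * Real.cos θ + Real.cos θ * Real.sin θ = 0 := by ring
    simp only [this]
    exact Real.contDiffAt_arcsin (by norm_num) (by norm_num)
  have h3 : ContMDiffAt 𝓘(ℝ, ℝ × ℝ) 𝓘(ℝ, ℝ) ∞ (fun x : ℝ × ℝ =>
      θ + Real.arcsin (-Real.sin θ * x.1 + Real.cos θ * x.2)) ((ee θ).1 0, (ee θ).1 1) :=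
    h2.contMDiffAt
  exact ContMDiffAt.comp (g := fun x : ℝ × ℝ =>
      θ + Real.arcsin (-Real.sin θ * x.1 + Real.cos θ * x.2))
      (f := fun s : S1 => (s.1 0, s.1 1)) (ee θ) h3 h1.contMDiffAt

theorem ee_map (θ : ℝ) : map ee (𝓝 θ) = 𝓝 (ee θ) := by
  apply le_antisymm ee_smooth.continuous.continuousAt
  have h : Tendsto (sig θ) (𝓝 (ee θ)) (𝓝 θ) := by
    have := (sig_smooth θ).continuousAt
    rwa [ContinuousAt, sig_ee_self] at this
  calc 𝓝 (ee θ) = map (ee ∘ sig θ) (𝓝 (ee θ)) := by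
        rw [Filter.map_congr (m₁ := ee ∘ sig θ) (m₂ := id) (ee_sig θ), Filter.map_id]
    _ = map ee (map (sig θ) (𝓝 (ee θ))) := by rw [map_map]
    _ ≤ map ee (𝓝 θ) := map_mono h

/-- The coefficient translating between tangent vectors of `S1` and real numbers. -/
def cc (θ : ℝ) : EuclideanSpace ℝ (Fin 1) →L[ℝ] ℝ := mfderiv (𝓡 1) 𝓘(ℝ, ℝ) (sig θ) (ee θ)

theorem mfd {V : Type*} [NormedAddCommGroup V] [NormedSpace ℝ V] {f : S1 → V} {θ : ℝ}
    (hf : MDifferentiableAt (𝓡 1) 𝓘(ℝ, V) f (ee θ)) (v : EuclideanSpace ℝ (Fin 1)) :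
    (mfderiv (𝓡 1) 𝓘(ℝ, V) f (ee θ) v : V) = cc θ v • deriv (fun t => f (ee t)) θ := by
  have hs : MDifferentiableAt (𝓡 1) 𝓘(ℝ, ℝ) (sig θ) (ee θ) :=
    (sig_smooth θ).mdifferentiableAt (by simp)
  have he : MDifferentiableAt 𝓘(ℝ, ℝ) (𝓡 1) ee (sig θ (ee θ)) :=
    (ee_smooth _).mdifferentiableAt (by simp)
  have hfe : MDifferentiableAt 𝓘(ℝ, ℝ) 𝓘(ℝ, V) (f ∘ ee) (sig θ (ee θ)) := by
    refine MDifferentiableAt.comp _ ?_ he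
    rwa [sig_ee_self]
  have h1 : f =ᶠ[𝓝 (ee θ)] (f ∘ ee) ∘ sig θ := by
    filter_upwards [ee_sig θ] with s hs
    simp [hs]
  rw [h1.mfderiv_eq, mfderiv_comp _ hfe hs]
  rw [sig_ee_self] at hfe ⊢
  have h2 : mfderiv 𝓘(ℝ, ℝ) 𝓘(ℝ, V) (f ∘ ee) θ = fderiv ℝ (f ∘ ee) θ := mfderiv_eq_fderiv
  rw [h2]
  change fderiv ℝ (f ∘ ee) θ (cc θ v) = _
  rw [fderiv_eq_smul_deriv]
  rfl

theorem cc_inj (θ : ℝ) : Function.Injective (cc θ) := by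
  have hs : MDifferentiableAt (𝓡 1) 𝓘(ℝ, ℝ) (sig θ) (ee θ) :=
    (sig_smooth θ).mdifferentiableAt (by simp)
  have he : MDifferentiableAt 𝓘(ℝ, ℝ) (𝓡 1) ee (sig θ (ee θ)) :=
    (ee_smooth _).mdifferentiableAt (by simp)
  have h1 : ee ∘ sig θ =ᶠ[𝓝 (ee θ)] id := ee_sig θ
  have h2 := h1.mfderiv_eq (I := 𝓡 1) (I' := 𝓡 1)
  rw [mfderiv_comp _ he hs, mfderiv_id] at h2
  intro v w hvw
  have h3 := DFunLike.congr_fun h2 v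
  have h4 := DFunLike.congr_fun h2 w
  have : (mfderiv 𝓘(ℝ, ℝ) (𝓡 1) ee (sig θ (ee θ))) (cc θ v) =
    (mfderiv 𝓘(ℝ, ℝ) (𝓡 1) ee (sig θ (ee θ))) (cc θ w) := by rw [hvw]
  exact h3.symm.trans (this.trans h4)

theorem cc_ne {θ : ℝ} {v : EuclideanSpace ℝ (Fin 1)} (hv : v ≠ 0) : cc θ v ≠ 0 := by
  rw [← map_zero (cc θ)]; exact fun h => hv (cc_inj θ h)

theorem mfd_inj {V : Type*} [NormedAddCommGroup V] [NormedSpace ℝ V] {f : S1 → V} {θ : ℝ}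
    (hf : MDifferentiableAt (𝓡 1) 𝓘(ℝ, V) f (ee θ)) :
    Function.Injective (mfderiv (𝓡 1) 𝓘(ℝ, V) f (ee θ)) ↔ deriv (fun t => f (ee t)) θ ≠ 0 := by
  constructor
  · intro h h0
    have h1 := mfd hf (EuclideanSpace.single 0 1)
    rw [h0, smul_zero] at h1
    have h2 : (EuclideanSpace.single 0 1 : EuclideanSpace ℝ (Fin 1)) = 0 := h (h1.trans
      (map_zero (mfderiv (𝓡 1) 𝓘(ℝ, V) f (ee θ))).symm)
    have := congrArg (fun x => x 0) h2
    simp at this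
  · intro h0
    refine (injective_iff_map_eq_zero' (mfderiv (𝓡 1) 𝓘(ℝ, V) f (ee θ))).2 fun v => ?_
    refine ⟨fun hv => ?_, fun hv => by rw [hv, map_zero]⟩
    by_contra hne
    have h1 := mfd hf v
    exact smul_ne_zero (cc_ne hne) h0 (h1.symm.trans hv)

end

end part5

section part6
open scoped Manifold ContDiff Topology
open Set Filter Module

noncomputable section

/-- The point set of a link. -/
def KK {n : ℕ} (L : Fin n → S1 → R3) : Set R3 := ⋃ i, range (L i)

/-- The components of a link as periodic curves. -/
def gam {n : ℕ} (L : Fin n → S1 → R3) (i : Fin n) (θ : ℝ) : R3 := L i (ee θ)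

/-- Properties of a family of curves parametrising a strongly invertible link. -/
structure Cur {n : ℕ} (γ : Fin n → ℝ → R3) (K : Set R3) : Prop where
  smooth : ∀ i, ContDiff ℝ ∞ (γ i)
  d0 : ∀ i θ, deriv (γ i) θ ≠ 0
  mem : ∀ i θ, γ i θ ∈ K
  surj : ∀ P ∈ K, ∃ i θ, γ i θ = P
  nb : ∀ i θ, 𝓝[K] (γ i θ) = map (γ i) (𝓝 θ)
  cpt : IsCompact K
  tauK : ∀ P ∈ K, tau P ∈ K
  axfin : (K ∩ xAxisSet).Finite

theorem gam_smooth {n : ℕ} {L : Fin n → S1 → R3}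
    (hs : ∀ i, ContMDiff (𝓡 1) 𝓘(ℝ, R3) (⊤ : ℕ∞) (L i)) (i : Fin n) : ContDiff ℝ ∞ (gam L i) :=
  contMDiff_iff_contDiff.1 ((hs i).comp ee_smooth)

theorem mdiff {n : ℕ} {L : Fin n → S1 → R3}
    (hs : ∀ i, ContMDiff (𝓡 1) 𝓘(ℝ, R3) (⊤ : ℕ∞) (L i)) (i : Fin n) (s : S1) :
    MDifferentiableAt (𝓡 1) 𝓘(ℝ, R3) (L i) s := (hs i).mdifferentiableAt (by simp)

theorem isLink_of {n : ℕ} {L : Fin n → S1 → R3}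
    (hs : ∀ i, ContMDiff (𝓡 1) 𝓘(ℝ, R3) (⊤ : ℕ∞) (L i))
    (hi : Function.Injective (fun q : Fin n × S1 => L q.1 q.2))
    (hd : ∀ i θ, deriv (gam L i) θ ≠ 0) : IsLink L := by
  refine ⟨hs, hi, fun i s => ?_⟩
  obtain ⟨θ, rfl⟩ := ee_surj s
  exact (mfd_inj (mdiff hs i _)).2 (hd i θ)

theorem gam_d0 {n : ℕ} {L : Fin n → S1 → R3} (hL : IsLink L) (i : Fin n) (θ : ℝ) :
    deriv (gam L i) θ ≠ 0 := (mfd_inj (mdiff hL.1 i _)).1 (hL.2.2 i (ee θ))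

theorem KK_eq {n : ℕ} (L : Fin n → S1 → R3) : KK L = range (fun q : Fin n × S1 => L q.1 q.2) := by
  ext P
  simp [KK]

theorem link_cont {n : ℕ} {L : Fin n → S1 → R3} (hL : IsLink L) :
    Continuous (fun q : Fin n × S1 => L q.1 q.2) :=
  continuous_prod_of_discrete_left.2 fun i => (hL.1 i).continuous

theorem KK_tau {n : ℕ} {L : Fin n → S1 → R3} (hL : IsStronglyInvertibleLink L) :
    ∀ P ∈ KK L, tau P ∈ KK L := by
  intro P hP
  obtain ⟨i, hi⟩ := mem_iUnion.1 hP
  refine mem_iUnion.2 ⟨i, ?_⟩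
  rw [← (hL.2 i).1]
  exact mem_image_of_mem _ hi

theorem cur_of {n : ℕ} {L : Fin n → S1 → R3} (hL : IsStronglyInvertibleLink L) :
    Cur (gam L) (KK L) where
  smooth := gam_smooth hL.1.1
  d0 := gam_d0 hL.1
  mem i θ := mem_iUnion.2 ⟨i, ee θ, rfl⟩
  surj P hP := by
    obtain ⟨i, s, rfl⟩ := mem_iUnion.1 hP
    obtain ⟨θ, rfl⟩ := ee_surj s
    exact ⟨i, θ, rfl⟩
  nb i θ := by
    have hc := (link_cont hL.1).isClosedEmbedding hL.1.2.1
    have h1 := hc.isInducing.map_nhds_eq (i, ee θ)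
    rw [KK_eq, gam]
    rw [← h1, nhds_prod_eq, nhds_discrete, pure_prod, ← ee_map, map_map, map_map]
    rfl
  cpt := by
    rw [KK_eq]; exact isCompact_range (link_cont hL.1)
  tauK := KK_tau hL
  axfin := by
    rw [KK, iUnion_inter]
    refine finite_iUnion fun i => finite_of_encard_eq_coe (k := 2) (hL.2 i).2

theorem gam_inj {n : ℕ} {L : Fin n → S1 → R3} (hL : IsLink L) {i j : Fin n} {θ φ : ℝ}
    (h : gam L i θ = gam L j φ) : i = j ∧ ee θ = ee φ := by
  have := @hL.2.1 (i, ee θ) (j, ee φ) h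
  simpa using this

theorem isSI_comp {n : ℕ} {L : Fin n → S1 → R3} (hL : IsStronglyInvertibleLink L) {Ψ : R3 → R3}
    (hΨ : ContDiff ℝ ∞ Ψ) (ht : ∀ P, Ψ (tau P) = tau (Ψ P)) (hi : InjOn Ψ (KK L))
    (hd : ∀ i θ, deriv (fun t => Ψ (gam L i t)) θ ≠ 0) :
    IsStronglyInvertibleLink (fun i s => Ψ (L i s)) := by
  have hm : ∀ i s, L i s ∈ KK L := fun i s => mem_iUnion.2 ⟨i, s, rfl⟩
  refine ⟨isLink_of (fun i => hΨ.contMDiff.comp (hL.1.1 i)) ?_ hd, fun i => ⟨?_, ?_⟩⟩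
  · intro q q' h
    exact hL.1.2.1 (hi (hm _ _) (hm _ _) h)
  · have h1 : range (fun s => Ψ (L i s)) = Ψ '' range (L i) := by rw [← range_comp]; rfl
    rw [h1, image_image]
    simp_rw [← ht]
    rw [← image_image Ψ tau, (hL.2 i).1]
  · have h1 : range (fun s => Ψ (L i s)) = Ψ '' range (L i) := by rw [← range_comp]; rfl
    have h2 : Ψ '' range (L i) ∩ xAxisSet = Ψ '' (range (L i) ∩ xAxisSet) := by
      ext Q
      constructor
      · rintro ⟨⟨P, hP, rfl⟩, hQ⟩
        refine ⟨P, ⟨hP, ?_⟩, rfl⟩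
        rw [axis_iff, ← ht] at hQ
        have hPK : P ∈ KK L := mem_iUnion.2 ⟨i, hP⟩
        exact axis_iff.2 (hi (KK_tau hL P hPK) hPK hQ)
      · rintro ⟨P, ⟨hP, hax⟩, rfl⟩
        refine ⟨⟨P, hP, rfl⟩, ?_⟩
        rw [axis_iff, ← ht, tau_axis hax]
    rw [h1, h2, InjOn.encard_image (hi.mono fun P hP => mem_iUnion.2 ⟨i, hP.1⟩), (hL.2 i).2]

/-- `m` is the slope of the projection of `K` at `c`. -/
def IsSlope (K : Set R3) (c : R3) (m : ℝ) : Prop :=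
  ∀ ε > 0, ∀ᶠ p : R3 × R3 in 𝓝[K] c ×ˢ 𝓝[K] c,
    |p.1.2.2 - p.2.2.2 - m * (p.1.1 - p.2.1)| ≤ ε * |p.1.1 - p.2.1|

/-- `K` is locally a graph over the `x`-axis at `c`. -/
def LocInj (K : Set R3) (c : R3) : Prop :=
  ∀ᶠ p : R3 × R3 in 𝓝[K] c ×ˢ 𝓝[K] c, p.1.1 = p.2.1 → p.1 = p.2

theorem tau_cont : Continuous tau := by unfold tau; fun_prop

theorem tau_tendsto {K : Set R3} (hK : ∀ P ∈ K, tau P ∈ K) (c : R3) :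
    Tendsto tau (𝓝[K] c) (𝓝[K] (tau c)) :=
  tau_cont.continuousWithinAt.tendsto_nhdsWithin fun P hP => hK P hP

theorem strict_le {f : ℝ → ℝ} {f' θ C : ℝ} (hf : HasStrictDerivAt f f' θ) (hC : |f'| < C) :
    ∀ᶠ p : ℝ × ℝ in 𝓝 θ ×ˢ 𝓝 θ, |f p.1 - f p.2| ≤ C * |p.1 - p.2| := by
  have h1 := hasStrictDerivAt_iff_hasStrictFDerivAt.1 hf |>.isLittleO.def (sub_pos.2 hC)
  rw [nhds_prod_eq] at h1
  filter_upwards [h1] with p hp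
  simp only [Real.norm_eq_abs, ContinuousLinearMap.toSpanSingleton_apply, smul_eq_mul] at hp
  have h2 : |f p.1 - f p.2| ≤ |f p.1 - f p.2 - (p.1 - p.2) * f'| + |(p.1 - p.2) * f'| := by
    have := abs_add_le (f p.1 - f p.2 - (p.1 - p.2) * f') ((p.1 - p.2) * f')
    simpa using this
  rw [abs_mul] at h2
  linarith

theorem strict_ge {f : ℝ → ℝ} {f' θ C : ℝ} (hf : HasStrictDerivAt f f' θ) (hC : C < |f'|) :
    ∀ᶠ p : ℝ × ℝ in 𝓝 θ ×ˢ 𝓝 θ, C * |p.1 - p.2| ≤ |f p.1 - f p.2| := by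
  have h1 := hasStrictDerivAt_iff_hasStrictFDerivAt.1 hf |>.isLittleO.def (sub_pos.2 hC)
  rw [nhds_prod_eq] at h1
  filter_upwards [h1] with p hp
  simp only [Real.norm_eq_abs, ContinuousLinearMap.toSpanSingleton_apply, smul_eq_mul] at hp
  have h2 : |(p.1 - p.2) * f'| ≤ |f p.1 - f p.2| + |f p.1 - f p.2 - (p.1 - p.2) * f'| := by
    have := abs_sub (f p.1 - f p.2) (f p.1 - f p.2 - (p.1 - p.2) * f')
    simpa using this
  rw [abs_mul] at h2
  linarith

section
variable {n : ℕ} {γ : Fin n → ℝ → R3} {K : Set R3} 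

theorem Cur.hasX (h : Cur γ K) (i : Fin n) (θ : ℝ) :
    HasStrictDerivAt (fun t => (γ i t).1) (deriv (γ i) θ).1 θ :=
  (hasStrictFDerivAt_fst.comp_hasStrictDerivAt θ
    (((h.smooth i).contDiffAt).hasStrictDerivAt (by simp)) :)

theorem Cur.hasY (h : Cur γ K) (i : Fin n) (θ : ℝ) :
    HasStrictDerivAt (fun t => (γ i t).2.1) (deriv (γ i) θ).2.1 θ := by
  have := (hasStrictFDerivAt_snd (𝕜 := ℝ) (p := γ i θ)).comp_hasStrictDerivAt θ
    (((h.smooth i).contDiffAt).hasStrictDerivAt (by simp))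
  exact (hasStrictFDerivAt_fst.comp_hasStrictDerivAt θ this :)

theorem Cur.hasZ (h : Cur γ K) (i : Fin n) (θ : ℝ) :
    HasStrictDerivAt (fun t => (γ i t).2.2) (deriv (γ i) θ).2.2 θ := by
  have := (hasStrictFDerivAt_snd (𝕜 := ℝ) (p := γ i θ)).comp_hasStrictDerivAt θ
    (((h.smooth i).contDiffAt).hasStrictDerivAt (by simp))
  exact (hasStrictFDerivAt_snd.comp_hasStrictDerivAt θ this :)

theorem Cur.nb2 (h : Cur γ K) (i : Fin n) (θ : ℝ) {p : R3 × R3 → Prop} :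
    (∀ᶠ P in 𝓝[K] (γ i θ) ×ˢ 𝓝[K] (γ i θ), p P) ↔
      ∀ᶠ a : ℝ × ℝ in 𝓝 θ ×ˢ 𝓝 θ, p (γ i a.1, γ i a.2) := by
  rw [h.nb, prod_map_map_eq, eventually_map]

theorem Cur.slope (h : Cur γ K) (i : Fin n) (θ : ℝ) (hX : (deriv (γ i) θ).1 ≠ 0) :
    IsSlope K (γ i θ) ((deriv (γ i) θ).2.2 / (deriv (γ i) θ).1) := by
  intro ε hε
  rw [h.nb2]
  set m := (deriv (γ i) θ).2.2 / (deriv (γ i) θ).1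
  have hpos := abs_pos.2 hX
  have h1 := strict_ge (h.hasX i θ) (half_lt_self hpos)
  have h2 : HasStrictDerivAt (fun t => (γ i t).2.2 - m * (γ i t).1) 0 θ := by
    have := (h.hasZ i θ).sub ((h.hasX i θ).const_mul m)
    have h0 : (deriv (γ i) θ).2.2 - m * (deriv (γ i) θ).1 = 0 := by
      rw [div_mul_cancel₀ _ hX, sub_self]
    rw [h0] at this
    exact this
  have h3 := strict_le h2 (C := ε * (|(deriv (γ i) θ).1| / 2)) (by rw [abs_zero]; positivity)
  filter_upwards [h1, h3] with a h1 h3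
  have : (γ i a.1).2.2 - (γ i a.2).2.2 - m * ((γ i a.1).1 - (γ i a.2).1) =
    (γ i a.1).2.2 - m * (γ i a.1).1 - ((γ i a.2).2.2 - m * (γ i a.2).1) := by ring
  rw [this]
  refine h3.trans ?_
  rw [mul_assoc]
  exact mul_le_mul_of_nonneg_left h1 hε.le

theorem Cur.locInj (h : Cur γ K) (i : Fin n) (θ : ℝ) (hX : (deriv (γ i) θ).1 ≠ 0) : LocInj K (γ i θ) := by
  rw [LocInj, h.nb2]
  have hpos := abs_pos.2 hX
  filter_upwards [strict_ge (h.hasX i θ) (half_lt_self hpos)] with a h1 h2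
  rw [h2, sub_self, abs_zero] at h1
  have h3 : |a.1 - a.2| ≤ 0 := by
    by_contra hc
    push Not at hc
    have := mul_pos (half_pos hpos) hc
    linarith
  have : a.1 = a.2 := by
    rw [← sub_eq_zero]; exact abs_nonpos_iff.1 h3
  simp only [this]

theorem Cur.slope_eq (h : Cur γ K) (i : Fin n) (θ : ℝ) {m : ℝ} (hm : IsSlope K (γ i θ) m) :
    (deriv (γ i) θ).2.2 = m * (deriv (γ i) θ).1 := by
  have h2 : HasDerivAt (fun t => (γ i t).2.2 - m * (γ i t).1)
      ((deriv (γ i) θ).2.2 - m * (deriv (γ i) θ).1) θ :=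
    (h.hasZ i θ).hasDerivAt.sub ((h.hasX i θ).hasDerivAt.const_mul m)
  have h3 := (h.hasX i θ).hasDerivAt
  have key : ∀ ε > 0, |(deriv (γ i) θ).2.2 - m * (deriv (γ i) θ).1| ≤ ε * |(deriv (γ i) θ).1| := by
    intro ε hε
    have h4 := (hasDerivAt_iff_tendsto_slope.1 h2).abs
    have h5 := ((hasDerivAt_iff_tendsto_slope.1 h3).abs).const_mul ε
    refine le_of_tendsto_of_tendsto h4 h5 ?_
    have h6 := (h.nb2 i θ).1 (hm ε hε)
    have h7 : Tendsto (fun t : ℝ => (t, θ)) (𝓝[≠] θ) (𝓝 θ ×ˢ 𝓝 θ) :=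
      (tendsto_id.mono_left nhdsWithin_le_nhds).prodMk tendsto_const_nhds
    filter_upwards [h7.eventually h6] with t ht
    rw [slope_def_field, slope_def_field, abs_div, abs_div, ← mul_div_assoc]
    refine div_le_div_of_nonneg_right ?_ (abs_nonneg _)
    have h0 : (γ i t).2.2 - m * (γ i t).1 - ((γ i θ).2.2 - m * (γ i θ).1) =
      (γ i t).2.2 - (γ i θ).2.2 - m * ((γ i t).1 - (γ i θ).1) := by ring
    rw [h0]
    exact ht
  have h8 : |(deriv (γ i) θ).2.2 - m * (deriv (γ i) θ).1| ≤ 0 := by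
    refine le_of_forall_pos_le_add fun δ hδ => ?_
    have := key (δ / (|(deriv (γ i) θ).1| + 1)) (by positivity)
    refine this.trans ?_
    rw [div_mul_eq_mul_div, zero_add, div_le_iff₀ (by positivity)]
    nlinarith [abs_nonneg (deriv (γ i) θ).1]
  linarith [abs_nonpos_iff.1 h8]

theorem Cur.slope_tau (h : Cur γ K) {c : R3} {m : ℝ} (hm : IsSlope K c m) : IsSlope K (tau c) (-m) := by
  intro ε hε
  have ht := tau_tendsto h.tauK (tau c)
  rw [tau_tau] at ht
  filter_upwards [(ht.prodMap ht).eventually (hm ε hε)] with p hp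
  simp only [Prod.map, tau] at hp
  rw [← abs_neg]
  have h0 : -(p.1.2.2 - p.2.2.2 - -m * (p.1.1 - p.2.1)) =
    -p.1.2.2 - -p.2.2.2 - m * (p.1.1 - p.2.1) := by ring
  rw [h0]
  exact hp

theorem Cur.hx (h : Cur γ K) (i : Fin n) (θ : ℝ) (ha : γ i θ ∈ xAxisSet) : (deriv (γ i) θ).1 = 0 := by
  by_contra hX
  have h1 := h.locInj i θ hX
  have ht := tau_tendsto h.tauK (γ i θ)
  rw [tau_axis ha] at ht
  have h2 : ∀ᶠ P in 𝓝[K] (γ i θ), tau P = P := by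
    filter_upwards [(ht.prodMk tendsto_id).eventually h1] with P hP
    exact hP rfl
  have h3 : ∀ᶠ P in 𝓝[K] (γ i θ), P = γ i θ := by
    have h4 : ((K ∩ xAxisSet) \ {γ i θ})ᶜ ∈ 𝓝 (γ i θ) :=
      (h.axfin.subset sdiff_subset).isClosed.isOpen_compl.mem_nhds (by simp)
    filter_upwards [h2, mem_nhdsWithin_of_mem_nhds h4, self_mem_nhdsWithin] with P h2 h4 h5
    by_contra hne
    exact h4 ⟨⟨h5, axis_iff.2 h2⟩, hne⟩
  rw [h.nb, eventually_map] at h3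
  have h5 : γ i =ᶠ[𝓝 θ] fun _ => γ i θ := h3
  exact h.d0 i θ (by rw [h5.deriv_eq]; simp)

end

theorem gam_count {n : ℕ} {L : Fin n → S1 → R3} (hL : IsStronglyInvertibleLink L) (i : Fin n) :
    {θ | gam L i θ ∈ xAxisSet}.Countable := by
  have h1 : {θ | gam L i θ ∈ xAxisSet} =
      ⋃ P ∈ KK L ∩ xAxisSet, {θ | gam L i θ = P} := by
    ext θ
    simp only [mem_iUnion, exists_prop, mem_ofPred_eq, exists_eq_right']
    exact ⟨fun h => ⟨(cur_of hL).mem i θ, h⟩, fun h => h.2⟩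
  rw [h1]
  refine (cur_of hL).axfin.countable.biUnion fun P _ => ?_
  by_cases hne : ∃ θ0, gam L i θ0 = P
  · obtain ⟨θ0, h0⟩ := hne
    refine (countable_range fun k : ℤ => θ0 + k * (2 * Real.pi)).mono fun θ hθ => ?_
    obtain ⟨k, hk⟩ := ee_eq (gam_inj hL.1 ((hθ : gam L i θ = P).trans h0.symm)).2
    exact ⟨k, hk.symm⟩
  · convert countable_empty
    ext θ
    simp only [mem_ofPred_eq, mem_empty_iff_false, iff_false]
    exact fun h => hne ⟨θ, h⟩

end

end part6

section part7
open scoped Manifold ContDiff Topology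
open Set Filter Module

noncomputable section

/-- A family of curves with a generic projection. -/
structure Good {n : ℕ} (γ : Fin n → ℝ → R3) (K : Set R3) : Prop extends Cur γ K where
  g1 : ∀ i θ, (deriv (γ i) θ).1 = 0 → (deriv (γ i) θ).2.2 ≠ 0
  g2 : ∀ i θ j φ, γ i θ ≠ γ j φ → (γ i θ).1 = (γ j φ).1 → (γ i θ).2.2 = (γ j φ).2.2 →
    (deriv (γ i) θ).1 ≠ 0 ∧
    (deriv (γ i) θ).2.2 * (deriv (γ j) φ).1 ≠ (deriv (γ i) θ).1 * (deriv (γ j) φ).2.2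
  g3 : ∀ P ∈ K, ∀ Q ∈ K, ∀ R ∈ K, P.1 = Q.1 → P.2.2 = Q.2.2 → P.1 = R.1 → P.2.2 = R.2.2 →
    P = Q ∨ P = R ∨ Q = R
  g4 : ∀ i θ, (deriv (γ i) θ).1 = 0 → deriv (fun t => (deriv (γ i) t).1) θ ≠ 0

/-- The perturbation vector field. -/
def VV (p q : R3 → ℝ) (P : R3) : R3 := (p P, 0, q P)

theorem VV_smooth {p q : R3 → ℝ} (hp : ContDiff ℝ ∞ p) (hq : ContDiff ℝ ∞ q) :
    ContDiff ℝ ∞ (VV p q) := by unfold VV; fun_prop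

theorem VV_tau {p q : R3 → ℝ} (hp : ∀ P, p (tau P) = p P) (hq : ∀ P, q (tau P) = - q P) (P : R3) :
    VV p q (tau P) = tau (VV p q P) := by
  rw [VV, hp, hq, VV, tau, neg_zero]

theorem tau_add_smul (t : ℝ) (P Q : R3) : tau (P + t • Q) = tau P + t • tau Q := by
  simp only [tau, Prod.fst_add, Prod.snd_add, Prod.smul_fst, Prod.smul_snd, smul_eq_mul,
    Prod.smul_mk, Prod.mk_add_mk, Prod.mk.injEq]
  refine ⟨trivial, by ring, by ring⟩

theorem SI_small {n : ℕ} {L : Fin n → S1 → R3} (hL : IsStronglyInvertibleLink L) {p q : R3 → ℝ}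
    (hp : ContDiff ℝ ∞ p) (hq : ContDiff ℝ ∞ q)
    (hpt : ∀ P, p (tau P) = p P) (hqt : ∀ P, q (tau P) = - q P) {R : ℝ}
    (hR : KK L ⊆ Metric.closedBall 0 R)
    (hp' : ∀ P ∈ Metric.closedBall (0 : R3) R, ‖fderiv ℝ p P‖ ≤ 1/2)
    (hq' : ∀ P ∈ Metric.closedBall (0 : R3) R, ‖fderiv ℝ q P‖ ≤ 1/2)
    (t : ℝ) (ht : t ∈ Icc (0 : ℝ) 1) :
    IsStronglyInvertibleLink (fun i s => L i s + t • VV p q (L i s)) := by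
  have hC := cur_of hL
  have hV := VV_smooth hp hq
  refine isSI_comp (Ψ := fun P => P + t • VV p q P) hL ?_ ?_ ?_ ?_
  · exact contDiff_id.add (contDiff_const_smul t |>.comp hV)
  · intro P
    rw [tau_add_smul, VV_tau hpt hqt]
  · intro P hP Q hQ hPQ
    have h1 : ‖p P - p Q‖ ≤ 1/2 * ‖P - Q‖ :=
      (convex_closedBall (0 : R3) R).norm_image_sub_le_of_norm_fderiv_le
        (fun x _ => hp.differentiable (by simp) x) hp' (hR hQ) (hR hP)
    have h2 : ‖q P - q Q‖ ≤ 1/2 * ‖P - Q‖ :=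
      (convex_closedBall (0 : R3) R).norm_image_sub_le_of_norm_fderiv_le
        (fun x _ => hq.differentiable (by simp) x) hq' (hR hQ) (hR hP)
    have h3 : ‖VV p q P - VV p q Q‖ ≤ 1/2 * ‖P - Q‖ := by
      simp only [VV, Prod.mk_sub_mk, Prod.norm_mk, sub_self, norm_zero]
      exact max_le h1 (max_le (by positivity) h2)
    have h4 : P - Q = - (t • (VV p q P - VV p q Q)) := by
      have : P - Q + t • (VV p q P - VV p q Q) = 0 := by
        rw [smul_sub]
        have h5 : P + t • VV p q P = Q + t • VV p q Q := hPQ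
        rw [← sub_eq_zero] at h5
        rw [← h5]; abel
      exact eq_neg_of_add_eq_zero_left this
    have h5 : ‖P - Q‖ ≤ 1/2 * ‖P - Q‖ := by
      conv_lhs => rw [h4, norm_neg, norm_smul, Real.norm_of_nonneg ht.1]
      refine (mul_le_mul_of_nonneg_right ht.2 (norm_nonneg _)).trans ?_
      rw [one_mul]; exact h3
    have h6 : ‖P - Q‖ ≤ 0 := by linarith
    exact sub_eq_zero.1 (norm_le_zero_iff.1 h6)
  · intro i θ h0
    have hg := ((hC.smooth i).differentiable (by simp) θ).hasDerivAt
    have hpd := ((hp.differentiable (by simp) (gam L i θ)).hasFDerivAt).comp_hasDerivAt θ hg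
    have hqd := ((hq.differentiable (by simp) (gam L i θ)).hasFDerivAt).comp_hasDerivAt θ hg
    have hVd : HasDerivAt (fun s => VV p q (gam L i s)) (fderiv ℝ p (gam L i θ) (deriv (gam L i) θ),
        0, fderiv ℝ q (gam L i θ) (deriv (gam L i) θ)) θ :=
      hpd.prodMk ((hasDerivAt_const θ (0 : ℝ)).prodMk hqd)
    have hall := (hg.add (hVd.const_smul t)).deriv
    have h1 : deriv (gam L i) θ + t • (fderiv ℝ p (gam L i θ) (deriv (gam L i) θ),
        0, fderiv ℝ q (gam L i θ) (deriv (gam L i) θ)) = 0 := hall.symm.trans h0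
    have hm := hR (hC.mem i θ)
    have h2 : ‖((fderiv ℝ p (gam L i θ) (deriv (gam L i) θ),
        0, fderiv ℝ q (gam L i θ) (deriv (gam L i) θ)) : R3)‖ ≤ 1/2 * ‖deriv (gam L i) θ‖ := by
      simp only [Prod.norm_mk, norm_zero]
      refine max_le ?_ (max_le (by positivity) ?_)
      · exact (fderiv ℝ p _).le_of_opNorm_le (hp' _ hm) _
      · exact (fderiv ℝ q _).le_of_opNorm_le (hq' _ hm) _
    have h3 := eq_neg_of_add_eq_zero_left h1
    have h5 : ‖deriv (gam L i) θ‖ ≤ 1/2 * ‖deriv (gam L i) θ‖ := by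
      conv_lhs => rw [h3, norm_neg, norm_smul, Real.norm_of_nonneg ht.1]
      refine (mul_le_mul_of_nonneg_right ht.2 (norm_nonneg _)).trans ?_
      rw [one_mul]; exact h2
    exact hC.d0 i θ (norm_le_zero_iff.1 (by linarith))

theorem deriv_fst_eq {c : ℝ → R3} (hc : ContDiff ℝ ∞ c) (θ : ℝ) :
    (deriv c θ).1 = deriv (fun t => (c t).1) θ :=
  (hasDerivAt_fst (hc.differentiable (by simp) θ).hasDerivAt).deriv.symm

theorem deriv_z_eq {c : ℝ → R3} (hc : ContDiff ℝ ∞ c) (θ : ℝ) :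
    (deriv c θ).2.2 = deriv (fun t => (c t).2.2) θ :=
  (hasDerivAt_z (hc.differentiable (by simp) θ).hasDerivAt).deriv.symm

theorem first_step {n : ℕ} {L : Fin n → S1 → R3} (hL : IsStronglyInvertibleLink L) :
    ∃ V : R3 → R3, ContDiff ℝ ∞ V ∧
      (∀ t ∈ Icc (0 : ℝ) 1, IsStronglyInvertibleLink (fun i s => L i s + t • V (L i s))) ∧
      Good (gam fun i s => L i s + V (L i s)) (KK fun i s => L i s + V (L i s)) := by
  have hC := cur_of hL
  obtain ⟨R, hR⟩ := hC.cpt.isBounded.subset_closedBall (0 : R3)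
  obtain ⟨p, q, hp, hq, hpt, hqt, hp', hq', hG⟩ :=
    step1 (gam L) hC.smooth hC.d0 (gam_count hL) hC.hx R
  have hSI := SI_small hL hp hq hpt hqt hR hp' hq'
  refine ⟨VV p q, VV_smooth hp hq, hSI, ?_⟩
  have h1 : IsStronglyInvertibleLink (fun i s => L i s + VV p q (L i s)) := by
    have := hSI 1 ⟨zero_le_one, le_rfl⟩
    simpa only [one_smul] using this
  have hC1 := cur_of h1
  set L1 : Fin n → S1 → R3 := fun i s => L i s + VV p q (L i s) with hL1
  set F := xx + p with hF
  set G := zz + q with hGG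
  have eX : ∀ i θ, (gam L1 i θ).1 = F (gam L i θ) := fun i θ => rfl
  have eZ : ∀ i θ, (gam L1 i θ).2.2 = G (gam L i θ) := fun i θ => rfl
  have eY : ∀ i θ, (gam L1 i θ).2.1 = (gam L i θ).2.1 := fun i θ => add_zero _
  have dX : ∀ i θ, (deriv (gam L1 i) θ).1 = J1 F (gam L i) θ :=
    fun i θ => deriv_fst_eq (hC1.smooth i) θ
  have dZ : ∀ i θ, (deriv (gam L1 i) θ).2.2 = J1 G (gam L i) θ :=
    fun i θ => deriv_z_eq (hC1.smooth i) θ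
  have dXX : ∀ i θ, deriv (fun t => (deriv (gam L1 i) t).1) θ = J2 F (gam L i) θ := by
    intro i θ
    simp only [dX]; rfl
  have Gtau : ∀ P, G (tau P) = - G P := by
    intro P
    have h0 : zz (tau P) = - zz P := rfl
    simp only [hGG, Pi.add_apply, hqt, h0]; ring
  have Gax : ∀ P ∈ xAxisSet, G P = 0 := by
    intro P hP
    have := Gtau P
    rw [tau_axis hP] at this
    linarith
  have ext3 : ∀ {P Q : R3}, P.1 = Q.1 → P.2.1 = Q.2.1 → P.2.2 = Q.2.2 → P = Q :=
    fun a b c => Prod.ext a (Prod.ext b c)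
  -- distinct points with the same projection are off the axis
  have off : ∀ i θ j φ, gam L1 i θ ≠ gam L1 j φ → F (gam L i θ) = F (gam L j φ) →
      G (gam L i θ) = G (gam L j φ) → gam L i θ ∉ xAxisSet ∧ gam L i θ ≠ gam L j φ := by
    intro i θ j φ hne hFe hGe
    refine ⟨fun ha => ?_, fun he => ?_⟩
    · by_cases hb : gam L j φ ∈ xAxisSet
      · apply hne
        refine ext3 (by rw [eX, eX, hFe]) ?_ (by rw [eZ, eZ, hGe])
        rw [eY, eY, ha.1, hb.1]
      · exact hG.c6 j φ i θ hb ha (by rw [← hGe, Gax _ ha]) hFe.symm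
    · exact hne (ext3 (by rw [eX, eX, hFe]) (by rw [eY, eY, he]) (by rw [eZ, eZ, hGe]))
  refine { hC1 with g1 := ?_, g2 := ?_, g3 := ?_, g4 := ?_ }
  · intro i θ h
    rw [dX] at h
    rw [dZ]
    by_cases ha : gam L i θ ∈ xAxisSet
    · exact hG.c3 i θ ha
    · exact hG.c1 i θ ha h
  · intro i θ j φ hne hX hZ
    rw [eX, eX] at hX
    rw [eZ, eZ] at hZ
    obtain ⟨oi, ne⟩ := off i θ j φ hne hX hZ
    obtain ⟨oj, -⟩ := off j φ i θ hne.symm hX.symm hZ.symm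
    by_cases ht : gam L i θ = tau (gam L j φ)
    · have hGi : G (gam L i θ) = 0 := by
        have := Gtau (gam L j φ)
        rw [← ht] at this
        linarith
      have hGj : G (gam L j φ) = 0 := by rw [← hZ, hGi]
      have hXi := hG.c4 i θ oi hGi
      have hXj := hG.c4 j φ oj hGj
      have hZj := hG.c5 j φ oj hGj
      refine ⟨by rw [dX]; exact hXi, ?_⟩
      have hs := hC1.slope_tau (hC1.slope j φ (by rw [dX]; exact hXj))
      have hPQ : tau (gam L1 j φ) = gam L1 i θ := by
        refine ext3 ?_ ?_ ?_
        · change (gam L1 j φ).1 = _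
          rw [eX, eX, hX]
        · change -(gam L1 j φ).2.1 = _
          rw [eY, eY, ht]; rfl
        · change -(gam L1 j φ).2.2 = _
          rw [eZ, eZ, hGi, hGj, neg_zero]
      rw [hPQ] at hs
      have he := hC1.slope_eq i θ hs
      rw [dX, dX, dZ, dZ] at he ⊢
      rw [he]
      intro hc
      have h3 : -(J1 G (gam L j) φ / J1 F (gam L j) φ) * J1 F (gam L i) θ * J1 F (gam L j) φ =
        - (J1 F (gam L i) θ * J1 G (gam L j) φ) := by field_simp
      rw [h3] at hc
      have : J1 F (gam L i) θ * J1 G (gam L j) φ = 0 := by linarith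
      exact mul_ne_zero hXi hZj this
    · have hXi := hG.c8 i θ j φ oi ne ht hX hZ
      have hXj := hG.c8 j φ i θ oj ne.symm (ne_tau_symm ht) hX.symm hZ.symm
      rw [dX, dX, dZ, dZ]
      refine ⟨hXi, fun hc => ?_⟩
      refine hG.c9 i θ j φ (J1 F (gam L i) θ / J1 F (gam L j) φ) oi ne ht hX hZ
        (by field_simp) ?_
      field_simp
      linarith
  · intro P hP Q hQ R hR h1 h2 h3 h4
    obtain ⟨i, θ, rfl⟩ := hC1.surj P hP
    obtain ⟨j, φ, rfl⟩ := hC1.surj Q hQ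
    obtain ⟨k, κ, rfl⟩ := hC1.surj R hR
    rw [eX, eX] at h1 h3
    rw [eZ, eZ] at h2 h4
    by_contra hcon
    push Not at hcon
    obtain ⟨n1, n2, n3⟩ := hcon
    obtain ⟨oi, m1⟩ := off i θ j φ n1 h1 h2
    obtain ⟨oj, m3⟩ := off j φ k κ n3 (h1.symm.trans h3) (h2.symm.trans h4)
    obtain ⟨ok, m2⟩ := off k κ i θ n2.symm h3.symm h4.symm
    have key : ∀ {P Q : R3}, P = tau Q → G P = G Q → G P = 0 := by
      intro P Q h h'
      have := Gtau Q
      rw [← h] at this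
      linarith
    by_cases t1 : gam L i θ = tau (gam L j φ)
    · have g := key t1 h2
      have : gam L i θ ≠ tau (gam L k κ) := by
        rw [t1]; intro h
        exact m3 (by rw [← tau_tau (gam L j φ), h, tau_tau])
      exact hG.c7 i θ k κ oi ok m2.symm this g (by rw [← h4, g]) h3
    by_cases t2 : gam L i θ = tau (gam L k κ)
    · have g := key t2 h4
      exact hG.c7 i θ j φ oi oj m1 t1 g (by rw [← h2, g]) h1
    by_cases t3 : gam L j φ = tau (gam L k κ)
    · have g := key t3 (h2.symm.trans h4)
      exact hG.c7 i θ j φ oi oj m1 t1 (by rw [h2, g]) g h1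
    exact hG.c10 i θ j φ k κ oj ok m1 t1 m2.symm t2 m3 t3 h1 h3 h2 h4
  · intro i θ h
    rw [dX] at h
    rw [dXX]
    by_cases ha : gam L i θ ∈ xAxisSet
    · exact hG.c2a i θ ha
    · exact hG.c2 i θ ha h

end

end part7

section part8
open scoped Manifold ContDiff Topology
open Set Filter Module

noncomputable section

theorem Cur.locInjZ {n : ℕ} {γ : Fin n → ℝ → R3} {K : Set R3} (h : Cur γ K)
    (i : Fin n) (θ : ℝ) (hX : (deriv (γ i) θ).2.2 ≠ 0) :
    ∀ᶠ p : R3 × R3 in 𝓝[K] (γ i θ) ×ˢ 𝓝[K] (γ i θ), p.1.2.2 = p.2.2.2 → p.1 = p.2 := by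
  rw [h.nb2]
  have hpos := abs_pos.2 hX
  filter_upwards [strict_ge (h.hasZ i θ) (half_lt_self hpos)] with a h1 h2
  rw [h2, sub_self, abs_zero] at h1
  have h3 : |a.1 - a.2| ≤ 0 := by
    by_contra hc
    push Not at hc
    have := mul_pos (half_pos hpos) hc
    linarith
  have : a.1 = a.2 := by
    rw [← sub_eq_zero]; exact abs_nonpos_iff.1 h3
  simp only [this]

/-- The crossing condition. -/
def IsX (P Q : R3) : Prop := P ≠ Q ∧ P.1 = Q.1 ∧ P.2.2 = Q.2.2

section
variable {n : ℕ} {γ : Fin n → ℝ → R3} {K : Set R3}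

theorem Good.nondeg (h : Good γ K) {P Q : R3} (hP : P ∈ K) (hQ : Q ∈ K) (hx : IsX P Q) :
    ∃ m m', m ≠ m' ∧ IsSlope K P m ∧ IsSlope K Q m' ∧ LocInj K P ∧ LocInj K Q := by
  obtain ⟨i, θ, rfl⟩ := h.surj P hP
  obtain ⟨j, φ, rfl⟩ := h.surj Q hQ
  obtain ⟨h1, h2⟩ := h.g2 i θ j φ hx.1 hx.2.1 hx.2.2
  obtain ⟨h3, -⟩ := h.g2 j φ i θ hx.1.symm hx.2.1.symm hx.2.2.symm
  refine ⟨_, _, ?_, h.slope i θ h1, h.slope j φ h3, h.locInj i θ h1, h.locInj j φ h3⟩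
  intro he
  rw [div_eq_div_iff h1 h3] at he
  exact h2 (he.trans (mul_comm _ _))

theorem slope_self {c : R3} {m ε : ℝ} (hc : c ∈ K) (hm : IsSlope K c m) (hε : 0 < ε) :
    ∀ᶠ P : R3 in 𝓝[K] c, |P.2.2 - c.2.2 - m * (P.1 - c.1)| ≤ ε * |P.1 - c.1| := by
  have h1 : Tendsto (fun P : R3 => (P, c)) (𝓝[K] c) (𝓝[K] c ×ˢ 𝓝[K] c) :=
    tendsto_id.prodMk (tendsto_const_pure.mono_right (pure_le_nhdsWithin hc))
  exact h1.eventually (hm ε hε)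

theorem locInj_self {c : R3} (hc : c ∈ K) (hm : LocInj K c) :
    ∀ᶠ P : R3 in 𝓝[K] c, P.1 = c.1 → P = c := by
  have h1 : Tendsto (fun P : R3 => (P, c)) (𝓝[K] c) (𝓝[K] c ×ˢ 𝓝[K] c) :=
    tendsto_id.prodMk (tendsto_const_pure.mono_right (pure_le_nhdsWithin hc))
  exact h1.eventually hm

theorem Good.isolated (h : Good γ K) {P Q : R3} (hP : P ∈ K) (hQ : Q ∈ K)
    (hx : P.1 = Q.1) (hz : P.2.2 = Q.2.2) :
    ∀ᶠ p : R3 × R3 in 𝓝[K] P ×ˢ 𝓝[K] Q, IsX p.1 p.2 → p = (P, Q) := by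
  by_cases hne : P = Q
  · subst hne
    obtain ⟨i, θ, rfl⟩ := h.surj P hP
    by_cases h0 : (deriv (γ i) θ).1 = 0
    · filter_upwards [h.locInjZ i θ (h.g1 i θ h0)] with p hp hX
      exact absurd (hp hX.2.2) hX.1
    · filter_upwards [h.locInj i θ h0] with p hp hX
      exact absurd (hp hX.2.1) hX.1
  · obtain ⟨m, m', hmm, s1, s2, l1, l2⟩ := h.nondeg hP hQ ⟨hne, hx, hz⟩
    have hε : 0 < |m - m'| / 4 := by
      have := abs_pos.2 (sub_ne_zero.2 hmm); positivity
    have e1 := (slope_self hP s1 hε).and (locInj_self hP l1)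
    have e2 := (slope_self hQ s2 hε).and (locInj_self hQ l2)
    filter_upwards [e1.prod_mk e2] with p hp hX
    obtain ⟨⟨a1, a2⟩, b1, b2⟩ := hp
    have hX0 : p.1.1 - P.1 = 0 := by
      by_contra hne
      have hpos := abs_pos.2 hne
      rw [← hX.2.1, ← hX.2.2, ← hx, ← hz] at b1
      have : (m - m') * (p.1.1 - P.1) = (p.1.2.2 - P.2.2 - m' * (p.1.1 - P.1)) -
        (p.1.2.2 - P.2.2 - m * (p.1.1 - P.1)) := by ring
      have h5 : |m - m'| * |p.1.1 - P.1| ≤ |m - m'| / 4 * |p.1.1 - P.1| +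
          |m - m'| / 4 * |p.1.1 - P.1| := by
        rw [← abs_mul, this]
        exact (abs_sub _ _).trans (add_le_add b1 a1)
      nlinarith [mul_pos (abs_pos.2 (sub_ne_zero.2 hmm)) hpos]
    have h6 := a2 (by linarith)
    have h7 := b2 (by rw [← hX.2.1, ← hx]; linarith)
    exact Prod.ext h6 h7

theorem Good.finiteX (h : Good γ K) : {p : R3 × R3 | p.1 ∈ K ∧ p.2 ∈ K ∧ IsX p.1 p.2}.Finite := by
  by_contra hinf
  obtain ⟨⟨P, Q⟩, hPQ, hacc⟩ := Set.Infinite.exists_accPt_of_subset_isCompact hinf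
    (h.cpt.prod h.cpt) (fun p hp => ⟨hp.1, hp.2.1⟩)
  have hcl : IsClosed {p : R3 × R3 | p.1.1 = p.2.1 ∧ p.1.2.2 = p.2.2.2} := by
    apply IsClosed.inter
    · exact isClosed_eq (by fun_prop) (by fun_prop)
    · exact isClosed_eq (by fun_prop) (by fun_prop)
  rw [accPt_iff_frequently] at hacc
  have hmem : (P, Q) ∈ {p : R3 × R3 | p.1.1 = p.2.1 ∧ p.1.2.2 = p.2.2.2} := by
    refine hcl.mem_of_frequently_of_tendsto (hacc.mono fun p hp => ?_) tendsto_id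
    exact hp.2.2.2.2
  have hiso := h.isolated hPQ.1 hPQ.2 hmem.1 hmem.2
  rw [← nhdsWithin_prod_eq, eventually_nhdsWithin_iff] at hiso
  obtain ⟨p, hp, hp'⟩ := (hacc.and_eventually hiso).exists
  exact hp.1 (hp' ⟨hp.2.1, hp.2.2.1⟩ hp.2.2.2)

/-- Combinatorial data of the crossings. -/
structure CD (K : Set R3) (C : Finset R3) (st : R3 → R3) (m ep : R3 → ℝ) : Prop where
  mem : ∀ c ∈ C, c ∈ K
  st_mem : ∀ c ∈ C, st c ∈ C
  st_ne : ∀ c ∈ C, IsX c (st c)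
  cross : ∀ P ∈ K, ∀ Q ∈ K, IsX P Q → P ∈ C ∧ Q = st P
  tau_mem : ∀ c ∈ C, tau c ∈ C
  m_tau : ∀ c ∈ C, m (tau c) = - m c
  ep_tau : ∀ c ∈ C, ep (tau c) = - ep c
  ep_st : ∀ c ∈ C, ep (st c) = - ep c
  ep_m : ∀ c ∈ C, ep c = 1 ∧ m (st c) < m c ∨ ep c = -1 ∧ m c < m (st c)
  slope : ∀ c ∈ C, IsSlope K c (m c)
  inj : ∀ c ∈ C, LocInj K c

theorem IsX.symm {P Q : R3} (h : IsX P Q) : IsX Q P := ⟨h.1.symm, h.2.1.symm, h.2.2.symm⟩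

theorem IsX.tau {P Q : R3} (h : IsX P Q) : IsX (tau P) (tau Q) := by
  refine ⟨fun h' => h.1 ?_, h.2.1, ?_⟩
  · rw [← tau_tau P, h', tau_tau]
  · change -P.2.2 = -Q.2.2
    rw [h.2.2]

theorem Good.cd (h : Good γ K) : ∃ C st m ep, CD K C st m ep := by
  classical
  let C : Finset R3 := h.finiteX.toFinset.image Prod.fst
  have hC : ∀ c, c ∈ C ↔ c ∈ K ∧ ∃ Q ∈ K, IsX c Q := by
    intro c
    simp only [C, Finset.mem_image, Set.Finite.mem_toFinset, mem_ofPred_eq]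
    constructor
    · rintro ⟨⟨a, b⟩, ⟨h1, h2, h3⟩, rfl⟩
      exact ⟨h1, b, h2, h3⟩
    · rintro ⟨h1, Q, h2, h3⟩
      exact ⟨(c, Q), ⟨h1, h2, h3⟩, rfl⟩
  have h1 : ∀ c, ∃ Q m, c ∈ C → Q ∈ K ∧ IsX c Q ∧ IsSlope K c m := by
    intro c
    by_cases hc : c ∈ C
    · obtain ⟨hcK, Q, hQ, hX⟩ := (hC c).1 hc
      obtain ⟨m, m', -, s, -⟩ := h.nondeg hcK hQ hX
      exact ⟨Q, m, fun _ => ⟨hQ, hX, s⟩⟩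
    · exact ⟨0, 0, fun h => absurd h hc⟩
  choose st m hst using h1
  have huniq : ∀ c ∈ C, ∀ Q ∈ K, IsX c Q → Q = st c := by
    intro c hc Q hQ hX
    obtain ⟨a, b, -⟩ := hst c hc
    rcases h.g3 c ((hC c).1 hc).1 Q hQ (st c) a hX.2.1 hX.2.2 b.2.1 b.2.2 with h | h | h
    · exact absurd h hX.1
    · exact absurd h b.1
    · exact h
  have hXne : ∀ i θ, γ i θ ∈ C → (deriv (γ i) θ).1 ≠ 0 := by
    intro i θ hc
    obtain ⟨hcK, Q, hQ, hX⟩ := (hC _).1 hc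
    obtain ⟨j, φ, rfl⟩ := h.surj Q hQ
    exact (h.g2 i θ j φ hX.1 hX.2.1 hX.2.2).1
  have muniq : ∀ c ∈ C, ∀ k, IsSlope K c k → k = m c := by
    intro c hc k hk
    obtain ⟨i, θ, rfl⟩ := h.surj c ((hC c).1 hc).1
    have e1 := h.slope_eq i θ hk
    have e2 := h.slope_eq i θ (hst _ hc).2.2
    exact mul_right_cancel₀ (hXne i θ hc) (e1.symm.trans e2)
  have stm : ∀ c ∈ C, st c ∈ C := fun c hc => (hC _).2
    ⟨(hst c hc).1, c, ((hC c).1 hc).1, (hst c hc).2.1.symm⟩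
  have stst : ∀ c ∈ C, st (st c) = c := fun c hc =>
    (huniq (st c) (stm c hc) c ((hC c).1 hc).1 (hst c hc).2.1.symm).symm
  have taum : ∀ c ∈ C, tau c ∈ C := by
    intro c hc
    exact (hC _).2 ⟨h.tauK c ((hC c).1 hc).1, tau (st c), h.tauK _ (hst c hc).1, (hst c hc).2.1.tau⟩
  have taust : ∀ c ∈ C, st (tau c) = tau (st c) := fun c hc =>
    (huniq (tau c) (taum c hc) _ (h.tauK _ (hst c hc).1) (hst c hc).2.1.tau).symm
  have mtau : ∀ c ∈ C, m (tau c) = - m c := fun c hc =>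
    (muniq (tau c) (taum c hc) _ (h.slope_tau (hst c hc).2.2)).symm
  have mne : ∀ c ∈ C, m c ≠ m (st c) := by
    intro c hc
    obtain ⟨k, k', hk, s1, s2, -⟩ := h.nondeg ((hC c).1 hc).1 (hst c hc).1 (hst c hc).2.1
    rwa [← muniq c hc k s1, ← muniq _ (stm c hc) k' s2]
  let ep : R3 → ℝ := fun c => if m (st c) < m c then 1 else -1
  refine ⟨C, st, m, ep, fun c hc => ((hC c).1 hc).1, stm, fun c hc => (hst c hc).2.1, ?_, taum, mtau,
    ?_, ?_, ?_, fun c hc => (hst c hc).2.2, ?_⟩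
  · intro P hP Q hQ hX
    have hPC := (hC P).2 ⟨hP, Q, hQ, hX⟩
    exact ⟨hPC, huniq P hPC Q hQ hX⟩
  · intro c hc
    simp only [ep, taust c hc, mtau c hc, mtau _ (stm c hc), neg_lt_neg_iff]
    rcases lt_or_gt_of_ne (mne c hc) with h | h
    · rw [if_pos h, if_neg h.not_gt, neg_neg]
    · rw [if_neg h.not_gt, if_pos h]
  · intro c hc
    simp only [ep, stst c hc]
    rcases lt_or_gt_of_ne (mne c hc) with h | h
    · rw [if_pos h, if_neg h.not_gt, neg_neg]
    · rw [if_neg h.not_gt, if_pos h]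
  · intro c hc
    simp only [ep]
    rcases lt_or_gt_of_ne (mne c hc) with h | h
    · right; exact ⟨if_neg h.not_gt, h⟩
    · left; exact ⟨if_pos h, h⟩
  · intro c hc
    obtain ⟨k, k', hk, s1, s2, l, -⟩ := h.nondeg ((hC c).1 hc).1 (hst c hc).1 (hst c hc).2.1
    exact l

end
end

end part8

section part9
open scoped Manifold ContDiff Topology
open Set Filter Module

noncomputable section

/-- An even bump function, `1` for `|t| ≤ r` and `0` for `2 r ≤ |t|`. -/
def bp (r t : ℝ) : ℝ := Real.smoothTransition (2 - (t / r) ^ 2)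

theorem bp_smooth (r : ℝ) : ContDiff ℝ ∞ (bp r) := by
  unfold bp
  exact Real.smoothTransition.contDiff.comp (by fun_prop)

theorem bp_neg (r t : ℝ) : bp r (-t) = bp r t := by
  unfold bp
  rw [neg_div, neg_sq]

theorem bp_one {r t : ℝ} (hr : 0 < r) (ht : |t| ≤ r) : bp r t = 1 := by
  unfold bp
  apply Real.smoothTransition.one_of_one_le
  have h1 : |t / r| ≤ 1 := by
    rw [abs_div, abs_of_pos hr]
    exact (div_le_one hr).2 ht
  have h2 := (sq_le_one_iff_abs_le_one _).2 h1
  linarith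

theorem bp_zero {r t : ℝ} (hr : 0 < r) (ht : 2 * r ≤ |t|) : bp r t = 0 := by
  unfold bp
  apply Real.smoothTransition.zero_of_nonpos
  have h1 : 2 ≤ |t / r| := by
    rw [abs_div, abs_of_pos hr]
    exact (le_div_iff₀ hr).2 ht
  have h2 := sq_abs (t / r)
  nlinarith

theorem bp_nonneg (r t : ℝ) : 0 ≤ bp r t := Real.smoothTransition.nonneg _
theorem bp_le (r t : ℝ) : bp r t ≤ 1 := Real.smoothTransition.le_one _

theorem mem_cb {P c : R3} {r : ℝ} : P ∈ Metric.closedBall c r ↔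
    |P.1 - c.1| ≤ r ∧ |P.2.1 - c.2.1| ≤ r ∧ |P.2.2 - c.2.2| ≤ r := by
  simp only [Metric.mem_closedBall, Prod.dist_eq, Real.dist_eq, max_le_iff]

theorem mem_bb {P c : R3} {r : ℝ} : P ∈ Metric.ball c r ↔
    |P.1 - c.1| < r ∧ |P.2.1 - c.2.1| < r ∧ |P.2.2 - c.2.2| < r := by
  simp only [Metric.mem_ball, Prod.dist_eq, Real.dist_eq, max_lt_iff]

/-- The cut-off function used for one crossing point. -/
def hh (δ X : ℝ) : ℝ := X * bp δ X

/-- The correction function. -/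
def qq (C : Finset R3) (k : R3 → ℝ) (ρ δ : ℝ) (P : R3) : ℝ :=
  ∑ c ∈ C, k c * hh δ (P.1 - c.1) * (bp ρ (P.2.1 - c.2.1) * bp ρ (P.2.2 - c.2.2))

theorem qq_smooth (C : Finset R3) (k : R3 → ℝ) (ρ δ : ℝ) : ContDiff ℝ ∞ (qq C k ρ δ) := by
  unfold qq hh
  have h1 := bp_smooth ρ
  have h2 := bp_smooth δ
  refine ContDiff.sum fun c _ => ?_
  fun_prop

theorem qq_tau {C : Finset R3} {k : R3 → ℝ} (hC : ∀ c ∈ C, tau c ∈ C)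
    (hk : ∀ c ∈ C, k (tau c) = - k c) (ρ δ : ℝ) (P : R3) :
    qq C k ρ δ (tau P) = - qq C k ρ δ P := by
  unfold qq
  rw [← Finset.sum_neg_distrib]
  refine Finset.sum_nbij' tau tau hC hC (fun c _ => tau_tau c) (fun c _ => tau_tau c) ?_
  intro c hc
  rw [hk c hc]
  have e1 : (tau P).1 = P.1 := rfl
  have e2 : (tau c).1 = c.1 := rfl
  have e3 : (tau P).2.1 - c.2.1 = -(P.2.1 - (tau c).2.1) := by
    change -P.2.1 - c.2.1 = -(P.2.1 - -c.2.1); ring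
  have e4 : (tau P).2.2 - c.2.2 = -(P.2.2 - (tau c).2.2) := by
    change -P.2.2 - c.2.2 = -(P.2.2 - -c.2.2); ring
  rw [e1, e2, e3, e4, bp_neg, bp_neg]
  ring

/-- Parameters for the correction. -/
structure Par (K : Set R3) (C : Finset R3) (st : R3 → R3) (m : R3 → ℝ) (A ε ρ δ : ℝ) : Prop where
  ε0 : 0 < ε
  ρ0 : 0 < ρ
  δ0 : 0 < δ
  δρ : δ ≤ ρ
  gap : ∀ c ∈ C, 2 * ε < |m c - m (st c)|
  gap1 : 2 * ε < 2
  disj : ∀ c ∈ C, ∀ d ∈ C, c ≠ d → ∀ P ∈ Metric.closedBall c (3 * ρ), P ∉ Metric.closedBall d (3 * ρ)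
  sl : ∀ c ∈ C, ∀ P ∈ K, ∀ Q ∈ K, P ∈ Metric.closedBall c (3 * ρ) → Q ∈ Metric.closedBall c (3 * ρ) →
    |P.2.2 - Q.2.2 - m c * (P.1 - Q.1)| ≤ ε * |P.1 - Q.1|
  inj : ∀ c ∈ C, ∀ P ∈ K, ∀ Q ∈ K, P ∈ Metric.closedBall c (3 * ρ) → Q ∈ Metric.closedBall c (3 * ρ) →
    P.1 = Q.1 → P = Q
  near : ∀ c ∈ C, ∀ P ∈ K, P ∈ Metric.closedBall c (3 * ρ) → |P.1 - c.1| < 2 * δ →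
    P ∈ Metric.ball c ρ
  far : ∀ c ∈ C, ∀ P ∈ K, |P.1 - c.1| < 2 * δ → |P.2.2 - c.2.2| < A * δ →
    P ∈ Metric.ball c ρ ∨ P ∈ Metric.ball (st c) ρ

theorem ev_small {a : ℝ} (ha : 0 < a) : ∀ᶠ x : ℝ in 𝓝[>] 0, x < a :=
  eventually_nhdsWithin_of_eventually_nhds (eventually_lt_nhds ha)

theorem ev_mul {a : ℝ} (A : ℝ) (ha : 0 < a) : ∀ᶠ x : ℝ in 𝓝[>] 0, A * x < a := by
  apply eventually_nhdsWithin_of_eventually_nhds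
  have : Tendsto (fun x : ℝ => A * x) (𝓝 0) (𝓝 0) := by
    have h : Continuous fun x : ℝ => A * x := by fun_prop
    simpa using h.tendsto 0
  exact this.eventually (eventually_lt_nhds ha)

theorem ev_pair {K : Set R3} {c : R3} {p : R3 × R3 → Prop}
    (h : ∀ᶠ x in 𝓝[K] c ×ˢ 𝓝[K] c, p x) : ∀ᶠ ρ : ℝ in 𝓝[>] 0, ∀ P ∈ K, ∀ Q ∈ K,
      P ∈ Metric.closedBall c (3 * ρ) → Q ∈ Metric.closedBall c (3 * ρ) → p (P, Q) := by
  obtain ⟨t, ht, htp⟩ := eventually_prod_self_iff'.1 h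
  obtain ⟨r, hr, hrt⟩ := Metric.mem_nhdsWithin_iff.1 ht
  filter_upwards [ev_mul 3 hr] with ρ hρ P hP Q hQ h1 h2
  exact htp P (hrt ⟨Metric.closedBall_subset_ball hρ h1, hP⟩) Q
    (hrt ⟨Metric.closedBall_subset_ball hρ h2, hQ⟩)

theorem CD.par {K : Set R3} {C : Finset R3} {st : R3 → R3} {m ep : R3 → ℝ} (h : CD K C st m ep)
    (hK : IsCompact K) (A : ℝ → ℝ) : ∃ ε ρ δ, Par K C st m (A ε) ε ρ δ := by
  have hm : ∀ c ∈ C, 0 < |m c - m (st c)| := by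
    intro c hc
    rw [abs_pos, sub_ne_zero]
    rcases h.ep_m c hc with h | h
    · exact h.2.ne'
    · exact h.2.ne
  obtain ⟨ε, he1, he2, he3⟩ : ∃ ε : ℝ, (∀ c ∈ C, 2 * ε < |m c - m (st c)|) ∧ 2 * ε < 2 ∧ 0 < ε := by
    have h1 : ∀ᶠ ε : ℝ in 𝓝[>] 0, ∀ c ∈ C, 2 * ε < |m c - m (st c)| :=
      (eventually_all_finset C).2 fun c hc => ev_mul 2 (hm c hc)
    exact (h1.and ((ev_mul 2 two_pos).and self_mem_nhdsWithin)).exists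
  obtain ⟨ρ, hr1, hr2, hr3, hr4⟩ : ∃ ρ : ℝ, (∀ c ∈ C, ∀ d ∈ C, c ≠ d → 6 * ρ < dist c d) ∧
      (∀ c ∈ C, ∀ P ∈ K, ∀ Q ∈ K, P ∈ Metric.closedBall c (3 * ρ) →
        Q ∈ Metric.closedBall c (3 * ρ) →
        |P.2.2 - Q.2.2 - m c * (P.1 - Q.1)| ≤ ε * |P.1 - Q.1|) ∧
      (∀ c ∈ C, ∀ P ∈ K, ∀ Q ∈ K, P ∈ Metric.closedBall c (3 * ρ) →
        Q ∈ Metric.closedBall c (3 * ρ) → P.1 = Q.1 → P = Q) ∧ 0 < ρ := by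
    have h1 : ∀ᶠ ρ : ℝ in 𝓝[>] 0, (∀ c ∈ C, ∀ d ∈ C, c ≠ d → 6 * ρ < dist c d) := by
      refine (eventually_all_finset C).2 fun c hc => (eventually_all_finset C).2 fun d hd => ?_
      by_cases hcd : c = d
      · exact Eventually.of_forall fun x h => absurd hcd h
      · filter_upwards [ev_mul 6 (dist_pos.2 hcd)] with x hx _ using hx
    have h2 := (eventually_all_finset C).2 fun c hc => ev_pair (h.slope c hc ε he3)
    have h3 := (eventually_all_finset C).2 fun c hc => ev_pair (h.inj c hc)
    exact (h1.and (h2.and (h3.and self_mem_nhdsWithin))).exists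
  have hcen : ∀ c : R3, c ∈ Metric.closedBall c (3 * ρ) := fun c =>
    Metric.mem_closedBall_self (by positivity)
  have d1 : ∀ᶠ δ : ℝ in 𝓝[>] 0, ∀ c ∈ C, ∀ P ∈ K, P ∈ Metric.closedBall c (3 * ρ) →
      |P.1 - c.1| < 2 * δ → P ∈ Metric.ball c ρ := by
    refine (eventually_all_finset C).2 fun c hc => ?_
    obtain ⟨η, hη, hη'⟩ := IsCompact.exists_forall_le' (f := fun P : R3 => |P.1 - c.1|)
      (s := (K ∩ Metric.closedBall c (3 * ρ)) \ Metric.ball c ρ) (a := 0)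
      ((hK.inter_right Metric.isClosed_closedBall).diff Metric.isOpen_ball)
      (by fun_prop) (by
        intro P hP
        rw [abs_pos, sub_ne_zero]
        intro h0
        have := hr3 c hc P hP.1.1 c (h.mem c hc) hP.1.2 (hcen c) h0
        rw [this] at hP
        exact hP.2 (Metric.mem_ball_self hr4))
    filter_upwards [ev_mul 2 hη] with δ hδ P hP hPc h1
    by_contra hb
    have := hη' P ⟨⟨hP, hPc⟩, hb⟩
    linarith
  have d2 : ∀ᶠ δ : ℝ in 𝓝[>] 0, ∀ c ∈ C, ∀ P ∈ K, |P.1 - c.1| < 2 * δ →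
      |P.2.2 - c.2.2| < A ε * δ → P ∈ Metric.ball c ρ ∨ P ∈ Metric.ball (st c) ρ := by
    refine (eventually_all_finset C).2 fun c hc => ?_
    obtain ⟨η, hη, hη'⟩ := IsCompact.exists_forall_le'
      (f := fun P : R3 => max |P.1 - c.1| |P.2.2 - c.2.2|)
      (s := K \ (Metric.ball c ρ ∪ Metric.ball (st c) ρ)) (a := 0)
      (hK.diff (Metric.isOpen_ball.union Metric.isOpen_ball))
      (by fun_prop) (by
        intro P hP
        by_contra h0
        have h1 := max_le_iff.1 (not_lt.1 h0)
        have hx := sub_eq_zero.1 (abs_nonpos_iff.1 h1.1)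
        have hz := sub_eq_zero.1 (abs_nonpos_iff.1 h1.2)
        apply hP.2
        by_cases hPc : P = c
        · left; rw [hPc]; exact Metric.mem_ball_self hr4
        · right
          rw [(h.cross c (h.mem c hc) P hP.1 ⟨Ne.symm hPc, hx.symm, hz.symm⟩).2]
          exact Metric.mem_ball_self hr4)
    filter_upwards [ev_mul 2 hη, ev_mul (A ε) hη] with δ hδ hδ' P hP h1 h2
    by_contra hb
    have := hη' P ⟨hP, hb⟩
    rcases le_max_iff.1 this with h3 | h3 <;> linarith
  obtain ⟨δ, a1, a2, a3, a4⟩ := (d1.and (d2.and ((ev_small hr4).and self_mem_nhdsWithin))).exists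
  refine ⟨ε, ρ, δ, he3, hr4, a4, a3.le, he1, he2, ?_, hr2, hr3, a1, a2⟩
  intro c hc d hd hcd P hPc hPd
  have := hr1 c hc d hd hcd
  have h2 := dist_triangle_left c d P
  rw [Metric.mem_closedBall] at hPc hPd
  linarith

end

end part9

section part10
open scoped Manifold ContDiff Topology
open Set Filter Module

noncomputable section

section
variable {K : Set R3} {C : Finset R3} {st : R3 → R3} {m k : R3 → ℝ} {A ε ρ δ : ℝ}

theorem conv_aux {s a e : ℝ} (h0 : 0 ≤ s) (h1 : s ≤ 1) (ha : e < a) (h2 : e < 2)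
    (h : (1 - s) * a + s * 2 ≤ e) : False := by
  rcases h1.lt_or_eq with h1 | h1
  · have := mul_pos (sub_pos.2 h1) (sub_pos.2 ha)
    have := mul_nonneg h0 (sub_pos.2 h2).le
    linarith
  · rw [h1] at h; linarith

theorem hh_zero (hδ : 0 < δ) {X : ℝ} (hX : 2 * δ ≤ |X|) : hh δ X = 0 := by
  rw [hh, bp_zero hδ hX, mul_zero]

theorem hh_le (hδ : 0 < δ) (X : ℝ) : |hh δ X| ≤ 2 * δ := by
  by_cases hX : 2 * δ ≤ |X|
  · rw [hh_zero hδ hX, abs_zero]; positivity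
  · rw [hh, abs_mul, abs_of_nonneg (bp_nonneg _ _)]
    have := mul_le_of_le_one_right (abs_nonneg X) (bp_le δ X)
    push Not at hX
    linarith

theorem term_zero (hp : Par K C st m A ε ρ δ) {P c : R3} {r : ℝ} (hr : 2 * ρ ≤ r)
    (hP : P ∉ Metric.closedBall c r) :
    k c * hh δ (P.1 - c.1) * (bp ρ (P.2.1 - c.2.1) * bp ρ (P.2.2 - c.2.2)) = 0 := by
  rw [mem_cb] at hP
  by_cases h1 : |P.1 - c.1| ≤ r
  · by_cases h2 : |P.2.1 - c.2.1| ≤ r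
    · have h3 : r < |P.2.2 - c.2.2| := by
        by_contra h; exact hP ⟨h1, h2, not_lt.1 h⟩
      rw [bp_zero (t := P.2.2 - c.2.2) hp.ρ0 (by linarith)]; ring
    · rw [bp_zero (t := P.2.1 - c.2.1) hp.ρ0 (by linarith)]; ring
  · rw [hh_zero hp.δ0 (by linarith [hp.δρ])]; ring

theorem qq_in (hp : Par K C st m A ε ρ δ) {P c : R3} (hc : c ∈ C) (hP : P ∈ K)
    (hPc : P ∈ Metric.closedBall c (3 * ρ)) : qq C k ρ δ P = k c * hh δ (P.1 - c.1) := by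
  rw [qq, Finset.sum_eq_single c]
  · by_cases h1 : 2 * δ ≤ |P.1 - c.1|
    · rw [hh_zero hp.δ0 h1]; ring
    · have h2 := mem_bb.1 (hp.near c hc P hP hPc (not_le.1 h1))
      rw [bp_one hp.ρ0 h2.2.1.le, bp_one hp.ρ0 h2.2.2.le]; ring
  · intro d hd hdc
    exact term_zero hp (by linarith [hp.ρ0]) (hp.disj c hc d hd (Ne.symm hdc) P hPc)
  · intro h; exact absurd hc h

theorem qq_out (hp : Par K C st m A ε ρ δ) {P : R3} 
    (hPc : ∀ c ∈ C, P ∉ Metric.closedBall c (2 * ρ)) : qq C k ρ δ P = 0 :=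
  Finset.sum_eq_zero fun c hc => term_zero hp le_rfl (hPc c hc)

theorem qq_loc (hp : Par K C st m A ε ρ δ) {P : R3} (_ : P ∈ K) :
    ∃ f : ℝ → ℝ, Differentiable ℝ f ∧ ∀ᶠ Q in 𝓝[K] P, qq C k ρ δ Q = f Q.1 := by
  by_cases h : ∃ c ∈ C, P ∈ Metric.closedBall c (2 * ρ)
  · obtain ⟨c, hc, hPc⟩ := h
    refine ⟨fun x => k c * hh δ (x - c.1), ?_, ?_⟩
    · have h2 : Differentiable ℝ (bp δ) := (bp_smooth δ).differentiable (by simp)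
      unfold hh
      fun_prop
    · have h3 : Metric.ball c (3 * ρ) ∈ 𝓝 P := Metric.isOpen_ball.mem_nhds
        (Metric.closedBall_subset_ball (by linarith [hp.ρ0]) hPc)
      filter_upwards [self_mem_nhdsWithin, mem_nhdsWithin_of_mem_nhds h3] with Q hQ hQ'
      exact qq_in hp hc hQ (Metric.ball_subset_closedBall hQ')
  · push Not at h
    refine ⟨fun _ => 0, differentiable_const _, ?_⟩
    have h3 : ∀ᶠ Q in 𝓝 P, ∀ c ∈ C, Q ∉ Metric.closedBall c (2 * ρ) :=
      (eventually_all_finset C).2 fun c hc =>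
        Metric.isClosed_closedBall.isOpen_compl.mem_nhds (h c hc)
    filter_upwards [mem_nhdsWithin_of_mem_nhds h3] with Q hQ
    exact qq_out hp hQ

theorem qq_c (hp : Par K C st m A ε ρ δ) {c : R3} (hc : c ∈ C) :
    ∀ᶠ Q in 𝓝[K] c, qq C k ρ δ Q = k c * (Q.1 - c.1) := by
  filter_upwards [self_mem_nhdsWithin, mem_nhdsWithin_of_mem_nhds (Metric.ball_mem_nhds c hp.δ0)]
    with Q hQ hQ'
  have h1 := (mem_bb.1 hQ').1
  rw [qq_in hp hc hQ, hh, bp_one hp.δ0 h1.le, mul_one]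
  refine Metric.closedBall_subset_closedBall ?_ (Metric.ball_subset_closedBall hQ')
  linarith [hp.δρ, hp.ρ0]

theorem qq_bd (hp : Par K C st m A ε ρ δ) {k0 : ℝ} (hk0 : 0 ≤ k0) (hk : ∀ c ∈ C, |k c| ≤ k0)
    {P : R3} (hP : P ∈ K) : |qq C k ρ δ P| ≤ k0 * (2 * δ) := by
  have hδ := hp.δ0
  by_cases h : ∃ c ∈ C, P ∈ Metric.closedBall c (2 * ρ)
  · obtain ⟨c, hc, hPc⟩ := h
    rw [qq_in hp hc hP (Metric.closedBall_subset_closedBall (by linarith [hp.ρ0]) hPc), abs_mul]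
    exact mul_le_mul (hk c hc) (hh_le hp.δ0 _) (abs_nonneg _) hk0
  · push Not at h
    rw [qq_out hp h, abs_zero]; positivity

/-- One direction of the no-new-crossings claim. -/
theorem qq_claim1 {ep : R3 → ℝ} (hcd : CD K C st m ep) {k0 m0 : ℝ}
    (hp : Par K C st m (2 * (m0 + ε) + 4 * k0 + 1) ε ρ δ)
    (hk : ∀ c ∈ C, k c = ep c - m c)
    (hk0 : 0 ≤ k0) (hk0' : ∀ c ∈ C, |k c| ≤ k0) (hm0 : ∀ c ∈ C, |m c| ≤ m0)
    {P Q : R3} (hP : P ∈ K) (hQ : Q ∈ K) {t : ℝ} (ht : t ∈ Icc (0 : ℝ) 1)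
    (hx : P.1 = Q.1) (hz : P.2.2 + t * qq C k ρ δ P = Q.2.2 + t * qq C k ρ δ Q)
    (hne : qq C k ρ δ P ≠ 0) : P.2.2 = Q.2.2 := by
  have hδ := hp.δ0
  have hρ := hp.ρ0
  obtain ⟨c, hc, hPc⟩ : ∃ c ∈ C, P ∈ Metric.closedBall c (2 * ρ) := by
    by_contra h; push Not at h; exact hne (qq_out hp h)
  have hPc3 : P ∈ Metric.closedBall c (3 * ρ) :=
    Metric.closedBall_subset_closedBall (by linarith) hPc
  have hcen : ∀ c : R3, c ∈ Metric.closedBall c (3 * ρ) := fun c =>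
    Metric.mem_closedBall_self (by positivity)
  have b13 : ∀ {c P : R3}, P ∈ Metric.ball c ρ → P ∈ Metric.closedBall c (3 * ρ) := fun h =>
    Metric.closedBall_subset_closedBall (by linarith) (Metric.ball_subset_closedBall h)
  have hqP := qq_in (k := k) hp hc hP hPc3
  have hX : |P.1 - c.1| < 2 * δ := by
    by_contra h
    rw [hh_zero hδ (not_lt.1 h), mul_zero] at hqP
    exact hne hqP
  have hs := hp.sl c hc P hP c (hcd.mem c hc) hPc3 (hcen c)
  have hstc := hcd.st_mem c hc
  have hXst := hcd.st_ne c hc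
  have hQz : |Q.2.2 - c.2.2| < (2 * (m0 + ε) + 4 * k0 + 1) * δ := by
    have e1 : Q.2.2 - c.2.2 = (P.2.2 - c.2.2 - m c * (P.1 - c.1)) + m c * (P.1 - c.1)
        + t * qq C k ρ δ P - t * qq C k ρ δ Q := by linarith
    have b1 : |m c * (P.1 - c.1)| ≤ m0 * (2 * δ) := by
      rw [abs_mul]
      exact mul_le_mul (hm0 c hc) hX.le (abs_nonneg _) ((abs_nonneg _).trans (hm0 c hc))
    have b2 : ∀ R ∈ K, |t * qq C k ρ δ R| ≤ k0 * (2 * δ) := by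
      intro R hR
      rw [abs_mul, abs_of_nonneg ht.1]
      exact (mul_le_of_le_one_left (abs_nonneg _) ht.2).trans (qq_bd hp hk0 hk0' hR)
    have b3 : ε * |P.1 - c.1| ≤ ε * (2 * δ) := mul_le_mul_of_nonneg_left hX.le hp.ε0.le
    rw [e1]
    have c1 := abs_le.1 (hs.trans b3)
    have c2 := abs_le.1 b1
    have c3 := abs_le.1 (b2 P hP)
    have c4 := abs_le.1 (b2 Q hQ)
    rw [abs_lt]
    constructor <;> nlinarith
  rcases hp.far c hc Q hQ (by rw [← hx]; exact hX) hQz with hb | hb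
  · rw [hp.inj c hc P hP Q hQ hPc3 (b13 hb) hx]
  · have hqQ := qq_in (k := k) hp hstc hQ (b13 hb)
    have hs' := hp.sl _ hstc Q hQ _ (hcd.mem _ hstc) (b13 hb) (hcen _)
    rw [← hXst.2.1, ← hx] at hqQ
    rw [← hXst.2.1, ← hXst.2.2, ← hx] at hs'
    rw [hqP, hqQ, hk c hc, hk _ hstc, hcd.ep_st c hc] at hz
    set X := P.1 - c.1 with hXdef
    have hX0 : X = 0 := by
      by_contra hX0
      have hpos := abs_pos.2 hX0
      have hs0 : 0 ≤ t * bp δ X := mul_nonneg ht.1 (bp_nonneg _ _)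
      have hs1 : t * bp δ X ≤ 1 := mul_le_one₀ ht.2 (bp_nonneg _ _) (bp_le _ _)
      set s := t * bp δ X with hsdef
      have e1 : ((1 - s) * (m c - m (st c)) + s * (2 * ep c)) * X =
          (Q.2.2 - c.2.2 - m (st c) * X) - (P.2.2 - c.2.2 - m c * X) := by
        unfold hh at hz
        rw [hsdef]
        linear_combination hz
      have e2 : |((1 - s) * (m c - m (st c)) + s * (2 * ep c))| * |X| ≤ 2 * ε * |X| := by
        rw [← abs_mul, e1]
        refine (abs_sub _ _).trans ?_
        linarith
      have e3 := le_of_mul_le_mul_right e2 hpos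
      have g1 := hp.gap c hc
      have g2 := hp.gap1
      rcases hcd.ep_m c hc with ⟨h1, h2⟩ | ⟨h1, h2⟩
      · rw [h1] at e3
        rw [abs_of_pos (sub_pos.2 h2)] at g1
        have := (abs_le.1 e3).2
        exact conv_aux hs0 hs1 g1 g2 (by linarith)
      · rw [h1] at e3
        rw [abs_of_neg (sub_neg.2 h2)] at g1
        have := (abs_le.1 e3).1
        exact conv_aux hs0 hs1 g1 g2 (by linarith)
    rw [hX0] at hs hs'
    simp only [mul_zero, sub_zero, abs_zero] at hs hs'
    have := abs_nonpos_iff.1 hs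
    have := abs_nonpos_iff.1 hs'
    linarith

theorem CD.exists_q {ep : R3 → ℝ} (hcd : CD K C st m ep) (hK : IsCompact K) :
    ∃ q : R3 → ℝ, ContDiff ℝ ∞ q ∧ (∀ P, q (tau P) = - q P) ∧
      (∀ P ∈ K, ∃ f : ℝ → ℝ, Differentiable ℝ f ∧ ∀ᶠ Q in 𝓝[K] P, q Q = f Q.1) ∧
      (∀ c ∈ C, ∀ᶠ Q in 𝓝[K] c, q Q = (ep c - m c) * (Q.1 - c.1)) ∧
      (∀ P ∈ K, ∀ Q ∈ K, ∀ t ∈ Icc (0 : ℝ) 1, P.1 = Q.1 →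
        P.2.2 + t * q P = Q.2.2 + t * q Q → P.2.2 = Q.2.2) := by
  let k : R3 → ℝ := fun c => ep c - m c
  obtain ⟨k0, hk0⟩ : ∃ k0, ∀ c ∈ C, |k c| ≤ k0 :=
    ⟨∑ c ∈ C, |k c|, fun c hc => Finset.single_le_sum (f := fun c => |k c|)
      (fun _ _ => abs_nonneg _) hc⟩
  obtain ⟨m0, hm0⟩ : ∃ m0, ∀ c ∈ C, |m c| ≤ m0 :=
    ⟨∑ c ∈ C, |m c|, fun c hc => Finset.single_le_sum (f := fun c => |m c|)
      (fun _ _ => abs_nonneg _) hc⟩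
  obtain ⟨ε, ρ, δ, hp⟩ := hcd.par hK (fun ε => 2 * (m0 + ε) + 4 * max k0 0 + 1)
  have hk1 : ∀ c ∈ C, |k c| ≤ max k0 0 := fun c hc => (hk0 c hc).trans (le_max_left _ _)
  refine ⟨qq C k ρ δ, qq_smooth _ _ _ _, qq_tau hcd.tau_mem ?_ _ _, fun P hP => qq_loc hp hP,
    fun c hc => qq_c hp hc, ?_⟩
  · intro c hc
    simp only [k, hcd.ep_tau c hc, hcd.m_tau c hc]
    ring
  · intro P hP Q hQ t ht hx hz
    by_cases h1 : qq C k ρ δ P = 0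
    · by_cases h2 : qq C k ρ δ Q = 0
      · rw [h1, h2] at hz; simpa using hz
      · exact (qq_claim1 hcd hp (fun _ _ => rfl) (le_max_right _ _) hk1 hm0 hQ hP ht hx.symm
          hz.symm h2).symm
    · exact qq_claim1 hcd hp (fun _ _ => rfl) (le_max_right _ _) hk1 hm0 hP hQ ht hx hz h1

end
end

end part10

section part11
open scoped Manifold ContDiff Topology
open Set Filter Module

noncomputable section

/-- The final position of the curves. -/
structure Fine {n : ℕ} (γ : Fin n → ℝ → R3) (K : Set R3) : Prop where
  r1 : ∀ i θ, (deriv (γ i) θ).1 = 0 → (deriv (γ i) θ).2.2 ≠ 0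
  r2 : ∀ i θ j φ, γ i θ ≠ γ j φ → (γ i θ).1 = (γ j φ).1 → (γ i θ).2.2 = (γ j φ).2.2 →
    (deriv (γ i) θ).1 ≠ 0 ∧ ∃ e : ℝ, e * e = 1 ∧
    (deriv (γ i) θ).2.2 = e * (deriv (γ i) θ).1 ∧ (deriv (γ j) φ).2.2 = -e * (deriv (γ j) φ).1
  r3 : ∀ P ∈ K, ∀ Q ∈ K, ∀ R ∈ K, P.1 = Q.1 → P.2.2 = Q.2.2 → P.1 = R.1 → P.2.2 = R.2.2 →
    P = Q ∨ P = R ∨ Q = R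
  r4 : ∀ i θ, (deriv (γ i) θ).1 = 0 → deriv (fun t => (deriv (γ i) t).1) θ ≠ 0

theorem second_step {n : ℕ} {L : Fin n → S1 → R3} (hL : IsStronglyInvertibleLink L)
    (hg : Good (gam L) (KK L)) :
    ∃ V : R3 → R3, ContDiff ℝ ∞ V ∧
      (∀ t ∈ Icc (0 : ℝ) 1, IsStronglyInvertibleLink (fun i s => L i s + t • V (L i s))) ∧
      Fine (gam fun i s => L i s + V (L i s)) (KK fun i s => L i s + V (L i s)) := by
  obtain ⟨C, st, m, ep, hcd⟩ := hg.cd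
  obtain ⟨q, hq, hqt, hloc, hqc, hclaim⟩ := hcd.exists_q hg.cpt
  have hV : ContDiff ℝ ∞ (VV (fun _ => 0) q) := VV_smooth contDiff_const hq
  have hqd : ∀ i θ, HasDerivAt (fun t => q (gam L i t)) (deriv (fun t => q (gam L i t)) θ) θ := by
    intro i θ
    have : ContDiff ℝ ∞ (fun t => q (gam L i t)) := hq.comp (hg.smooth i)
    exact (this.differentiable (by simp) θ).hasDerivAt
  have hder : ∀ (t : ℝ) i θ, HasDerivAt (fun s => gam L i s + t • VV (fun _ => 0) q (gam L i s))
      (deriv (gam L i) θ + t • ((0 : ℝ), (0 : ℝ), deriv (fun t => q (gam L i t)) θ)) θ := by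
    intro t i θ
    have hgd := ((hg.smooth i).differentiable (by simp) θ).hasDerivAt
    have hVd : HasDerivAt (fun s => VV (fun _ => 0) q (gam L i s))
        ((0 : ℝ), (0 : ℝ), deriv (fun t => q (gam L i t)) θ) θ :=
      (hasDerivAt_const θ (0 : ℝ)).prodMk ((hasDerivAt_const θ (0 : ℝ)).prodMk (hqd i θ))
    exact hgd.add (hVd.const_smul t)
  have hq0 : ∀ i θ, (deriv (gam L i) θ).1 = 0 → deriv (fun t => q (gam L i t)) θ = 0 := by
    intro i θ h0
    obtain ⟨f, hf, hfe⟩ := hloc _ (hg.mem i θ)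
    rw [hg.nb, eventually_map] at hfe
    have h1 : HasDerivAt (fun t => f (gam L i t).1) (deriv f (gam L i θ).1 * (deriv (gam L i) θ).1) θ :=
      (hf _).hasDerivAt.comp θ (hg.hasX i θ).hasDerivAt
    rw [EventuallyEq.deriv_eq hfe, h1.deriv, h0, mul_zero]
  have hqC : ∀ i θ, gam L i θ ∈ C → (deriv (gam L i) θ).2.2 + deriv (fun t => q (gam L i t)) θ =
      ep (gam L i θ) * (deriv (gam L i) θ).1 := by
    intro i θ hc
    have hfe := hqc _ hc
    rw [hg.nb, eventually_map] at hfe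
    have h1 := ((hg.hasX i θ).hasDerivAt.sub_const (gam L i θ).1).const_mul
      (ep (gam L i θ) - m (gam L i θ))
    rw [EventuallyEq.deriv_eq hfe, h1.deriv, hg.slope_eq i θ (hcd.slope _ hc)]
    ring
  have hd1 : ∀ i θ, deriv (gam (fun i s => L i s + VV (fun _ => 0) q (L i s)) i) θ =
      deriv (gam L i) θ + ((0 : ℝ), (0 : ℝ), deriv (fun t => q (gam L i t)) θ) := by
    intro i θ
    have := (hder 1 i θ).deriv
    simp only [one_smul] at this
    exact this
  have hd1x : ∀ i θ, (deriv (gam (fun i s => L i s + VV (fun _ => 0) q (L i s)) i) θ).1 =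
      (deriv (gam L i) θ).1 := by
    intro i θ; rw [hd1]; simp
  have hd1z : ∀ i θ, (deriv (gam (fun i s => L i s + VV (fun _ => 0) q (L i s)) i) θ).2.2 =
      (deriv (gam L i) θ).2.2 + deriv (fun t => q (gam L i t)) θ := by
    intro i θ; rw [hd1]; simp
  have hcl : ∀ P ∈ KK L, ∀ Q ∈ KK L, (P + VV (fun _ => 0) q P).1 = (Q + VV (fun _ => 0) q Q).1 →
      (P + VV (fun _ => 0) q P).2.2 = (Q + VV (fun _ => 0) q Q).2.2 → P.1 = Q.1 ∧ P.2.2 = Q.2.2 := by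
    intro P hP Q hQ hx hz
    have hx' : P.1 = Q.1 := by simpa [VV] using hx
    have hz' : P.2.2 + q P = Q.2.2 + q Q := by simpa [VV] using hz
    exact ⟨hx', hclaim P hP Q hQ 1 ⟨zero_le_one, le_rfl⟩ hx' (by rw [one_mul, one_mul]; exact hz')⟩
  refine ⟨VV (fun _ => 0) q, hV, ?_, ?_, ?_, ?_, ?_⟩
  · intro t ht
    refine isSI_comp (Ψ := fun P => P + t • VV (fun _ => 0) q P) hL ?_ ?_ ?_ ?_
    · exact contDiff_id.add (contDiff_const_smul t |>.comp hV)
    · intro P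
      rw [tau_add_smul, VV_tau (fun _ => rfl) hqt]
    · intro P hP Q hQ hPQ
      have hPQ' : P + t • VV (fun _ => 0) q P = Q + t • VV (fun _ => 0) q Q := hPQ
      have h1 : P.1 = Q.1 := by simpa [VV] using congrArg (fun R : R3 => R.1) hPQ'
      have h2 : P.2.1 = Q.2.1 := by simpa [VV] using congrArg (fun R : R3 => R.2.1) hPQ'
      have h3 : P.2.2 + t * q P = Q.2.2 + t * q Q := by
        simpa [VV] using congrArg (fun R : R3 => R.2.2) hPQ'
      exact Prod.ext h1 (Prod.ext h2 (hclaim P hP Q hQ t ht h1 h3))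
    · intro i θ h0
      rw [(hder t i θ).deriv] at h0
      have h1 : (deriv (gam L i) θ).1 = 0 := by simpa using congrArg (fun R : R3 => R.1) h0
      rw [hq0 i θ h1] at h0
      apply hg.d0 i θ
      have h2 : t • ((0 : ℝ), (0 : ℝ), (0 : ℝ)) = 0 := smul_zero t
      rw [h2, add_zero] at h0
      exact h0
  · intro i θ h0
    rw [hd1x] at h0
    rw [hd1z, hq0 i θ h0, add_zero]
    exact hg.g1 i θ h0
  · intro i θ j φ hne hx hz
    obtain ⟨hx', hz'⟩ := hcl _ (hg.mem i θ) _ (hg.mem j φ) hx hz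
    have hne' : gam L i θ ≠ gam L j φ := by
      intro h
      apply hne
      change gam L i θ + VV (fun _ => 0) q (gam L i θ) = gam L j φ + VV (fun _ => 0) q (gam L j φ)
      rw [h]
    obtain ⟨hc, hs⟩ := hcd.cross _ (hg.mem i θ) _ (hg.mem j φ) ⟨hne', hx', hz'⟩
    have hc' : gam L j φ ∈ C := by rw [hs]; exact hcd.st_mem _ hc
    rw [hd1x, hd1x, hd1z, hd1z, hqC i θ hc, hqC j φ hc']
    refine ⟨(hg.g2 i θ j φ hne' hx' hz').1, ep (gam L i θ), ?_, rfl, ?_⟩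
    · rcases hcd.ep_m _ hc with h | h <;> rw [h.1] <;> norm_num
    · rw [hs, hcd.ep_st _ hc]
  · have hsur : ∀ P ∈ KK (fun i s => L i s + VV (fun _ => 0) q (L i s)),
        ∃ P0 ∈ KK L, P = P0 + VV (fun _ => 0) q P0 := by
      intro P hP
      obtain ⟨i, s, rfl⟩ := mem_iUnion.1 hP
      exact ⟨L i s, mem_iUnion.2 ⟨i, s, rfl⟩, rfl⟩
    intro P hP Q hQ R hR h1 h2 h3 h4
    obtain ⟨P, hP0, rfl⟩ := hsur P hP
    obtain ⟨Q, hQ0, rfl⟩ := hsur Q hQ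
    obtain ⟨R, hR0, rfl⟩ := hsur R hR
    obtain ⟨a1, a2⟩ := hcl _ hP0 _ hQ0 h1 h2
    obtain ⟨b1, b2⟩ := hcl _ hP0 _ hR0 h3 h4
    rcases hg.g3 P hP0 Q hQ0 R hR0 a1 a2 b1 b2 with h | h | h
    · left; rw [h]
    · right; left; rw [h]
    · right; right; rw [h]
  · intro i θ h0
    rw [hd1x] at h0
    have : (fun t => (deriv (gam (fun i s => L i s + VV (fun _ => 0) q (L i s)) i) t).1) =
      fun t => (deriv (gam L i) t).1 := by funext t; exact hd1x i t
    rw [this]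
    exact hg.g4 i θ h0

end

end part11

section part12
open scoped Manifold ContDiff Topology
open Set Filter Module

noncomputable section

theorem fin_zero {g : ℝ → ℝ} (hg : Differentiable ℝ g) (h : ∀ θ, g θ = 0 → deriv g θ ≠ 0) (a b : ℝ) :
    {θ ∈ Icc a b | g θ = 0}.Finite := by
  by_contra hinf
  obtain ⟨x, hx, hacc⟩ := Set.Infinite.exists_accPt_of_subset_isCompact hinf
    isCompact_Icc (fun p hp => hp.1)
  rw [accPt_iff_frequently] at hacc
  have hcl : IsClosed {θ | g θ = 0} := isClosed_eq hg.continuous continuous_const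
  have h0 : g x = 0 :=
    hcl.mem_of_frequently_of_tendsto (hacc.mono fun p hp => hp.2.2) tendsto_id
  have h1 := (hg x).hasDerivAt.eventually_ne (c := 0) (h x h0)
  rw [eventually_nhdsWithin_iff] at h1
  obtain ⟨p, hp, hp'⟩ := (hacc.and_eventually h1).exists
  exact hp' hp.1 hp.2.2

theorem ee_surj' (s : S1) : ∃ θ ∈ Icc (0 : ℝ) (2 * Real.pi), ee θ = s := by
  obtain ⟨θ, rfl⟩ := ee_surj s
  have hpi := Real.two_pi_pos
  refine ⟨θ - ⌊θ / (2 * Real.pi)⌋ * (2 * Real.pi), ⟨?_, ?_⟩, ?_⟩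
  · have := (le_div_iff₀ hpi).1 (Int.floor_le (θ / (2 * Real.pi)))
    linarith
  · have := (div_lt_iff₀ hpi).1 (Int.lt_floor_add_one (θ / (2 * Real.pi)))
    linarith
  · have := ee_per θ (-⌊θ / (2 * Real.pi)⌋)
    rw [← this]
    congr 1
    push_cast
    ring

theorem crit_finite {n : ℕ} {L : Fin n → S1 → R3} (hL : IsStronglyInvertibleLink L)
    (hf : Fine (gam L) (KK L)) :
    {z : Fin n × S1 | mfderiv (𝓡 1) 𝓘(ℝ, ℝ) (fun u => (L z.1 u).1) z.2 = 0}.Finite := by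
  have hC := cur_of hL
  have h1 : ∀ i, {θ ∈ Icc (0 : ℝ) (2 * Real.pi) | (deriv (gam L i) θ).1 = 0}.Finite := by
    intro i
    refine fin_zero ?_ (hf.r4 i) _ _
    have : ContDiff ℝ ∞ (deriv (gam L i)) := by
      have := (contDiff_infty_iff_deriv.1 (hC.smooth i)).2
      exact this
    exact (contDiff_fst.comp this).differentiable (by simp)
  have h2 : (⋃ i : Fin n, (fun θ => (i, ee θ)) ''
      {θ ∈ Icc (0 : ℝ) (2 * Real.pi) | (deriv (gam L i) θ).1 = 0}).Finite :=
    finite_iUnion fun i => (h1 i).image _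
  refine h2.subset ?_
  rintro ⟨i, s⟩ hz
  obtain ⟨θ, hθ, rfl⟩ := ee_surj' s
  refine mem_iUnion.2 ⟨i, θ, ⟨hθ, ?_⟩, rfl⟩
  have hz' : mfderiv (𝓡 1) 𝓘(ℝ, ℝ) (fun u => (L i u).1) (ee θ) = 0 := hz
  have hd : ContMDiff (𝓡 1) 𝓘(ℝ, ℝ) (⊤ : ℕ∞) (fun u => (L i u).1) :=
    (contDiff_fst.contMDiff).comp (hL.1.1 i)
  have hne : (EuclideanSpace.single 0 1 : EuclideanSpace ℝ (Fin 1)) ≠ 0 := by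
    intro h
    have := congrArg (fun v : EuclideanSpace ℝ (Fin 1) => v 0) h
    simp at this
  have h3 := mfd (hd.mdifferentiableAt (by simp)) (EuclideanSpace.single 0 1) (θ := θ)
  rw [hz', (show deriv (fun t => (L i (ee t)).1) θ = (deriv (gam L i) θ).1 from
    (hC.hasX i θ).hasDerivAt.deriv)] at h3
  rcases smul_eq_zero.1 h3.symm with h4 | h4
  · exact absurd h4 (cc_ne hne)
  · exact h4

section
variable {n : ℕ} {L : Fin n → S1 → R3}

theorem proj_mfd (hL : IsStronglyInvertibleLink L) (i : Fin n) (θ : ℝ)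
    (v : EuclideanSpace ℝ (Fin 1)) :
    mfderiv (𝓡 1) 𝓘(ℝ, ℝ × ℝ) (fun s => piProj (L i s)) (ee θ) v =
      cc θ v • ((deriv (gam L i) θ).1, (deriv (gam L i) θ).2.2) := by
  have hC := cur_of hL
  have hd : ContMDiff (𝓡 1) 𝓘(ℝ, ℝ × ℝ) (⊤ : ℕ∞) (fun s => piProj (L i s)) := by
    have : ContDiff ℝ ∞ piProj := by unfold piProj; fun_prop
    exact this.contMDiff.comp (hL.1.1 i)
  rw [mfd (hd.mdifferentiableAt (by simp)) v]
  congr 1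
  exact ((hC.hasX i θ).hasDerivAt.prodMk (hC.hasZ i θ).hasDerivAt).deriv

theorem diagram (hL : IsStronglyInvertibleLink L) (hf : Fine (gam L) (KK L)) :
      (let D : Fin n → S1 → ℝ × ℝ := fun i s => piProj (L i s)
       (∀ i s, Function.Injective (mfderiv (𝓡 1) 𝓘(ℝ, ℝ × ℝ) (D i) s)) ∧
       (∀ q : ℝ × ℝ, {z : Fin n × S1 | D z.1 z.2 = q}.encard ≤ 2) ∧
       (∀ i s j u, (i, s) ≠ (j, u) → D i s = D j u →
         ∀ v w : EuclideanSpace ℝ (Fin 1),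
           (mfderiv (𝓡 1) 𝓘(ℝ, ℝ × ℝ) (D i) s v).1 *
               (mfderiv (𝓡 1) 𝓘(ℝ, ℝ × ℝ) (D j) u w).1 +
             (mfderiv (𝓡 1) 𝓘(ℝ, ℝ × ℝ) (D i) s v).2 *
               (mfderiv (𝓡 1) 𝓘(ℝ, ℝ × ℝ) (D j) u w).2 = 0) ∧
       (∀ i s, (D i s).2 = 0 →
         ∀ v : EuclideanSpace ℝ (Fin 1), v ≠ 0 →
           (mfderiv (𝓡 1) 𝓘(ℝ, ℝ × ℝ) (D i) s v).2 ≠ 0) ∧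
       (∀ i s, (D i s).2 = 0 →
         (∀ j u, D j u = D i s → (j, u) = (i, s)) →
         ∀ v : EuclideanSpace ℝ (Fin 1),
           (mfderiv (𝓡 1) 𝓘(ℝ, ℝ × ℝ) (D i) s v).1 = 0) ∧
       {z : Fin n × S1 |
         mfderiv (𝓡 1) 𝓘(ℝ, ℝ) (fun u => (L z.1 u).1) z.2 = 0}.Finite ∧
       reflXZ '' (⋃ i, Set.range (D i)) = ⋃ i, Set.range (D i)) := by
  have hC := cur_of hL
  have hmem : ∀ i s, L i s ∈ KK L := fun i s => mem_iUnion.2 ⟨i, s, rfl⟩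
  have hpi : ∀ {P Q : R3}, piProj P = piProj Q → P.1 = Q.1 ∧ P.2.2 = Q.2.2 := fun h =>
    Prod.ext_iff.1 h
  have hsur : ∀ P ∈ KK L, ∃ i s, L i s = P := by
    intro P hP
    obtain ⟨i, s, rfl⟩ := mem_iUnion.1 hP
    exact ⟨i, s, rfl⟩
  -- points on the axis of reflection
  have haxis : ∀ i θ, (gam L i θ).2.2 = 0 → (gam L i θ).2.1 = 0 → gam L i θ ∈ xAxisSet :=
    fun i θ h1 h2 => ⟨h2, h1⟩
  refine ⟨?_, ?_, ?_, ?_, ?_, crit_finite hL hf, ?_⟩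
  · intro i s
    obtain ⟨θ, rfl⟩ := ee_surj s
    have hd : ContMDiff (𝓡 1) 𝓘(ℝ, ℝ × ℝ) (⊤ : ℕ∞) (fun s => piProj (L i s)) := by
      have : ContDiff ℝ ∞ piProj := by unfold piProj; fun_prop
      exact this.contMDiff.comp (hL.1.1 i)
    refine (mfd_inj (hd.mdifferentiableAt (by simp))).2 ?_
    have h1 : deriv (fun t => piProj (L i (ee t))) θ =
        ((deriv (gam L i) θ).1, (deriv (gam L i) θ).2.2) :=
      ((hC.hasX i θ).hasDerivAt.prodMk (hC.hasZ i θ).hasDerivAt).deriv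
    rw [h1]
    intro h2
    obtain ⟨h3, h4⟩ := Prod.ext_iff.1 h2
    exact hf.r1 i θ h3 h4
  · intro q
    by_contra hlt
    push Not at hlt
    have hlt' := Order.add_one_le_of_lt hlt
    rw [show (2 : ℕ∞) + 1 = 3 by norm_num] at hlt'
    obtain ⟨T, hT, hT3⟩ := Set.exists_subset_encard_eq hlt'
    obtain ⟨a, b, c, hab, hac, hbc, rfl⟩ := Set.encard_eq_three.1 hT3
    have ha : piProj (L a.1 a.2) = q := hT (by simp)
    have hb : piProj (L b.1 b.2) = q := hT (by simp)
    have hc : piProj (L c.1 c.2) = q := hT (by simp)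
    have h1 := hpi (ha.trans hb.symm)
    have h2 := hpi (ha.trans hc.symm)
    have hinj := hL.1.2.1
    rcases hf.r3 _ (hmem a.1 a.2) _ (hmem b.1 b.2) _ (hmem c.1 c.2) h1.1 h1.2 h2.1 h2.2 with h | h | h
    · exact hab (hinj h)
    · exact hac (hinj h)
    · exact hbc (hinj h)
  · intro i s j u hne hD v w
    obtain ⟨θ, rfl⟩ := ee_surj s
    obtain ⟨φ, rfl⟩ := ee_surj u
    have h1 := hpi hD
    have hne' : gam L i θ ≠ gam L j φ := fun h => hne (@hL.1.2.1 (i, ee θ) (j, ee φ) h)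
    obtain ⟨-, e, he, h2, h3⟩ := hf.r2 i θ j φ hne' h1.1 h1.2
    rw [proj_mfd hL i θ v, proj_mfd hL j φ w, h2, h3]
    simp only [Prod.smul_mk, smul_eq_mul]
    linear_combination (-cc θ v * (deriv (gam L i) θ).1 * cc φ w * (deriv (gam L j) φ).1) * he
  · intro i s hz v hv
    obtain ⟨θ, rfl⟩ := ee_surj s
    rw [proj_mfd hL i θ v]
    change cc θ v * (deriv (gam L i) θ).2.2 ≠ 0
    refine mul_ne_zero (cc_ne hv) ?_
    have hz' : (gam L i θ).2.2 = 0 := hz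
    by_cases hy : (gam L i θ).2.1 = 0
    · exact hf.r1 i θ (hC.hx i θ ⟨hy, hz'⟩)
    · obtain ⟨j, φ, hj⟩ := hC.surj _ (hC.tauK _ (hC.mem i θ))
      have a1 : (tau (gam L i θ)).1 = (gam L i θ).1 := rfl
      have a2 : (tau (gam L i θ)).2.1 = -(gam L i θ).2.1 := rfl
      have a3 : (tau (gam L i θ)).2.2 = -(gam L i θ).2.2 := rfl
      obtain ⟨h1, e, he, h2, -⟩ := hf.r2 i θ j φ (by
          rw [hj]
          intro h
          have := congrArg (fun P : R3 => P.2.1) h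
          simp only [a2] at this
          exact hy (by linarith)) (by rw [hj]; exact a1.symm) (by rw [hj, a3, hz', neg_zero])
      rw [h2]
      refine mul_ne_zero ?_ h1
      rintro rfl
      norm_num at he
  · intro i s hz huniq v
    obtain ⟨θ, rfl⟩ := ee_surj s
    rw [proj_mfd hL i θ v]
    change cc θ v * (deriv (gam L i) θ).1 = 0
    have hz' : (gam L i θ).2.2 = 0 := hz
    have a1 : (tau (gam L i θ)).1 = (gam L i θ).1 := rfl
    have a2 : (tau (gam L i θ)).2.1 = -(gam L i θ).2.1 := rfl
    have a3 : (tau (gam L i θ)).2.2 = -(gam L i θ).2.2 := rfl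
    obtain ⟨j, u, hj⟩ := hsur _ (hC.tauK _ (hC.mem i θ))
    have h1 := huniq j u (Prod.ext (by change (L j u).1 = (gam L i θ).1; rw [hj, a1]) (by
      change (L j u).2.2 = (gam L i θ).2.2; rw [hj, a3, hz', neg_zero]))
    have hj' : L j u = gam L i θ := by
      exact congrArg (fun z : Fin n × S1 => L z.1 z.2) h1
    rw [hj'] at hj
    have hy : (gam L i θ).2.1 = 0 := by
      have := congrArg (fun P : R3 => P.2.1) hj
      simp only [a2] at this
      linarith
    rw [hC.hx i θ ⟨hy, hz'⟩, mul_zero]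
  · have hr : ∀ P, reflXZ (piProj P) = piProj (tau P) := fun P => rfl
    apply Subset.antisymm
    · rintro _ ⟨p, hp, rfl⟩
      obtain ⟨i, s, rfl⟩ := mem_iUnion.1 hp
      obtain ⟨j, u, hj⟩ := hsur _ (hC.tauK _ (hmem i s))
      refine mem_iUnion.2 ⟨j, u, ?_⟩
      change piProj (L j u) = reflXZ (piProj (L i s))
      rw [hj, hr]
    · intro p hp
      obtain ⟨i, s, rfl⟩ := mem_iUnion.1 hp
      obtain ⟨j, u, hj⟩ := hsur _ (hC.tauK _ (hmem i s))
      refine ⟨piProj (L j u), mem_iUnion.2 ⟨j, u, rfl⟩, ?_⟩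
      rw [hr, hj, tau_tau]

theorem isotopy (hL : IsStronglyInvertibleLink L) {V W : R3 → R3} (hV : ContDiff ℝ ∞ V)
    (hW : ContDiff ℝ ∞ W)
    (h1 : ∀ t ∈ Icc (0 : ℝ) 1, IsStronglyInvertibleLink (fun i s => L i s + t • V (L i s)))
    (h2 : ∀ t ∈ Icc (0 : ℝ) 1, IsStronglyInvertibleLink
      (fun i s => (L i s + V (L i s)) + t • W (L i s + V (L i s)))) :
    ∃ H : Fin n → ℝ × S1 → R3,
        (∀ i, ContMDiff ((𝓘(ℝ, ℝ)).prod (𝓡 1)) 𝓘(ℝ, R3) (⊤ : ℕ∞) (H i)) ∧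
        (∀ i s, H i (0, s) = L i s) ∧
        (∀ i s, H i (1, s) = (L i s + V (L i s)) + W (L i s + V (L i s))) ∧
        (∀ t ∈ Set.Icc (0 : ℝ) 1, IsStronglyInvertibleLink fun i s => H i (t, s)) := by
  let α : ℝ → ℝ := fun t => Real.smoothTransition (2 * t)
  let β : ℝ → ℝ := fun t => Real.smoothTransition (2 * t - 1)
  have hα : ContDiff ℝ ∞ α := Real.smoothTransition.contDiff.comp (by fun_prop)
  have hβ : ContDiff ℝ ∞ β := Real.smoothTransition.contDiff.comp (by fun_prop)
  let G : ℝ × R3 → R3 := fun p => p.2 + α p.1 • V p.2 + β p.1 • W (p.2 + V p.2)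
  have hG : ContDiff ℝ ∞ G := by fun_prop
  have hα1 : ∀ t, 1 / 2 ≤ t → α t = 1 := fun t ht =>
    Real.smoothTransition.one_of_one_le (by linarith)
  have hβ0 : ∀ t, t ≤ 1 / 2 → β t = 0 := fun t ht =>
    Real.smoothTransition.zero_of_nonpos (by linarith)
  have hα0 : α 0 = 0 := Real.smoothTransition.zero_of_nonpos (by norm_num)
  have hβ1 : β 1 = 1 := Real.smoothTransition.one_of_one_le (by norm_num)
  refine ⟨fun i p => G (p.1, L i p.2), ?_, ?_, ?_, ?_⟩
  · intro i
    refine hG.contMDiff.comp (ContMDiff.prodMk_space contMDiff_fst ?_)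
    exact (hL.1.1 i).comp contMDiff_snd
  · intro i s
    simp only [G, hα0, hβ0 0 (by norm_num), zero_smul, add_zero]
  · intro i s
    simp only [G, hα1 1 (by norm_num), hβ1, one_smul]
  · intro t ht
    rcases le_total t (1 / 2) with h | h
    · simp only [G, hβ0 t h, zero_smul, add_zero]
      exact h1 _ ⟨Real.smoothTransition.nonneg _, Real.smoothTransition.le_one _⟩
    · simp only [G, hα1 t h, one_smul]
      exact h2 _ ⟨Real.smoothTransition.nonneg _, Real.smoothTransition.le_one _⟩

end
end

end part12

/-- Every strongly invertible link is equivalent, through a smooth family of strongly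
invertible links, to a strongly invertible link `L'` whose projection `D = π ∘ L'` to the
xz-plane is a transvergent diagram: (i) `D` is an immersion with at most double points,
whose double points are transverse with perpendicular tangent lines; (ii) `D` meets the
x-axis transversally, and at non-double points on the x-axis its tangent line is vertical;
(iii) the x-coordinate of `L'` has only finitely many critical parameters; (iv) the image
of `D` is invariant under the reflection (x,z) ↦ (x,−z). -/
theorem exists_transvergent_diagram {n : ℕ}
    (L : Fin n → S1 → R3) (hL : IsStronglyInvertibleLink L) :
    ∃ L' : Fin n → S1 → R3,
      IsStronglyInvertibleLink L' ∧
      -- L is equivalent to L' through a smooth family of strongly invertible links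
      (∃ H : Fin n → ℝ × S1 → R3,
        (∀ i, ContMDiff ((𝓘(ℝ, ℝ)).prod (𝓡 1)) 𝓘(ℝ, R3) (⊤ : ℕ∞) (H i)) ∧
        (∀ i s, H i (0, s) = L i s) ∧
        (∀ i s, H i (1, s) = L' i s) ∧
        (∀ t ∈ Set.Icc (0 : ℝ) 1, IsStronglyInvertibleLink fun i s => H i (t, s))) ∧
      -- properties of the diagram D = π ∘ L'
      (let D : Fin n → S1 → ℝ × ℝ := fun i s => piProj (L' i s)
       -- (i) D is an immersion ...
       (∀ i s, Function.Injective (mfderiv (𝓡 1) 𝓘(ℝ, ℝ × ℝ) (D i) s)) ∧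
       -- ... every point of the plane has at most two D-preimages ...
       (∀ q : ℝ × ℝ, {z : Fin n × S1 | D z.1 z.2 = q}.encard ≤ 2) ∧
       -- ... and at every double point the two tangent lines are perpendicular
       (∀ i s j u, (i, s) ≠ (j, u) → D i s = D j u →
         ∀ v w : EuclideanSpace ℝ (Fin 1),
           (mfderiv (𝓡 1) 𝓘(ℝ, ℝ × ℝ) (D i) s v).1 *
               (mfderiv (𝓡 1) 𝓘(ℝ, ℝ × ℝ) (D j) u w).1 +
             (mfderiv (𝓡 1) 𝓘(ℝ, ℝ × ℝ) (D i) s v).2 *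
               (mfderiv (𝓡 1) 𝓘(ℝ, ℝ × ℝ) (D j) u w).2 = 0) ∧
       -- (ii) at every point of D on the x-axis {z = 0} the tangent line of D is not
       -- parallel to the x-axis (D meets the x-axis transversally) ...
       (∀ i s, (D i s).2 = 0 →
         ∀ v : EuclideanSpace ℝ (Fin 1), v ≠ 0 →
           (mfderiv (𝓡 1) 𝓘(ℝ, ℝ × ℝ) (D i) s v).2 ≠ 0) ∧
       -- ... and at every such point which is not a double point the tangent line is vertical
       (∀ i s, (D i s).2 = 0 →
         (∀ j u, D j u = D i s → (j, u) = (i, s)) →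
         ∀ v : EuclideanSpace ℝ (Fin 1),
           (mfderiv (𝓡 1) 𝓘(ℝ, ℝ × ℝ) (D i) s v).1 = 0) ∧
       -- (iii) the set of parameters where the derivative of the x-coordinate of L' vanishes
       -- is finite
       {z : Fin n × S1 |
         mfderiv (𝓡 1) 𝓘(ℝ, ℝ) (fun u => (L' z.1 u).1) z.2 = 0}.Finite ∧
       -- (iv) the image of D is invariant under the reflection (x,z) ↦ (x,−z)
       reflXZ '' (⋃ i, Set.range (D i)) = ⋃ i, Set.range (D i)) := by
  obtain ⟨V, hV, h1, hg⟩ := first_step hL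
  have hL1 := h1 1 ⟨zero_le_one, le_rfl⟩
  simp only [one_smul] at hL1
  obtain ⟨W, hW, h2, hf⟩ := second_step hL1 hg
  have hL2 := h2 1 ⟨zero_le_one, le_rfl⟩
  simp only [one_smul] at hL2
  exact ⟨_, hL2, isotopy hL hV hW h1 h2, diagram hL2 hf⟩
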